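/- Let C1 and C2 be two longest cycles in a finite simple graph G with k := |V(C1) ∩ V(C2)| > 0, let A := V(C1) \ V(C2) and B := V(C2) \ V(C1), and let S be a minimum A–B separator in G. Then there exists a finite simple graph F on at most 2k vertices that contains no subgraph isomorphic to Q3+ and no subgraph isomorphic to K_{3,3} and that has at least |S| edges (equivalently, |S| ≤ ex(2k, {Q3+, K_{3,3}})). -/

import Mathlib

open SimpleGraph

/-- `c` is a longest cycle in `G`: it is a cycle and its length is at least
the length of every cycle in `G`. -/
def IsLongestCycle {V : Type*} (G : SimpleGraph V) {v : V} (c : G.Walk v v) : Prop :=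
  c.IsCycle ∧ ∀ (u : V) (c' : G.Walk u u), c'.IsCycle → c'.length ≤ c.length

/-- `F` contains a subgraph isomorphic to `H`. -/
def ContainsCopy {α β : Type*} (H : SimpleGraph α) (F : SimpleGraph β) : Prop :=
  ∃ f : α → β, Function.Injective f ∧ ∀ a b : α, H.Adj a b → F.Adj (f a) (f b)

/-- The complete bipartite graph `K_{3,3}`. -/
def K33 : SimpleGraph (Fin 3 ⊕ Fin 3) := completeBipartiteGraph (Fin 3) (Fin 3)

/-- `Q₃⁺`: the graph obtained from `K_{4,4}` by deleting a matching of size 3. -/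
def Q3plus : SimpleGraph (Fin 4 ⊕ Fin 4) :=
  (completeBipartiteGraph (Fin 4) (Fin 4)).deleteEdges
    {e | ∃ i : Fin 4, i.val < 3 ∧ e = s(Sum.inl i, Sum.inr i)}

/-- `S` is an `A`–`B` separator in `G`: every path with one endpoint in `A` and the
other in `B` contains a vertex of `S`. -/
def IsSeparator {V : Type*} (G : SimpleGraph V) (A B S : Finset V) : Prop :=
  ∀ (a b : V), a ∈ A → b ∈ B → ∀ p : G.Walk a b, p.IsPath → ∃ s ∈ S, s ∈ p.support

/-- `S` is a minimum `A`–`B` separator in `G`. -/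
def IsMinSeparator {V : Type*} (G : SimpleGraph V) (A B S : Finset V) : Prop :=
  IsSeparator G A B S ∧ ∀ S' : Finset V, IsSeparator G A B S' → S.card ≤ S'.card

namespace SepT
noncomputable section
def forceN {α : Type} (n : Nat) (k : Nat → α) : α :=
  match Nat.add n 1 with
  | 0 => k 0
  | m + 1 => k m

def forceP {α : Type} (l : List (Nat × Nat)) : (List (Nat × Nat) → α) → α :=
  @List.rec (Nat × Nat) (fun _ => (List (Nat × Nat) → α) → α) (fun k => k [])
    (fun q _ r k => forceN q.1 fun a => forceN q.2 fun b => r fun l => k ((a, b) :: l)) l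

def forceL {α : Type} (l : List Nat) : (List Nat → α) → α :=
  @List.rec Nat (fun _ => (List Nat → α) → α) (fun k => k [])
    (fun a _ r k => forceN a fun a => r fun l => k (a :: l)) l
def pairsOf {α : Type} : List α → List (α × α)
  | a :: b :: t => (a, b) :: pairsOf t
  | _ => []

def pt (g : List (Nat × Nat)) (e : Nat) : Nat :=
  @List.rec (Nat × Nat) (fun _ => Nat) e
    (fun q _ r => bif Nat.beq e q.1 then q.2 else bif Nat.beq e q.2 then q.1 else r) g

def memB (e : Nat) (l : List Nat) : Bool :=
  @List.rec Nat (fun _ => Bool) false (fun a _ r => bif Nat.beq e a then true else r) l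

def nodupB (l : List Nat) : Bool :=
  @List.rec Nat (fun _ => Bool) true (fun a t r => bif memB a t then false else r) l

def prB (g : List (Nat × Nat)) (l : List (Nat × Nat)) : Bool :=
  @List.rec (Nat × Nat) (fun _ => Bool) true
    (fun q _ r => bif Nat.beq (pt g q.1) q.2 then (bif Nat.beq (pt g q.2) q.1 then r else false)
      else false) l

/-- alternating trace: from `e`, apply `al`, then `ga`. -/
def trL (al ga : List (Nat × Nat)) : Nat → Nat → List Nat
  | 0, e => [e]
  | m + 1, e => forceN (pt al e) fun e1 => e :: e1 :: forceN (pt ga e1) fun e2 => trL al ga m e2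

def lastB (h : Nat) : List Nat → Bool
  | [] => false
  | a :: t => match t with
    | [] => Nat.beq a h
    | _ => lastB h t

def trB (l : List Nat) (g : List (Nat × Nat)) : Bool :=
  match l with
  | [] => false
  | h :: t => bif Nat.beq (l.length % 2) 0 then
      forceP (pairsOf (t ++ [h])) fun al => forceL (trL al g (l.length / 2) h) fun T =>
        bif lastB h T then nodupB T.tail else false
      else false

structure Obj where
  cs : List Nat
  g1 : List (Nat × Nat)
  g2 : List (Nat × Nat)

def rot1 : List Nat → List Nat
  | [] => []
  | a :: t => t ++ [a]

def mkObj (s : List (List Nat)) : Obj :=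
  ⟨s.flatten, s.flatMap pairsOf, s.flatMap fun q => pairsOf (rot1 q)⟩

def goodB (g h : List (Nat × Nat)) (l : List Nat) : Bool :=
  forceP (pairsOf l) fun q => bif prB g q then trB l h else false

/-- side data: block index, list of atoms with their bit patterns -/
def lookP (k : Nat) (l : List (Nat × Nat)) : Nat :=
  @List.rec (Nat × Nat) (fun _ => Nat) 0 (fun q _ r => bif Nat.beq k q.1 then q.2 else r) l

def insTT (full : Nat) (blk : Nat → Nat) (Ps : List (Nat × Nat)) (x : Nat) :
    List Nat → (List Nat → Nat) → Nat
  | [], k => k [x]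
  | y :: ys, k =>
    bif Nat.beq (blk x) (blk y) then
      (lookP (16 * x + y) Ps &&& k (x :: y :: ys)) |||
        ((full ^^^ lookP (16 * x + y) Ps) &&& insTT full blk Ps x ys (fun l => k (y :: l)))
    else k (x :: y :: ys)

def sortTT (full : Nat) (blk : Nat → Nat) (Ps : List (Nat × Nat)) :
    List Nat → (List Nat → Nat) → Nat
  | [], k => k []
  | x :: xs, k => sortTT full blk Ps xs (fun l => insTT full blk Ps x l k)


def atomsOf (blk : Nat → Nat) : List Nat → List Nat
  | [] => []
  | x :: t => ((t.filter fun y => Nat.beq (blk x) (blk y)).map fun y => 16 * x + y) ++ atomsOf blk t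

/-- bit patterns -/
def pats : List Nat → List (Nat × Nat)
  | [] => []
  | a :: t => (a, (2 ^ 2 ^ t.length - 1)) :: (pats t).map fun q => (q.1, q.2 ||| q.2 <<< 2 ^ t.length)

def ntB (full : Nat) (blk : Nat → Nat) (Ps : List (Nat × Nat)) (U : List Nat) : Nat :=
  (U.flatMap fun x => U.flatMap fun y => U.map fun z =>
    bif Nat.ble y x then 0 else bif Nat.ble z y then 0 else
    bif Nat.beq (blk x) (blk y) then bif Nat.beq (blk y) (blk z) then
      let A := lookP (16 * x + y) Ps
      let B := lookP (16 * y + z) Ps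
      let C := lookP (16 * x + z) Ps
      (A &&& (B &&& (full ^^^ C))) ||| ((full ^^^ A) &&& ((full ^^^ B) &&& C))
    else 0 else 0).foldr (fun a b => a ||| b) 0

def exactTT (full : Nat) (blk : Nat → Nat) (Ps : List (Nat × Nat)) : List Nat → Nat
  | x :: y :: t =>
    (bif Nat.beq (blk x) (blk y) then
      bif Nat.ble x y then lookP (16 * x + y) Ps else full ^^^ lookP (16 * y + x) Ps
    else bif Nat.ble (blk x) (blk y) then full else 0) &&& exactTT full blk Ps (y :: t)
  | _ => full

/-- cover check -/
def stepC (half : Nat) (hm : Nat) (hi : Bool) (l : List (Nat × Nat)) :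
    Nat → (List (Nat × Nat) → Nat → Bool) → Bool :=
  @List.rec (Nat × Nat) (fun _ => Nat → (List (Nat × Nat) → Nat → Bool) → Bool)
    (fun acc k => k [] acc)
    (fun q _ r acc k =>
      forceN (bif hi then q.1 >>> half else q.1 &&& hm) fun L =>
        bif Nat.beq L 0 then r acc k
        else bif Nat.beq L hm then forceN (acc ||| q.2) fun acc' => r acc' k
        else r acc fun l a => k ((L, q.2) :: l) a) l

def cover (full : Nat) : Nat → List (Nat × Nat) → Nat → Bool
  | 0, _, acc => Nat.beq acc full
  | n + 1, l, acc =>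
    bif Nat.beq acc full then true
    else (stepC (2 ^ n) (2 ^ 2 ^ n - 1) false l acc fun l' a' => cover full n l' a') &&
      (stepC (2 ^ n) (2 ^ 2 ^ n - 1) true l acc fun l' a' => cover full n l' a')

def tabTT (sw : Bool) (full : Nat) (blk : Nat → Nat) (Ps : List (Nat × Nat)) (U : List Nat) :
    List Obj → List Nat
  | [] => []
  | o :: t => (forceL (U.filter fun e => memB e o.cs) fun V => sortTT full blk Ps V
      fun l => bif (bif sw then goodB o.g1 o.g2 l else goodB o.g2 o.g1 l) then full else 0) ::
        tabTT sw full blk Ps U t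

def blkL (e : Nat) : Nat := (e / 4 + 1) % 4
def blkR (w : List Nat) (e : Nat) : Nat := w.getD (e % 4) 0

def forceO {α : Type} : List Obj → (List Obj → α) → α
  | [], k => k []
  | o :: t, k => forceL o.cs fun c => forceP o.g1 fun p => forceP o.g2 fun q => forceO t fun l => k (⟨c, p, q⟩ :: l)

def zipL : List Nat → List Nat → List (Nat × Nat)
  | a :: s, b :: t => (a, b) :: zipL s t
  | _, _ => []

abbrev Exc := List Nat × List Nat × List Nat × List Nat

def svec (o : List Nat) : Bool → List Nat → List Int
  | _, [] => []
  | s, x :: t => bif memB x o then (bif s then 1 else -1) :: svec o (!s) t else 0 :: svec o s t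

def addV (c : Int) : List Int → List Int → List Int
  | a :: s, b :: t => (c * a + b) :: addV c s t
  | _, _ => []

def sumV (c : Int) (l : List Nat) : List Obj → List Int → List Int
  | [], acc => acc
  | o :: t, acc => sumV c l t (addV c (svec o.cs false l) acc)

def preB : Int → List Int → Bool
  | acc, [] => decide (acc = 0)
  | acc, a :: t => decide (0 ≤ acc + a) && preB (acc + a) t

def pick (objs : List Obj) : List Nat → List Obj
  | [] => []
  | i :: t => (objs.drop i).take 1 ++ pick objs t

def d1B (l1 l2 : List Nat) (o : Obj) : Bool :=
  goodB o.g1 o.g2 (l1.filter fun e => memB e o.cs) &&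
    prB o.g2 (pairsOf (l2.filter fun e => memB e o.cs))

def d2B (l1 l2 : List Nat) (o : Obj) : Bool :=
  goodB o.g2 o.g1 (l2.filter fun e => memB e o.cs) &&
    prB o.g1 (pairsOf (l1.filter fun e => memB e o.cs))

def excB (objs : List Obj) (x : Exc) : Bool :=
  let D1 := pick objs x.2.2.1
  let D2 := pick objs x.2.2.2
  D1.all (d1B x.1 x.2.1) && D2.all (d2B x.1 x.2.1) && !D1.isEmpty &&
    preB 0 (sumV (-1) x.1 D2 (sumV 1 x.1 D1 (x.1.map fun _ => 0))) &&
    preB 0 (sumV 1 x.2.1 D2 (sumV (-1) x.2.1 D1 (x.2.1.map fun _ => 0)))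

def permB (l U : List Nat) : Bool :=
  Nat.beq l.length U.length && nodupB l && l.all fun e => memB e U

def objB (o : Obj) : Bool :=
  o.g1.all (fun q => Nat.beq (q.1 / 4) (q.2 / 4)) && o.g2.all (fun q => Nat.beq (q.1 % 4) (q.2 % 4))

def ordB (blk : Nat → Nat) : List Nat → Bool
  | [] => true
  | x :: t => (t.all fun y => Nat.blt (blk x) (blk y) || (Nat.beq (blk x) (blk y) && Nat.blt x y)) &&
      ordB blk t

def excTab (full1 full2 : Nat) (blk1 blk2 : Nat → Nat) (P1 P2 : List (Nat × Nat)) :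
    List Exc → List (Nat × Nat)
  | [] => []
  | x :: t => (exactTT full1 blk1 P1 x.1, exactTT full2 blk2 P2 x.2.1) ::
      excTab full1 full2 blk1 blk2 P1 P2 t

structure RD where
  w : List Nat
  U : List Nat
  exc : List Exc

def rightB (objs : List Obj) (U1 : List Nat) (blk1 : Nat → Nat) (n1 f1 : Nat) (P1 : List (Nat × Nat))
    (LT : List Nat) (nt1 : Nat) (r : RD) : Bool :=
  r.exc.all (fun x => excB objs x && permB x.1 U1 && permB x.2.1 U1) && permB r.U U1 &&
    permB U1 r.U &&
    ordB (blkR r.w) r.U && nodupB (atomsOf (blkR r.w) r.U) &&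
    forceN (atomsOf (blkR r.w) r.U).length fun n2 => forceN (2 ^ 2 ^ n2 - 1) fun f2 =>
    forceP (pats (atomsOf (blkR r.w) r.U)) fun P2 =>
    forceL (tabTT false f2 (blkR r.w) P2 r.U objs) fun RT =>
    forceN (ntB f2 (blkR r.w) P2 r.U) fun nt2 =>
    forceP (excTab f1 f2 blk1 (blkR r.w) P1 P2 r.exc) fun ET =>
    cover f2 n1 ((nt1, f2) :: ET ++ zipL LT RT) nt2

def mainB (objs : List Obj) (U1 : List Nat) (blk1 : Nat → Nat) (rs : List RD) : Bool :=
  forceO objs fun objs => objs.all objB && ordB blk1 U1 && nodupB (atomsOf blk1 U1) &&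
    forceN (atomsOf blk1 U1).length fun n1 => forceN (2 ^ 2 ^ n1 - 1) fun f1 =>
    forceP (pats (atomsOf blk1 U1)) fun P1 =>
    forceL (tabTT true f1 blk1 P1 U1 objs) fun LT =>
    forceN (ntB f1 blk1 P1 U1) fun nt1 =>
    rs.all (rightB objs U1 blk1 n1 f1 P1 LT nt1)

def objsK : List (List (List Nat)) := [[[0,1,5,4]],[[0,1,9,8]],[[0,2,6,4]],[[0,2,10,8]],
  [[1,2,6,5]],[[1,2,10,9]],[[4,5,9,8]],[[4,6,10,8]],[[5,6,10,9]],[[0,1,9,10,6,4]],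
  [[0,1,5,6,10,8]],[[0,2,10,9,5,4]],[[0,2,6,5,9,8]],[[1,2,10,8,4,5]],[[1,2,6,4,8,9]]]

  def excK0 : List (List Nat × List Nat × List Nat × List Nat) := [([0,1,2,4,6,5,9,10,8],[8,4,0,9,1,5,2,10,6],[0,5],[11]),
  ([0,1,2,4,6,5,10,8,9],[0,8,4,5,9,1,10,6,2],[1,13],[4,9]),
  ([0,1,2,4,6,5,10,8,9],[8,0,4,5,1,9,10,6,2],[1,13],[7,12]),
  ([0,1,2,5,4,6,8,10,9],[0,4,8,9,1,5,10,6,2],[7,11],[5,10]),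
  ([0,1,2,5,4,6,8,10,9],[0,8,4,9,1,5,6,10,2],[11],[0,5]),
  ([0,1,2,5,4,6,10,9,8],[8,4,0,5,9,1,10,2,6],[2,6],[12]),
  ([0,1,2,5,6,4,9,8,10],[0,8,4,1,5,9,10,6,2],[9],[1,7]),
  ([0,1,2,5,6,4,9,8,10],[0,8,4,5,1,9,10,2,6],[9],[1,7]),
  ([0,1,2,6,4,5,9,8,10],[8,4,0,9,1,5,2,10,6],[5,10],[7,11]),
  ([0,1,2,6,4,5,10,9,8],[0,4,8,5,1,9,2,10,6],[0,7],[10]),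
  ([0,1,2,6,5,4,8,10,9],[8,0,4,1,5,9,2,10,6],[3,9],[0,12]),
  ([0,1,2,6,5,4,9,10,8],[8,4,0,5,1,9,6,10,2],[7,11],[0,14]),
  ([0,2,1,4,5,6,9,8,10],[4,0,8,1,5,9,10,2,6],[3,14],[6,10]),
  ([0,2,1,4,5,6,9,8,10],[4,8,0,1,5,9,2,10,6],[3,14],[4,11]),
  ([0,2,1,4,5,6,10,9,8],[0,4,8,5,9,1,6,2,10],[2,5],[9]),
  ([0,2,1,5,4,6,9,10,8],[8,4,0,5,9,1,10,2,6],[6,9],[5,12]),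
  ([0,2,1,5,4,6,10,8,9],[0,4,8,5,9,1,6,2,10],[2,5],[9]),
  ([0,2,1,5,6,4,8,9,10],[4,0,8,5,9,1,10,6,2],[1,8],[10]),
  ([0,2,1,5,6,4,10,9,8],[0,4,8,1,9,5,10,2,6],[6,9],[2,13]),
  ([0,2,1,6,4,5,8,9,10],[4,8,0,1,9,5,6,2,10],[9],[2,5]),
  ([0,2,1,6,4,5,8,9,10],[8,4,0,1,5,9,6,2,10],[9],[2,5]),
  ([0,2,1,6,4,5,9,10,8],[0,4,8,5,1,9,2,10,6],[0,7],[10]),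
  ([0,2,1,6,5,4,10,8,9],[4,8,0,1,5,9,10,6,2],[11],[3,6]),
  ([0,2,1,6,5,4,10,8,9],[4,8,0,5,1,9,10,2,6],[4,11],[6,10]),
  ([1,0,2,4,5,6,9,10,8],[4,0,8,5,9,1,2,10,6],[8,13],[10,11]),
  ([1,0,2,4,5,6,9,10,8],[4,0,8,9,5,1,2,6,10],[8,13],[3,9]),
  ([1,0,2,4,5,6,10,8,9],[0,8,4,1,5,9,6,2,10],[4,11],[3,14]),
  ([1,0,2,4,6,5,8,9,10],[8,0,4,5,9,1,6,2,10],[10],[1,8]),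
  ([1,0,2,4,6,5,8,9,10],[8,4,0,5,9,1,2,6,10],[10],[1,8]),
  ([1,0,2,5,6,4,8,10,9],[4,0,8,1,5,9,6,10,2],[10,11],[8,13]),
  ([1,0,2,5,6,4,10,9,8],[0,8,4,5,9,1,2,6,10],[1,11],[2,10]),
  ([1,0,2,5,6,4,10,9,8],[8,0,4,5,1,9,2,6,10],[11],[2,8]),
  ([1,0,2,6,4,5,8,10,9],[8,0,4,1,5,9,2,10,6],[10,11],[0,12]),
  ([1,0,2,6,4,5,9,10,8],[8,4,0,5,1,9,6,10,2],[5,10],[0,14]),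
  ([1,0,2,6,5,4,8,9,10],[4,0,8,1,5,9,6,10,2],[3,9],[8,13]),
  ([1,0,2,6,5,4,10,8,9],[8,0,4,9,5,1,6,10,2],[0,8],[9]),
  ([1,2,0,4,5,6,8,10,9],[0,8,4,1,5,9,6,2,10],[6,10],[3,14]),
  ([1,2,0,4,5,6,10,9,8],[0,8,4,9,5,1,10,2,6],[3,4],[10]),
  ([1,2,0,4,6,5,9,8,10],[0,8,4,9,1,5,2,6,10],[1,7],[9]),
  ([1,2,0,4,6,5,10,8,9],[4,8,0,9,5,1,6,2,10],[6,10],[4,11]),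
  ([1,2,0,5,4,6,8,9,10],[8,4,0,1,9,5,6,10,2],[12],[2,6]),
  ([1,2,0,5,4,6,8,9,10],[8,4,0,9,1,5,6,2,10],[5,12],[6,9]),
  ([1,2,0,5,4,6,10,8,9],[0,8,4,9,5,1,10,2,6],[3,4],[10]),
  ([1,2,0,6,4,5,10,9,8],[8,0,4,1,9,5,6,2,10],[2,13],[6,9]),
  ([1,2,0,6,4,5,10,9,8],[8,4,0,1,9,5,2,6,10],[2,13],[5,12]),
  ([1,2,0,6,5,4,8,10,9],[8,0,4,9,5,1,6,10,2],[0,8],[9]),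
  ([1,2,0,6,5,4,9,8,10],[4,8,0,1,9,5,10,2,6],[10],[3,4]),
  ([1,2,0,6,5,4,9,8,10],[8,4,0,1,5,9,10,2,6],[10],[3,4]),
  ([2,0,1,4,5,6,8,10,9],[0,4,8,9,5,1,2,10,6],[0,12],[3,9]),
  ([2,0,1,4,5,6,8,10,9],[4,0,8,9,1,5,2,10,6],[0,12],[10,11]),
  ([2,0,1,4,6,5,9,8,10],[4,8,0,9,1,5,10,6,2],[4,9],[1,13]),
  ([2,0,1,4,6,5,10,9,8],[8,0,4,5,9,1,2,10,6],[8,14],[2,10]),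
  ([2,0,1,4,6,5,10,9,8],[8,0,4,9,5,1,2,6,10],[8,14],[1,11]),
  ([2,0,1,5,4,6,8,9,10],[4,0,8,5,9,1,10,6,2],[1,8],[10]),
  ([2,0,1,5,4,6,10,9,8],[0,4,8,1,9,5,10,2,6],[5,12],[2,13]),
  ([2,0,1,5,6,4,8,10,9],[8,0,4,1,9,5,10,6,2],[1,11],[8,14]),
  ([2,0,1,5,6,4,9,8,10],[4,0,8,1,9,5,2,6,10],[2,8],[11]),
  ([2,0,1,6,5,4,8,9,10],[8,0,4,1,9,5,10,6,2],[2,10],[8,14]),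
  ([2,0,1,6,5,4,9,10,8],[4,0,8,9,5,1,10,2,6],[9],[0,8]),
  ([2,0,1,6,5,4,9,10,8],[4,8,0,9,5,1,2,10,6],[9],[0,8]),
  ([2,1,0,4,5,6,9,8,10],[0,8,4,9,1,5,2,6,10],[1,7],[9]),
  ([2,1,0,4,5,6,10,8,9],[4,8,0,9,5,1,6,2,10],[3,6],[11]),
  ([2,1,0,4,6,5,8,9,10],[4,8,0,9,1,5,10,6,2],[7,12],[1,13]),
  ([2,1,0,4,6,5,9,10,8],[4,8,0,5,1,9,2,6,10],[1,4],[12]),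
  ([2,1,0,5,4,6,9,10,8],[0,4,8,9,5,1,6,10,2],[0,14],[5,10]),
  ([2,1,0,5,4,6,9,10,8],[4,0,8,9,1,5,6,10,2],[0,14],[7,11]),
  ([2,1,0,5,6,4,8,9,10],[4,0,8,1,9,5,2,6,10],[2,10],[1,11]),
  ([2,1,0,5,6,4,10,8,9],[0,4,8,5,1,9,10,6,2],[12],[1,4]),
  ([2,1,0,5,6,4,10,8,9],[0,8,4,5,1,9,6,10,2],[7,12],[4,9]),
  ([2,1,0,6,4,5,8,10,9],[0,4,8,1,9,5,6,10,2],[10],[0,7]),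
  ([2,1,0,6,4,5,8,10,9],[0,4,8,9,1,5,6,2,10],[10],[0,7]),
  ([2,1,0,6,4,5,9,8,10],[4,8,0,5,1,9,2,6,10],[4,9],[7,12])]
def objsQ : List (List (List Nat)) := [[[1,2,14,13]],[[1,3,11,9]],[[1,3,15,13]],[[2,3,7,6]],
  [[2,3,15,14]],[[4,6,14,12]],[[4,7,11,8]],[[4,7,15,12]],[[6,7,15,14]],[[8,9,13,12]],
  [[8,11,15,12]],[[9,11,15,13]],[[1,2,6,4,8,9]],[[1,2,6,4,12,13]],[[1,2,6,7,11,9]],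
  [[1,2,6,7,15,13]],[[1,2,14,12,8,9]],[[1,2,14,15,11,9]],[[1,3,7,4,8,9]],[[1,3,7,4,12,13]],
  [[1,3,7,6,14,13]],[[1,3,15,12,8,9]],[[1,3,11,8,12,13]],[[2,3,11,8,4,6]],[[2,3,15,12,4,6]],
  [[2,3,7,4,12,14]],[[2,3,11,8,12,14]],[[2,3,11,9,13,14]],[[4,6,14,13,9,8]],[[4,6,14,15,11,8]],
  [[4,7,15,13,9,8]],[[4,7,11,9,13,12]],[[6,7,11,8,12,14]],[[6,7,11,9,13,14]],
  [[1,2,6,4,8,11,15,13]],[[1,2,6,4,12,15,11,9]],[[1,2,14,15,7,4,8,9]],[[1,2,14,13],[4,7,11,8]],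
  [[1,2,14,12,4,7,11,9]],[[1,2,14,15,7,4,12,13]],[[1,2,14,12,4,7,15,13]],
  [[1,2,14,13],[4,7,15,12]],[[1,2,6,7,15,12,8,9]],[[1,2,6,7,11,8,12,13]],[[1,2,14,15,11,8,12,13]],
  [[1,2,14,12,8,11,15,13]],[[1,2,14,13],[8,11,15,12]],[[1,3,15,14,6,4,8,9]],
  [[1,3,11,8,4,6,14,13]],[[1,3,11,9],[4,6,14,12]],[[1,3,15,14,6,4,12,13]],
  [[1,3,15,13],[4,6,14,12]],[[1,3,15,12,4,6,14,13]],[[1,3,7,4,8,11,15,13]],[[1,3,11,8,4,7,15,13]],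
  [[1,3,15,13],[4,7,11,8]],[[1,3,7,4,12,15,11,9]],[[1,3,11,9],[4,7,15,12]],[[1,3,15,12,4,7,11,9]],
  [[1,3,7,6,14,12,8,9]],[[1,3,7,6,14,15,11,9]],[[1,3,11,9],[6,7,15,14]],[[1,3,15,14,6,7,11,9]],
  [[2,3,15,13,9,8,4,6]],[[2,3,11,9,13,12,4,6]],[[2,3,7,4,8,9,13,14]],[[2,3,7,4,8,11,15,14]],
  [[2,3,11,8,4,7,15,14]],[[2,3,15,14],[4,7,11,8]],[[2,3,7,6],[8,9,13,12]],
  [[2,3,7,6],[8,11,15,12]],[[2,3,11,8,12,15,7,6]],[[2,3,15,12,8,11,7,6]],[[2,3,7,6],[9,11,15,13]],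
  [[2,3,11,9,13,15,7,6]],[[2,3,15,13,9,11,7,6]],[[2,3,15,14],[8,9,13,12]],[[2,3,15,13,9,8,12,14]],
  [[2,3,15,12,8,9,13,14]],[[4,6,14,15,11,9,13,12]],[[4,6,14,12],[9,11,15,13]],
  [[4,6,14,13,9,11,15,12]],[[6,7,15,14],[8,9,13,12]],[[6,7,15,13,9,8,12,14]],
  [[6,7,15,12,8,9,13,14]]]
def excQ0 : List (List Nat × List Nat × List Nat × List Nat) := []

  def excQ1 : List (List Nat × List Nat × List Nat × List Nat) := [([12,13,15,14,2,1,3,6,7,4,9,8,11],[3,11,15,7,12,8,4,6,2,14,13,9,1],[31],[6,9]),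
  ([12,13,15,14,2,1,3,6,7,4,9,8,11],[3,11,15,7,12,8,4,6,14,2,13,9,1],[31],[6,9]),
  ([12,13,15,14,2,1,3,6,7,4,9,8,11],[3,11,15,7,12,8,4,14,6,2,13,9,1],[31],[6,9]),
  ([12,13,15,14,2,3,1,6,7,4,9,8,11],[3,11,15,7,12,8,4,6,2,14,13,9,1],[31],[6,9]),
  ([12,13,15,14,2,3,1,6,7,4,9,8,11],[3,11,15,7,12,8,4,6,14,2,13,9,1],[31],[6,9]),
  ([12,13,15,14,2,3,1,6,7,4,9,8,11],[3,11,15,7,12,8,4,14,6,2,13,9,1],[31],[6,9]),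
  ([12,13,15,14,3,1,2,6,4,7,11,9,8],[3,11,15,7,4,8,12,6,14,2,9,1,13],[0,1],[27]),
  ([12,13,15,14,3,1,2,6,4,7,11,9,8],[3,11,15,7,4,12,8,6,14,2,9,1,13],[0,1],[27]),
  ([12,13,15,14,3,1,2,6,7,4,11,9,8],[3,11,15,7,4,8,12,6,14,2,9,1,13],[0,1],[27]),
  ([12,13,15,14,3,1,2,6,7,4,11,9,8],[3,11,15,7,4,12,8,6,14,2,9,1,13],[6,20],[5,22]),
  ([12,13,15,14,3,1,2,7,6,4,11,9,8],[3,11,15,7,4,8,12,6,14,2,9,1,13],[0,1],[27]),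
  ([12,13,15,14,3,1,2,7,6,4,11,9,8],[3,11,15,7,4,12,8,6,14,2,9,1,13],[0,1],[27]),
  ([12,14,15,13,3,2,1,6,7,4,9,11,8],[3,15,11,7,12,4,8,6,2,14,13,1,9],[27],[4,11]),
  ([12,14,15,13,3,2,1,7,6,4,9,11,8],[3,15,11,7,12,4,8,6,2,14,13,1,9],[27],[4,11]),
  ([12,15,13,14,3,2,1,6,4,7,11,8,9],[3,7,15,11,12,4,8,6,14,2,9,13,1],[7,11],[31]),
  ([12,15,13,14,3,2,1,6,4,7,11,8,9],[3,7,15,11,12,4,8,14,6,2,9,13,1],[7,11],[31])]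

  def excQ2 : List (List Nat × List Nat × List Nat × List Nat) := [([12,13,15,14,1,2,3,7,6,4,9,8,11],[3,15,7,11,9,13,1,8,4,12,2,6,14],[2,8],[20]),
  ([12,13,15,14,1,2,3,7,6,4,9,8,11],[3,15,7,11,9,13,1,8,12,4,2,6,14],[2,8],[20]),
  ([12,15,13,14,2,1,3,6,4,7,8,9,11],[7,15,3,11,13,9,1,8,12,4,2,14,6],[1,9],[22]),
  ([12,15,13,14,2,1,3,6,4,7,8,9,11],[7,15,3,11,13,9,1,8,12,4,14,2,6],[1,9],[22]),
  ([12,15,13,14,2,1,3,6,7,4,8,9,11],[7,15,3,11,13,9,1,8,12,4,2,14,6],[1,9],[22]),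
  ([12,15,13,14,2,1,3,6,7,4,8,9,11],[7,15,3,11,13,9,1,8,12,4,14,2,6],[1,9],[22]),
  ([12,15,13,14,2,1,3,7,6,4,8,9,11],[7,15,3,11,13,9,1,8,12,4,2,14,6],[1,9],[22]),
  ([12,15,13,14,2,1,3,7,6,4,8,9,11],[7,15,3,11,13,9,1,8,12,4,14,2,6],[1,9],[22]),
  ([12,15,13,14,3,2,1,6,7,4,9,11,8],[7,15,3,11,9,1,13,8,4,12,6,2,14],[20],[0,3]),
  ([12,15,13,14,3,2,1,6,7,4,9,11,8],[7,15,3,11,9,1,13,8,12,4,6,2,14],[20],[0,3]),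
  ([12,15,13,14,3,2,1,6,7,4,9,11,8],[7,15,3,11,9,1,13,12,8,4,6,2,14],[20],[0,3]),
  ([12,15,13,14,3,2,1,6,7,4,11,9,8],[7,15,3,11,9,1,13,8,4,12,6,2,14],[20],[0,3]),
  ([12,15,13,14,3,2,1,6,7,4,11,9,8],[7,15,3,11,9,1,13,8,12,4,6,2,14],[20],[0,3]),
  ([12,15,13,14,3,2,1,6,7,4,11,9,8],[7,15,3,11,9,1,13,12,8,4,6,2,14],[20],[0,3]),
  ([13,15,12,14,2,3,1,6,4,7,9,8,11],[7,3,15,11,1,9,13,12,8,4,2,6,14],[22],[2,10]),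
  ([13,15,12,14,2,3,1,6,7,4,9,8,11],[7,3,15,11,1,9,13,12,8,4,2,6,14],[22],[2,10])]

def UK1 : List Nat := [0,1,2,4,5,6,8,9,10]
def UQ1 : List Nat := [12,13,14,15,1,2,3,4,6,7,8,9,11]
def rK : RD := ⟨[1,2,3,0], [0,4,8,1,5,9,2,6,10], excK0⟩
def rQ0 : RD := ⟨[1,2,3,0], [3,7,11,15,4,8,12,1,9,13,2,6,14], excQ0⟩
def rQ1 : RD := ⟨[1,3,2,0], [3,7,11,15,4,8,12,2,6,14,1,9,13], excQ1⟩
def rQ2 : RD := ⟨[2,1,3,0], [3,7,11,15,1,9,13,4,8,12,2,6,14], excQ2⟩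
end

theorem chkK : mainB (objsK.map mkObj) UK1 blkL [rK] = true := by decide +kernel
theorem chkQ : mainB (objsQ.map mkObj) UQ1 blkL [rQ0,rQ1,rQ2] = true := by decide +kernel
end SepT

namespace SepT

theorem forceN_eq {α : Type} (n : Nat) (k : Nat → α) : forceN n k = k n := rfl

theorem forceP_eq {α : Type} (l : List (Nat × Nat)) (k : List (Nat × Nat) → α) :
    forceP l k = k l := by
  induction l generalizing k with
  | nil => rfl
  | cons q t ih => exact ih _

theorem forceL_eq {α : Type} (l : List Nat) (k : List Nat → α) : forceL l k = k l := by
  induction l generalizing k with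
  | nil => rfl
  | cons q t ih => exact ih _

theorem forceO_eq {α : Type} (l : List Obj) (k : List Obj → α) : forceO l k = k l := by
  induction l generalizing k with
  | nil => rfl
  | cons q t ih => simp only [forceO, forceL_eq, forceP_eq, ih]

theorem beq_iff (a b : Nat) : Nat.beq a b = true ↔ a = b := Iff.of_eq Nat.beq_eq

theorem memB_iff (e : Nat) (l : List Nat) : memB e l = true ↔ e ∈ l := by
  induction l with
  | nil => simp [memB]
  | cons a t ih =>
    have : memB e (a :: t) = bif Nat.beq e a then true else memB e t := rfl
    rw [this]
    by_cases h : e = a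
    · simp [h]
    · have : Nat.beq e a = false := by rw [← Bool.not_eq_true, beq_iff]; exact h
      simp [this, h, ih]

theorem nodupB_iff (l : List Nat) : nodupB l = true ↔ l.Nodup := by
  induction l with
  | nil => simp [nodupB]
  | cons a t ih =>
    have : nodupB (a :: t) = bif memB a t then false else nodupB t := rfl
    rw [this, List.nodup_cons, ← memB_iff]
    cases memB a t <;> simp [ih]

theorem pt_cons (a b : Nat) (t) (e : Nat) : pt ((a, b) :: t) e =
    if e = a then b else if e = b then a else pt t e := by
  have : pt ((a, b) :: t) e = bif Nat.beq e a then b else bif Nat.beq e b then a else pt t e := rfl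
  rw [this]
  by_cases h : e = a
  · simp [h]
  · have h1 : Nat.beq e a = false := by rw [← Bool.not_eq_true, beq_iff]; exact h
    by_cases h' : e = b
    · simp only [h']
      have : Nat.beq b a = false := by rw [← Bool.not_eq_true, beq_iff]; exact h' ▸ h
      simp [this]
      exact Eq.symm
    · have h2 : Nat.beq e b = false := by rw [← Bool.not_eq_true, beq_iff]; exact h'
      simp [h1, h2, h, h']

theorem prB_iff (g l : List (Nat × Nat)) :
    prB g l = true ↔ ∀ q ∈ l, pt g q.1 = q.2 ∧ pt g q.2 = q.1 := by
  induction l with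
  | nil => simp [prB]
  | cons q t ih =>
    have : prB g (q :: t) = bif Nat.beq (pt g q.1) q.2 then
      (bif Nat.beq (pt g q.2) q.1 then prB g t else false) else false := rfl
    rw [this]
    rw [List.forall_mem_cons, ← ih, ← beq_iff, ← beq_iff]
    cases Nat.beq (pt g q.1) q.2 <;> cases Nat.beq (pt g q.2) q.1 <;> simp

theorem lookP_cons (k a P : Nat) (t) : lookP k ((a, P) :: t) =
    if k = a then P else lookP k t := by
  have : lookP k ((a, P) :: t) = bif Nat.beq k a then P else lookP k t := rfl
  rw [this]
  by_cases h : k = a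
  · simp [h]
  · have h1 : Nat.beq k a = false := by rw [← Bool.not_eq_true, beq_iff]; exact h
    simp [h, h1]

/-- the relation used by the insertion sort -/
def RelJ (blk : Nat → Nat) (Ps : List (Nat × Nat)) (p : Nat → ℤ) (j : Nat) (x y : Nat) : Prop :=
  p x ≠ p y ∧ (blk x = blk y → (lookP (16 * x + y) Ps).testBit j = decide (p x < p y)) ∧
    (blk x ≠ blk y → p x < p y)

theorem insTT_spec (full : Nat) (blk : Nat → Nat) (Ps : List (Nat × Nat)) (p : Nat → ℤ) (j : Nat)
    (hf : full.testBit j = true) (x : Nat) (l : List Nat) (k : List Nat → Nat)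
    (hs : l.Pairwise fun a b => p a < p b) (hR : ∀ y ∈ l, RelJ blk Ps p j x y) :
    ∃ l' : List Nat, l'.Perm (x :: l) ∧ (l'.Pairwise fun a b => p a < p b) ∧
      (insTT full blk Ps x l k).testBit j = (k l').testBit j := by
  induction l generalizing k with
  | nil => exact ⟨[x], List.Perm.refl _, by simp, rfl⟩
  | cons y ys ih =>
    obtain ⟨hy, hys⟩ := List.pairwise_cons.1 hs
    obtain ⟨hne, h1, h2⟩ := hR y (by simp)
    by_cases hlt : p x < p y
    · refine ⟨x :: y :: ys, List.Perm.refl _, ?_, ?_⟩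
      · refine List.pairwise_cons.2 ⟨?_, hs⟩
        intro b hb
        rcases List.mem_cons.1 hb with rfl | hb
        · exact hlt
        · exact hlt.trans (hy b hb)
      · by_cases hb : blk x = blk y
        · have h1 := h1 hb
          simp only [hlt, decide_true] at h1
          simp [insTT, hb, Nat.testBit_or, Nat.testBit_and, Nat.testBit_xor, h1, hf]
        · have : Nat.beq (blk x) (blk y) = false := by rw [← Bool.not_eq_true, beq_iff]; exact hb
          simp [insTT, this]
    · have hb : blk x = blk y := by
        by_contra hb; exact hlt (h2 hb)
      obtain ⟨l', hp, hso, he⟩ := ih (fun l => k (y :: l)) hys (fun z hz => hR z (by simp [hz]))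
      refine ⟨y :: l', ?_, ?_, ?_⟩
      · exact (List.Perm.cons y hp).trans (List.Perm.swap x y ys)
      · refine List.pairwise_cons.2 ⟨?_, hso⟩
        intro b hb
        rcases List.mem_cons.1 (hp.mem_iff.1 hb) with rfl | hb
        · omega
        · exact hy b hb
      · have h1 := h1 hb
        simp only [hlt, decide_false] at h1
        simp [insTT, hb, Nat.testBit_or, Nat.testBit_and, Nat.testBit_xor, h1, hf, he]

theorem sortTT_spec (full : Nat) (blk : Nat → Nat) (Ps : List (Nat × Nat)) (p : Nat → ℤ) (j : Nat)
    (hf : full.testBit j = true) (l : List Nat) (k : List Nat → Nat)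
    (hR : l.Pairwise (RelJ blk Ps p j)) :
    ∃ l' : List Nat, l'.Perm l ∧ (l'.Pairwise fun a b => p a < p b) ∧
      (sortTT full blk Ps l k).testBit j = (k l').testBit j := by
  induction l generalizing k with
  | nil => exact ⟨[], List.Perm.refl _, by simp, rfl⟩
  | cons x xs ih =>
    obtain ⟨hx, hxs⟩ := List.pairwise_cons.1 hR
    obtain ⟨l1, hp1, hs1, he1⟩ := ih (fun l => insTT full blk Ps x l k) hxs
    obtain ⟨l2, hp2, hs2, he2⟩ := insTT_spec full blk Ps p j hf x l1 k hs1
      (fun y hy => hx y (hp1.mem_iff.1 hy))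
    exact ⟨l2, hp2.trans (List.Perm.cons x hp1), hs2, by simp only [sortTT]; rw [he1, he2]⟩

theorem stepC_spec (n : Nat) (hi : Bool) (i' : Nat) (hi' : i' < 2 ^ n) (i : Nat)
    (hii : i = bif hi then 2 ^ n + i' else i') (l : List (Nat × Nat)) (acc : Nat)
    (k : List (Nat × Nat) → Nat → Bool)
    (h : stepC (2 ^ n) (2 ^ 2 ^ n - 1) hi l acc k = true) :
    ∃ l' acc', k l' acc' = true ∧
      (∀ j, acc'.testBit j = true → acc.testBit j = true ∨
        ∃ q ∈ l, q.1.testBit i = true ∧ q.2.testBit j = true) ∧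
      (∀ q' ∈ l', q'.1.testBit i' = true → ∃ q ∈ l, q.1.testBit i = true ∧ q.2 = q'.2) := by
  induction l generalizing acc k with
  | nil => exact ⟨[], acc, h, fun j hj => Or.inl hj, by simp⟩
  | cons q t ih =>
    obtain ⟨L, R⟩ := q
    set L' := bif hi then L >>> 2 ^ n else L &&& (2 ^ 2 ^ n - 1) with hL'
    have hb : L'.testBit i' = L.testBit i := by
      rw [hL', hii]
      cases hi
      · simp [Nat.testBit_and, Nat.testBit_two_pow_sub_one, hi']
      · simp [Nat.testBit_shiftRight]
    have h' : (bif Nat.beq L' 0 then stepC (2 ^ n) (2 ^ 2 ^ n - 1) hi t acc k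
        else bif Nat.beq L' (2 ^ 2 ^ n - 1) then
          stepC (2 ^ n) (2 ^ 2 ^ n - 1) hi t (acc ||| R) k
        else stepC (2 ^ n) (2 ^ 2 ^ n - 1) hi t acc fun l a => k ((L', R) :: l) a) = true := h
    by_cases h0 : L' = 0
    · rw [h0] at h'
      obtain ⟨l', acc', h1, h2, h3⟩ := ih acc k h'
      refine ⟨l', acc', h1, fun j hj => ?_, fun q' hq' hb => ?_⟩
      · rcases h2 j hj with h | ⟨q, hq, h⟩
        · exact Or.inl h
        · exact Or.inr ⟨q, by simp [hq], h⟩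
      · obtain ⟨q, hq, h⟩ := h3 q' hq' hb
        exact ⟨q, by simp [hq], h⟩
    have e0 : Nat.beq L' 0 = false := by rw [← Bool.not_eq_true, beq_iff]; exact h0
    rw [e0, cond_false] at h'
    by_cases h1 : L' = 2 ^ 2 ^ n - 1
    · have e1 : Nat.beq L' (2 ^ 2 ^ n - 1) = true := by rw [beq_iff]; exact h1
      rw [e1, cond_true] at h'
      obtain ⟨l', acc', h1', h2, h3⟩ := ih _ k h'
      refine ⟨l', acc', h1', fun j hj => ?_, fun q' hq' hb => ?_⟩
      · rcases h2 j hj with h | ⟨q, hq, h⟩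
        · rw [Nat.testBit_or, Bool.or_eq_true] at h
          rcases h with h | h
          · exact Or.inl h
          · refine Or.inr ⟨(L, R), by simp, ?_, h⟩
            rw [← hb, h1, Nat.testBit_two_pow_sub_one]; simpa using hi'
        · exact Or.inr ⟨q, by simp [hq], h⟩
      · obtain ⟨q, hq, h⟩ := h3 q' hq' hb
        exact ⟨q, by simp [hq], h⟩
    · have e1 : Nat.beq L' (2 ^ 2 ^ n - 1) = false := by rw [← Bool.not_eq_true, beq_iff]; exact h1
      rw [e1, cond_false] at h'
      obtain ⟨l', acc', h1', h2, h3⟩ := ih _ _ h'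
      refine ⟨(L', R) :: l', acc', h1', fun j hj => ?_, fun q' hq' hbb => ?_⟩
      · rcases h2 j hj with h | ⟨q, hq, h⟩
        · exact Or.inl h
        · exact Or.inr ⟨q, by simp [hq], h⟩
      · rcases List.mem_cons.1 hq' with rfl | hq'
        · exact ⟨(L, R), by simp, by rw [← hb]; exact hbb, rfl⟩
        · obtain ⟨q, hq, h⟩ := h3 q' hq' hbb
          exact ⟨q, by simp [hq], h⟩

theorem cover_spec (full j : Nat) (hj : full.testBit j = true) (n : Nat) (l : List (Nat × Nat))
    (acc : Nat) (h : cover full n l acc = true) (i : Nat) (hi : i < 2 ^ n) :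
    acc.testBit j = true ∨ ∃ q ∈ l, q.1.testBit i = true ∧ q.2.testBit j = true := by
  induction n generalizing l acc i with
  | zero =>
    have : acc = full := (beq_iff _ _).1 h
    left; rw [this]; exact hj
  | succ n ih =>
    by_cases hf : acc = full
    · left; rw [hf]; exact hj
    have hf' : Nat.beq acc full = false := by rw [← Bool.not_eq_true, beq_iff]; exact hf
    rw [cover, hf', cond_false, Bool.and_eq_true] at h
    obtain ⟨i', hi', b, hb⟩ : ∃ i' < 2 ^ n, ∃ b : Bool, i = bif b then 2 ^ n + i' else i' := by
      by_cases h : i < 2 ^ n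
      · exact ⟨i, h, false, rfl⟩
      · exact ⟨i - 2 ^ n, by rw [pow_succ] at hi; omega, true, by simp; omega⟩
    have h' : stepC (2 ^ n) (2 ^ 2 ^ n - 1) b l acc (fun l' a' => cover full n l' a') = true := by
      cases b
      · exact h.1
      · exact h.2
    obtain ⟨l', acc', h1, h2, h3⟩ := stepC_spec n b i' hi' i hb l acc _ h'
    rcases ih l' acc' h1 i' hi' with h | ⟨q', hq', hb', hr⟩
    · exact h2 j h
    · obtain ⟨q, hq, hqb, he⟩ := h3 q' hq' hb'
      exact Or.inr ⟨q, hq, hqb, he ▸ hr⟩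

theorem pats_keys (l : List Nat) : (pats l).map Prod.fst = l := by
  induction l with
  | nil => rfl
  | cons a t ih =>
    simp only [pats, List.map_cons, List.map_map]
    congr 1

theorem pats_bound (l : List Nat) : ∀ q ∈ pats l, q.2 < 2 ^ 2 ^ l.length := by
  induction l with
  | nil => simp [pats]
  | cons a t ih =>
    intro q hq
    have h2 : 2 ^ 2 ^ t.length ≤ 2 ^ 2 ^ (a :: t).length :=
      Nat.pow_le_pow_right (by norm_num) (Nat.pow_le_pow_right (by norm_num) (by simp))
    simp only [pats, List.mem_cons, List.mem_map] at hq
    rcases hq with rfl | ⟨r, hr, rfl⟩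
    · have : 0 < 2 ^ 2 ^ t.length := by positivity
      simp only
      omega
    · have := ih r hr
      apply Nat.or_lt_two_pow (this.trans_le h2)
      rw [Nat.shiftLeft_eq, List.length_cons, pow_succ 2 t.length, mul_two, pow_add]
      exact Nat.mul_lt_mul_of_pos_right this (by positivity)

theorem lookP_map (k : Nat) (l : List (Nat × Nat)) (f : Nat → Nat) (hf : f 0 = 0) :
    lookP k (l.map fun q => (q.1, f q.2)) = f (lookP k l) := by
  induction l with
  | nil => exact hf.symm
  | cons q t ih =>
    obtain ⟨a, P⟩ := q
    simp only [List.map_cons, lookP_cons, ih]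
    split <;> rfl

theorem lookP_lt (k : Nat) (l : List (Nat × Nat)) (B : Nat) (hB : 0 < B) (h : ∀ q ∈ l, q.2 < B) :
    lookP k l < B := by
  induction l with
  | nil => exact hB
  | cons q t ih =>
    obtain ⟨a, P⟩ := q
    rw [lookP_cons]
    split
    · exact h (a, P) (by simp)
    · exact ih fun q hq => h q (by simp [hq])

theorem pats_spec (l : List Nat) (hl : l.Nodup) (ρ : Nat → Bool) :
    ∃ j < 2 ^ l.length, ∀ a ∈ l, (lookP a (pats l)).testBit j = ρ a := by
  induction l with
  | nil => exact ⟨0, by simp, by simp⟩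
  | cons a t ih =>
    obtain ⟨ha, ht⟩ := List.nodup_cons.1 hl
    obtain ⟨j', hj', hs⟩ := ih ht
    set N := 2 ^ t.length with hN
    have hlen : 2 ^ (a :: t).length = N + N := by rw [List.length_cons, pow_succ, mul_two]
    have key : ∀ b ∈ t, lookP b (pats (a :: t)) = lookP b (pats t) ||| lookP b (pats t) <<< N := by
      intro b hb
      rw [pats, lookP_cons, if_neg (by rintro rfl; exact ha hb)]
      exact lookP_map b (pats t) (fun x => x ||| x <<< N) (by simp)
    have hlt : ∀ b, lookP b (pats t) < 2 ^ N := fun b =>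
      lookP_lt _ _ _ (by positivity) (pats_bound t)
    have key0 : lookP a (pats (a :: t)) = 2 ^ N - 1 := by
      rw [pats, lookP_cons, if_pos rfl]
    cases hρ : ρ a
    · refine ⟨j' + N, by omega, fun b hb => ?_⟩
      rcases List.mem_cons.1 hb with rfl | hb
      · rw [key0, hρ, Nat.testBit_two_pow_sub_one]; simp
      · rw [key b hb, Nat.testBit_or, Nat.testBit_shiftLeft]
        have : (lookP b (pats t)).testBit (j' + N) = false :=
          Nat.testBit_lt_two_pow ((hlt b).trans_le (Nat.pow_le_pow_right (by norm_num) (by omega)))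
        simp [this, hs b hb]
    · refine ⟨j', by omega, fun b hb => ?_⟩
      rcases List.mem_cons.1 hb with rfl | hb
      · rw [key0, hρ, Nat.testBit_two_pow_sub_one]; simpa using hj'
      · rw [key b hb, Nat.testBit_or, Nat.testBit_shiftLeft]
        have : ¬ (N ≤ j') := by omega
        simp [this, hs b hb]

end SepT

namespace SepT

theorem ordB_iff (blk : Nat → Nat) (l : List Nat) : ordB blk l = true ↔
    l.Pairwise fun x y => blk x < blk y ∨ (blk x = blk y ∧ x < y) := by
  induction l with
  | nil => simp [ordB]
  | cons a t ih =>
    simp only [ordB, List.pairwise_cons, Bool.and_eq_true, ih, List.all_eq_true, Bool.or_eq_true,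
      beq_iff, Nat.blt_eq]

theorem mem_atoms (blk : Nat → Nat) (l : List Nat)
    (h : l.Pairwise fun x y => blk x < blk y ∨ (blk x = blk y ∧ x < y)) (x y : Nat)
    (hx : x ∈ l) (hy : y ∈ l) (hxy : x < y) (hb : blk x = blk y) :
    16 * x + y ∈ atomsOf blk l := by
  induction l with
  | nil => simp at hx
  | cons a t ih =>
    obtain ⟨h1, h2⟩ := List.pairwise_cons.1 h
    simp only [atomsOf, List.mem_append, List.mem_map, List.mem_filter]
    rcases List.mem_cons.1 hx with rfl | hx'
    · rcases List.mem_cons.1 hy with rfl | hy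
      · omega
      · exact Or.inl ⟨y, ⟨hy, (beq_iff _ _).2 hb⟩, rfl⟩
    · rcases List.mem_cons.1 hy with rfl | hy
      · rcases h1 x hx' with h | h <;> omega
      · exact Or.inr (ih h2 hx' hy)

def BitOK (blk : Nat → Nat) (U : List Nat) (p : Nat → ℤ) (Ps : List (Nat × Nat)) (j : Nat) : Prop :=
  ∀ x ∈ U, ∀ y ∈ U, x < y → blk x = blk y → (lookP (16 * x + y) Ps).testBit j = decide (p x < p y)

theorem exists_bit (blk : Nat → Nat) (U : List Nat) (p : Nat → ℤ)
    (hord : ordB blk U = true) (hnd : nodupB (atomsOf blk U) = true) (h16 : ∀ e ∈ U, e < 16) :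
    ∃ j < 2 ^ (atomsOf blk U).length, BitOK blk U p (pats (atomsOf blk U)) j := by
  obtain ⟨j, hj, h⟩ := pats_spec (atomsOf blk U) ((nodupB_iff _).1 hnd)
    (fun k => decide (p (k / 16) < p (k % 16)))
  refine ⟨j, hj, fun x hx y hy hxy hb => ?_⟩
  rw [h _ (mem_atoms blk U ((ordB_iff _ _).1 hord) x y hx hy hxy hb)]
  have := h16 y hy
  rw [show (16 * x + y) / 16 = x by omega, show (16 * x + y) % 16 = y by omega]

theorem foldr_or (l : List Nat) (j : Nat)
    (h : (l.foldr (fun a b => a ||| b) 0).testBit j = true) : ∃ a ∈ l, a.testBit j = true := by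
  induction l with
  | nil => simp at h
  | cons a t ih =>
    rw [List.foldr_cons, Nat.testBit_or, Bool.or_eq_true] at h
    rcases h with h | h
    · exact ⟨a, by simp, h⟩
    · obtain ⟨b, hb, h⟩ := ih h
      exact ⟨b, by simp [hb], h⟩

theorem ntB_spec (full : Nat) (blk : Nat → Nat) (U : List Nat) (p : Nat → ℤ) (Ps) (j : Nat)
    (hf : full.testBit j = true) (hb : BitOK blk U p Ps j)
    (hinj : ∀ x ∈ U, ∀ y ∈ U, x ≠ y → p x ≠ p y)
    : (ntB full blk Ps U).testBit j = false := by
  by_contra hcon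
  rw [Bool.not_eq_false] at hcon
  obtain ⟨a, ha, h⟩ := foldr_or _ _ hcon
  simp only [List.mem_flatMap, List.mem_map] at ha
  obtain ⟨x, hx, y, hy, z, hz, rfl⟩ := ha
  by_cases h1 : y ≤ x
  · simp [(Iff.of_eq Nat.ble_eq).2 h1] at h
  by_cases h2 : z ≤ y
  · simp [(Iff.of_eq Nat.ble_eq).2 h2] at h
  have e1 : Nat.ble y x = false := by rw [← Bool.not_eq_true, Nat.ble_eq]; exact h1
  have e2 : Nat.ble z y = false := by rw [← Bool.not_eq_true, Nat.ble_eq]; exact h2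
  rw [e1, e2, cond_false, cond_false] at h
  by_cases h3 : blk x = blk y
  · rw [(beq_iff _ _).2 h3, cond_true] at h
    by_cases h4 : blk y = blk z
    · rw [(beq_iff _ _).2 h4, cond_true] at h
      have b1 := hb x hx y hy (by omega) h3
      have b2 := hb y hy z hz (by omega) h4
      have b3 := hb x hx z hz (by omega) (h3.trans h4)
      simp only [Nat.testBit_or, Nat.testBit_and, Nat.testBit_xor, b1, b2, b3, hf] at h
      have i1 := hinj x hx y hy (by omega)
      have i2 := hinj y hy z hz (by omega)
      have i3 := hinj x hx z hz (by omega)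
      by_cases k1 : p x < p y <;> by_cases k2 : p y < p z <;> by_cases k3 : p x < p z <;>
        simp [k1, k2, k3] at h <;> omega
    · have e : Nat.beq (blk y) (blk z) = false := by rw [← Bool.not_eq_true, beq_iff]; exact h4
      simp [e] at h
  · have e : Nat.beq (blk x) (blk y) = false := by rw [← Bool.not_eq_true, beq_iff]; exact h3
    simp [e] at h

theorem exactTT_spec (full : Nat) (blk : Nat → Nat) (U : List Nat) (p : Nat → ℤ) (Ps) (j : Nat)
    (hf : full.testBit j = true) (hb : BitOK blk U p Ps j)
    (hinj : ∀ x ∈ U, ∀ y ∈ U, x ≠ y → p x ≠ p y)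
    (hblk : ∀ x ∈ U, ∀ y ∈ U, blk x < blk y → p x < p y) (l : List Nat)
    (hl : ∀ e ∈ l, e ∈ U) (hnd : l.Nodup) (h : (exactTT full blk Ps l).testBit j = true) :
    l.Pairwise fun a b => p a < p b := by
  have : IsTrans Nat (fun a b => p a < p b) := ⟨fun _ _ _ h h' => lt_trans h h'⟩
  rw [← List.isChain_iff_pairwise]
  induction l with
  | nil => simp
  | cons x t ih =>
    cases t with
    | nil => simp
    | cons y t =>
      rw [exactTT, Nat.testBit_and, Bool.and_eq_true] at h
      refine List.isChain_cons_cons.2 ⟨?_, ih (fun e he => hl e (by simp [he]))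
        (List.nodup_cons.1 hnd).2 h.2⟩
      have h := h.1
      have hx := hl x (by simp)
      have hy := hl y (by simp)
      have hne : x ≠ y := by rintro rfl; simp at hnd
      have hp := hinj x hx y hy hne
      by_cases h3 : blk x = blk y
      · rw [(beq_iff _ _).2 h3, cond_true] at h
        by_cases h1 : x ≤ y
        · rw [(Iff.of_eq Nat.ble_eq).2 h1, cond_true, hb x hx y hy (by omega) h3] at h
          simpa using h
        · have e1 : Nat.ble x y = false := by rw [← Bool.not_eq_true, Nat.ble_eq]; exact h1
          rw [e1, cond_false, Nat.testBit_xor, hb y hy x hx (by omega) h3.symm, hf] at h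
          simp at h
          omega
      · have e : Nat.beq (blk x) (blk y) = false := by rw [← Bool.not_eq_true, beq_iff]; exact h3
        rw [e, cond_false] at h
        by_cases h1 : blk x ≤ blk y
        · exact hblk x hx y hy (by omega)
        · have e1 : Nat.ble (blk x) (blk y) = false := by
            rw [← Bool.not_eq_true, Nat.ble_eq]; exact h1
          simp [e1] at h

theorem tab_spec (full : Nat) (blk : Nat → Nat) (U : List Nat) (p : Nat → ℤ) (Ps) (j : Nat)
    (hf : full.testBit j = true) (hb : BitOK blk U p Ps j)
    (hord : ordB blk U = true)
    (hinj : ∀ x ∈ U, ∀ y ∈ U, x ≠ y → p x ≠ p y)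
    (hblk : ∀ x ∈ U, ∀ y ∈ U, blk x < blk y → p x < p y) (cs : List Nat) (c : List Nat → Bool)
    (h : (sortTT full blk Ps (U.filter fun e => memB e cs)
      fun l => bif c l then full else 0).testBit j = true) :
    ∃ l : List Nat, l.Perm (U.filter fun e => memB e cs) ∧ (l.Pairwise fun a b => p a < p b) ∧
      c l = true := by
  have hpw : U.Pairwise (RelJ blk Ps p j) := by
    refine List.Pairwise.imp_of_mem ?_ ((ordB_iff _ _).1 hord)
    intro x y hx hy hxy
    refine ⟨hinj x hx y hy ?_, fun he => hb x hx y hy ?_ he, fun hne => hblk x hx y hy ?_⟩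
    · rintro rfl; omega
    · omega
    · omega
  obtain ⟨l, h1, h2, h3⟩ := sortTT_spec full blk Ps p j hf _
    (fun l => bif c l then full else 0) (hpw.sublist List.filter_sublist)
  refine ⟨l, h1, h2, ?_⟩
  rw [h3] at h
  cases hc : c l
  · simp [hc] at h
  · rfl

/-- alternating sum, sign `-` first when `s = false` -/
def altS (p : Nat → ℤ) : Bool → List Nat → ℤ
  | _, [] => 0
  | s, x :: t => (bif s then p x else - p x) + altS p (!s) t

def alt (p : Nat → ℤ) (l : List Nat) : ℤ := altS p false l

def Ineq (U : List Nat) (p1 p2 : Nat → ℤ) (s1 s2 : Nat → Nat) : Prop :=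
  ∀ (l1 l2 : List Nat) (ga : List (Nat × Nat)), l1.Perm l2 → (∀ e ∈ l1, e ∈ U) →
    (l1.Pairwise fun a b => p1 a < p1 b) → (l2.Pairwise fun a b => p2 a < p2 b) →
    (∀ q ∈ pairsOf l1, s1 q.1 = s1 q.2) → (∀ q ∈ pairsOf l2, s2 q.1 = s2 q.2) →
    prB ga (pairsOf l2) = true → trB l1 ga = true → alt p2 l2 < alt p1 l1

def dotV : List Int → List Int → Int
  | a :: s, b :: t => a * b + dotV s t
  | _, _ => 0

theorem dot_svec (o : List Nat) (p : Nat → ℤ) (s : Bool) (l : List Nat) :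
    dotV (svec o s l) (l.map p) = altS p s (l.filter fun e => memB e o) := by
  induction l generalizing s with
  | nil => rfl
  | cons x t ih =>
    cases hm : memB x o
    · simp [svec, hm, dotV, ih]
    · cases s <;> simp [svec, hm, dotV, ih, altS]

theorem svec_len (o : List Nat) (s : Bool) (l : List Nat) : (svec o s l).length = l.length := by
  induction l generalizing s with
  | nil => rfl
  | cons x t ih => cases hm : memB x o <;> simp [svec, hm, ih]

theorem dot_addV (c : ℤ) (u v w : List Int) (h1 : u.length = v.length) :
    dotV (addV c u v) w = c * dotV u w + dotV v w := by
  induction u generalizing v w with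
  | nil =>
    cases v with
    | nil => simp [addV, dotV]
    | cons b t => simp at h1
  | cons a s ih =>
    cases v with
    | nil => simp at h1
    | cons b t =>
      cases w with
      | nil => simp [addV, dotV]
      | cons d r =>
        simp only [addV, dotV]
        rw [ih t r (by simpa using h1)]
        ring

theorem addV_len (c : ℤ) (u v : List Int) (h1 : u.length = v.length) :
    (addV c u v).length = v.length := by
  induction u generalizing v with
  | nil =>
    cases v with
    | nil => simp [addV]
    | cons b t => simp at h1
  | cons a s ih =>
    cases v with
    | nil => simp at h1
    | cons b t => simp [addV, ih t (by simpa using h1)]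

theorem dot_sumV (c : ℤ) (l : List Nat) (p : Nat → ℤ) (D : List Obj) (acc : List Int)
    (h : acc.length = l.length) :
    dotV (sumV c l D acc) (l.map p) =
      c * (D.map fun o => alt p (l.filter fun e => memB e o.cs)).sum + dotV acc (l.map p) ∧
      (sumV c l D acc).length = l.length := by
  induction D generalizing acc with
  | nil => simp [sumV, h]
  | cons o t ih =>
    have hl : (svec o.cs false l).length = acc.length := by rw [svec_len, h]
    obtain ⟨h1, h2⟩ := ih (addV c (svec o.cs false l) acc) (by rw [addV_len _ _ _ hl, h])
    refine ⟨?_, h2⟩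
    rw [sumV, h1, dot_addV _ _ _ _ hl, dot_svec]
    simp only [List.map_cons, List.sum_cons, alt]
    ring

theorem dot_zero (l : List Nat) (p : Nat → ℤ) : dotV (l.map fun _ => 0) (l.map p) = 0 := by
  induction l with
  | nil => rfl
  | cons a t ih => rw [List.map_cons, List.map_cons, dotV, ih]; simp

theorem preB_spec (acc : ℤ) (v : List Int) (l : List Nat) (p : Nat → ℤ) (hacc : 0 ≤ acc) (q : ℤ)
    (hq : ∀ e ∈ l, q ≤ p e) (hlen : v.length = l.length) (hs : l.Pairwise fun a b => p a < p b)
    (h : preB acc v = true) : acc * q + dotV v (l.map p) ≤ 0 := by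
  induction v generalizing acc l q with
  | nil =>
    simp only [preB, decide_eq_true_eq] at h
    simp [h, dotV]
  | cons a t ih =>
    cases l with
    | nil => simp at hlen
    | cons x l =>
      obtain ⟨hx, hs'⟩ := List.pairwise_cons.1 hs
      simp only [preB, Bool.and_eq_true, decide_eq_true_eq] at h
      have := ih (acc + a) l h.1 (p x) (fun e he => (hx e he).le) (by simpa using hlen) hs' h.2
      simp only [List.map_cons, dotV]
      have h3 := mul_le_mul_of_nonneg_left (hq x (by simp)) hacc
      nlinarith

theorem dot_nil (l : List Int) : dotV [] l = 0 := by cases l <;> rfl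

theorem pt_seg (g : List (Nat × Nat)) (s : Nat → Nat) (h : ∀ q ∈ g, s q.1 = s q.2) (e : Nat) :
    s (pt g e) = s e := by
  induction g with
  | nil => rfl
  | cons q t ih =>
    obtain ⟨a, b⟩ := q
    rw [pt_cons]
    have := h (a, b) (by simp)
    split_ifs with h1 h2
    · rw [h1]; exact this.symm
    · rw [h2]; exact this
    · exact ih fun q hq => h q (by simp [hq])

theorem permB_spec (l U : List Nat) (h : permB l U = true) : l.Perm U ∧ l.Nodup := by
  simp only [permB, Bool.and_eq_true, beq_iff, nodupB_iff, List.all_eq_true, memB_iff] at h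
  obtain ⟨⟨h1, h2⟩, h3⟩ := h
  exact ⟨(List.subperm_of_subset h2 h3).perm_of_length_le h1.ge, h2⟩

theorem goodB_iff (g h : List (Nat × Nat)) (l : List Nat) :
    goodB g h l = true ↔ prB g (pairsOf l) = true ∧ trB l h = true := by
  rw [goodB, forceP_eq]
  cases prB g (pairsOf l) <;> simp

theorem use1 (U : List Nat) (p1 p2 : Nat → ℤ) (o : Obj) (ho : objB o = true)
    (H : Ineq U p1 p2 (· / 4) (· % 4)) (l1 l2 : List Nat) (hp : l1.Perm l2) (hU : ∀ e ∈ l1, e ∈ U)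
    (hs1 : l1.Pairwise fun a b => p1 a < p1 b) (hs2 : l2.Pairwise fun a b => p2 a < p2 b)
    (h1 : goodB o.g1 o.g2 l1 = true) (h2 : prB o.g2 (pairsOf l2) = true) :
    alt p2 l2 < alt p1 l1 := by
  rw [goodB_iff] at h1
  simp only [objB, Bool.and_eq_true, List.all_eq_true, beq_iff] at ho
  refine H l1 l2 o.g2 hp hU hs1 hs2 ?_ ?_ h2 h1.2
  · intro q hq
    have := pt_seg o.g1 (· / 4) (fun q hq => ho.1 q hq) q.1
    rw [((prB_iff _ _).1 h1.1 q hq).1] at this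
    exact this.symm
  · intro q hq
    have := pt_seg o.g2 (· % 4) (fun q hq => ho.2 q hq) q.1
    rw [((prB_iff _ _).1 h2 q hq).1] at this
    exact this.symm

theorem use2 (U : List Nat) (p1 p2 : Nat → ℤ) (o : Obj) (ho : objB o = true)
    (H : Ineq U p2 p1 (· % 4) (· / 4)) (l1 l2 : List Nat) (hp : l1.Perm l2) (hU : ∀ e ∈ l1, e ∈ U)
    (hs1 : l1.Pairwise fun a b => p1 a < p1 b) (hs2 : l2.Pairwise fun a b => p2 a < p2 b)
    (h1 : goodB o.g2 o.g1 l2 = true) (h2 : prB o.g1 (pairsOf l1) = true) :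
    alt p1 l1 < alt p2 l2 := by
  rw [goodB_iff] at h1
  simp only [objB, Bool.and_eq_true, List.all_eq_true, beq_iff] at ho
  refine H l2 l1 o.g1 hp.symm (fun e he => hU e (hp.mem_iff.2 he)) hs2 hs1 ?_ ?_ h2 h1.2
  · intro q hq
    have := pt_seg o.g2 (· % 4) (fun q hq => ho.2 q hq) q.1
    rw [((prB_iff _ _).1 h1.1 q hq).1] at this
    exact this.symm
  · intro q hq
    have := pt_seg o.g1 (· / 4) (fun q hq => ho.1 q hq) q.1
    rw [((prB_iff _ _).1 h2 q hq).1] at this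
    exact this.symm

theorem pick_mem (objs : List Obj) (l : List Nat) : ∀ o ∈ pick objs l, o ∈ objs := by
  induction l with
  | nil => simp [pick]
  | cons i t ih =>
    intro o ho
    simp only [pick, List.mem_append] at ho
    rcases ho with ho | ho
    · exact List.mem_of_mem_drop (List.mem_of_mem_take ho)
    · exact ih o ho

theorem sum_lt_aux (D : List Obj) (f g : Obj → ℤ) (h : ∀ o ∈ D, f o < g o) :
    (D.map f).sum ≤ (D.map g).sum ∧ (D ≠ [] → (D.map f).sum < (D.map g).sum) := by
  induction D with
  | nil => simp
  | cons o t ih =>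
    have h1 := h o (by simp)
    have h2 := (ih fun o ho => h o (by simp [ho])).1
    simp only [List.map_cons, List.sum_cons]
    exact ⟨by omega, fun _ => by omega⟩

theorem exc_false (U : List Nat) (p1 p2 : Nat → ℤ) (objs : List Obj) (hob : ∀ o ∈ objs, objB o = true)
    (H1 : Ineq U p1 p2 (· / 4) (· % 4)) (H2 : Ineq U p2 p1 (· % 4) (· / 4))
    (x : Exc) (hx : excB objs x = true) (hp1 : x.1.Perm U) (hp2 : x.2.1.Perm U)
    (hs1 : x.1.Pairwise fun a b => p1 a < p1 b) (hs2 : x.2.1.Pairwise fun a b => p2 a < p2 b) :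
    False := by
  obtain ⟨l1, l2, d1, d2⟩ := x
  simp only [excB, Bool.and_eq_true, List.all_eq_true] at hx
  obtain ⟨⟨⟨⟨hd1, hd2⟩, hne⟩, hv1⟩, hv2⟩ := hx
  simp only at hp1 hp2 hs1 hs2
  set D1 := pick objs d1
  set D2 := pick objs d2
  have hpm : ∀ o : Obj, (l1.filter fun e => memB e o.cs).Perm (l2.filter fun e => memB e o.cs) :=
    fun o => (hp1.trans hp2.symm).filter _
  have hsub : ∀ o : Obj, ∀ e ∈ l1.filter fun e => memB e o.cs, e ∈ U :=
    fun o e he => hp1.mem_iff.1 (List.mem_of_mem_filter he)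
  have a1 := sum_lt_aux D1 (fun o => alt p2 (l2.filter fun e => memB e o.cs))
    (fun o => alt p1 (l1.filter fun e => memB e o.cs)) (fun o ho => by
      have h := hd1 o ho
      rw [d1B, Bool.and_eq_true] at h
      exact use1 U p1 p2 o (hob o (pick_mem _ _ o ho)) H1 _ _ (hpm o) (hsub o)
        (hs1.sublist List.filter_sublist) (hs2.sublist List.filter_sublist) h.1 h.2)
  have a2 := sum_lt_aux D2 (fun o => alt p1 (l1.filter fun e => memB e o.cs))
    (fun o => alt p2 (l2.filter fun e => memB e o.cs)) (fun o ho => by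
      have h := hd2 o ho
      rw [d2B, Bool.and_eq_true] at h
      exact use2 U p1 p2 o (hob o (pick_mem _ _ o ho)) H2 _ _ (hpm o) (hsub o)
        (hs1.sublist List.filter_sublist) (hs2.sublist List.filter_sublist) h.1 h.2)
  have a1' := a1.2 (by intro h; rw [h] at hne; simp at hne)
  have b1 := dot_sumV 1 l1 p1 D1 (l1.map fun _ => 0) (by simp)
  have b1' := dot_sumV (-1) l1 p1 D2 _ b1.2
  have b2 := dot_sumV (-1) l2 p2 D1 (l2.map fun _ => 0) (by simp)
  have b2' := dot_sumV 1 l2 p2 D2 _ b2.2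
  have low : ∀ (l : List Nat) (p : Nat → ℤ), ∃ q : ℤ, ∀ e ∈ l, q ≤ p e := by
    intro l p
    induction l with
    | nil => exact ⟨0, by simp⟩
    | cons a t ih =>
      obtain ⟨q, hq⟩ := ih
      exact ⟨min q (p a), by
        intro e he
        rcases List.mem_cons.1 he with rfl | he
        · exact min_le_right _ _
        · exact (min_le_left _ _).trans (hq e he)⟩
  obtain ⟨q1, hq1⟩ := low l1 p1
  obtain ⟨q2, hq2⟩ := low l2 p2
  have c1 := preB_spec 0 _ l1 p1 le_rfl q1 hq1 b1'.2 hs1 hv1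
  have c2 := preB_spec 0 _ l2 p2 le_rfl q2 hq2 b2'.2 hs2 hv2
  rw [b1'.1, b1.1, dot_zero] at c1
  rw [b2'.1, b2.1, dot_zero] at c2
  have a22 := a2.1
  linarith

theorem zip_tab (f1 f2 : Nat) (blk1 blk2 : Nat → Nat) (P1 P2 : List (Nat × Nat)) (U1 U2 : List Nat)
    (objs : List Obj) (q : Nat × Nat)
    (hq : q ∈ zipL (tabTT true f1 blk1 P1 U1 objs) (tabTT false f2 blk2 P2 U2 objs)) :
    ∃ o ∈ objs, q.1 = (sortTT f1 blk1 P1 (U1.filter fun e => memB e o.cs)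
      fun l => bif goodB o.g1 o.g2 l then f1 else 0) ∧
      q.2 = (sortTT f2 blk2 P2 (U2.filter fun e => memB e o.cs)
      fun l => bif goodB o.g2 o.g1 l then f2 else 0) := by
  induction objs with
  | nil => simp [tabTT, zipL] at hq
  | cons o t ih =>
    simp only [tabTT, zipL, List.mem_cons, forceL_eq] at hq
    rcases hq with rfl | hq
    · exact ⟨o, by simp, rfl, rfl⟩
    · obtain ⟨o', ho', h⟩ := ih hq
      exact ⟨o', by simp [ho'], h⟩

theorem exc_tab (f1 f2 : Nat) (blk1 blk2 : Nat → Nat) (P1 P2 : List (Nat × Nat))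
    (exc : List Exc) (q : Nat × Nat)
    (hq : q ∈ excTab f1 f2 blk1 blk2 P1 P2 exc) :
    ∃ x ∈ exc, q.1 = exactTT f1 blk1 P1 x.1 ∧ q.2 = exactTT f2 blk2 P2 x.2.1 := by
  induction exc with
  | nil => simp [excTab] at hq
  | cons o t ih =>
    simp only [excTab, List.mem_cons] at hq
    rcases hq with rfl | hq
    · exact ⟨o, by simp, rfl, rfl⟩
    · obtain ⟨o', ho', h⟩ := ih hq
      exact ⟨o', by simp [ho'], h⟩

theorem sound (objs : List Obj) (U1 : List Nat) (blk1 : Nat → Nat) (rs : List RD)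
    (hchk : mainB objs U1 blk1 rs = true) (r : RD) (hr : r ∈ rs) (h16 : ∀ e ∈ U1, e < 16)
    (p1 p2 : Nat → ℤ)
    (hinj1 : ∀ x ∈ U1, ∀ y ∈ U1, x ≠ y → p1 x ≠ p1 y)
    (hinj2 : ∀ x ∈ U1, ∀ y ∈ U1, x ≠ y → p2 x ≠ p2 y)
    (hblk1 : ∀ x ∈ U1, ∀ y ∈ U1, blk1 x < blk1 y → p1 x < p1 y)
    (hblk2 : ∀ x ∈ U1, ∀ y ∈ U1, blkR r.w x < blkR r.w y → p2 x < p2 y)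
    (H1 : Ineq U1 p1 p2 (· / 4) (· % 4)) (H2 : Ineq U1 p2 p1 (· % 4) (· / 4)) : False := by
  rw [mainB, forceO_eq] at hchk
  simp only [forceN_eq, forceP_eq, forceL_eq, Bool.and_eq_true, List.all_eq_true] at hchk
  obtain ⟨⟨⟨hob, hord1⟩, hnd1⟩, hall⟩ := hchk
  have hrr := hall r hr
  simp only [rightB, forceN_eq, forceP_eq, forceL_eq, Bool.and_eq_true, List.all_eq_true] at hrr
  obtain ⟨⟨⟨⟨⟨hexc, hperm⟩, hperm'⟩, hord2⟩, hnd2⟩, hcov⟩ := hrr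
  obtain ⟨hPU, -⟩ := permB_spec _ _ hperm
  have hm : ∀ e, e ∈ r.U → e ∈ U1 := fun e he => hPU.mem_iff.1 he
  obtain ⟨i, hi, hbi⟩ := exists_bit blk1 U1 p1 hord1 hnd1 h16
  obtain ⟨j, hj, hbj⟩ := exists_bit (blkR r.w) r.U p2 hord2 hnd2 (fun e he => h16 e (hm e he))
  set f1 := 2 ^ 2 ^ (atomsOf blk1 U1).length - 1 with hf1
  set f2 := 2 ^ 2 ^ (atomsOf (blkR r.w) r.U).length - 1 with hf2
  have hfi : f1.testBit i = true := by rw [hf1, Nat.testBit_two_pow_sub_one]; simpa using hi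
  have hfj : f2.testBit j = true := by rw [hf2, Nat.testBit_two_pow_sub_one]; simpa using hj
  have hinj2' : ∀ x ∈ r.U, ∀ y ∈ r.U, x ≠ y → p2 x ≠ p2 y :=
    fun x hx y hy => hinj2 x (hm x hx) y (hm y hy)
  have hblk2' : ∀ x ∈ r.U, ∀ y ∈ r.U, blkR r.w x < blkR r.w y → p2 x < p2 y :=
    fun x hx y hy => hblk2 x (hm x hx) y (hm y hy)
  rcases cover_spec f2 j hfj _ _ _ hcov i hi with h | ⟨q, hq, hqi, hqj⟩
  · rw [ntB_spec f2 (blkR r.w) r.U p2 _ j hfj hbj hinj2'] at h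
    simp at h
  · rw [List.mem_append, List.mem_cons] at hq
    rcases hq with (rfl | hq) | hq
    · rw [ntB_spec f1 blk1 U1 p1 _ i hfi hbi hinj1] at hqi
      simp at hqi
    · obtain ⟨x, hx, e1, e2⟩ := exc_tab _ _ _ _ _ _ _ _ hq
      obtain ⟨⟨hx1, hx2⟩, hx3⟩ := hexc x hx
      obtain ⟨hx2, hx2n⟩ := permB_spec _ _ hx2
      obtain ⟨hx3, hx3n⟩ := permB_spec _ _ hx3
      rw [e1] at hqi
      rw [e2] at hqj
      refine exc_false U1 p1 p2 objs hob H1 H2 x hx1 hx2 hx3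
        (exactTT_spec f1 blk1 U1 p1 _ i hfi hbi hinj1 hblk1 _ (fun e he => hx2.mem_iff.1 he) hx2n hqi)
        (exactTT_spec f2 (blkR r.w) r.U p2 _ j hfj hbj hinj2' hblk2' _
          (fun e he => hPU.mem_iff.2 (hx3.mem_iff.1 he)) hx3n hqj)
    · obtain ⟨o, ho, e1, e2⟩ := zip_tab _ _ _ _ _ _ _ _ _ _ hq
      rw [e1] at hqi
      rw [e2] at hqj
      obtain ⟨l1, hl1, hs1, hg1⟩ := tab_spec f1 blk1 U1 p1 _ i hfi hbi hord1 hinj1 hblk1 o.cs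
        (goodB o.g1 o.g2) hqi
      obtain ⟨l2, hl2, hs2, hg2⟩ := tab_spec f2 (blkR r.w) r.U p2 _ j hfj hbj hord2 hinj2' hblk2'
        o.cs (goodB o.g2 o.g1) hqj
      have hp : l1.Perm l2 := hl1.trans ((hPU.symm.filter _).trans hl2.symm)
      have hsub : ∀ e ∈ l1, e ∈ U1 := fun e he => List.mem_of_mem_filter (hl1.mem_iff.1 he)
      have a := use1 U1 p1 p2 o (hob o ho) H1 l1 l2 hp hsub hs1 hs2 hg1 ((goodB_iff _ _ _).1 hg2).1
      have b := use2 U1 p1 p2 o (hob o ho) H2 l1 l2 hp hsub hs1 hs2 hg2 ((goodB_iff _ _ _).1 hg1).1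
      omega

end SepT

namespace SepT

/-- `PT G x L y`: `x :: L` is a walk ending in `y`. -/
def PT {V : Type} (G : SimpleGraph V) : V → List V → V → Prop
  | x, [], y => x = y
  | x, a :: L, y => G.Adj x a ∧ PT G a L y

theorem PT_append {V : Type} {G : SimpleGraph V} {x y z : V} {L M : List V}
    (h1 : PT G x L y) (h2 : PT G y M z) : PT G x (L ++ M) z := by
  induction L generalizing x with
  | nil => cases h1; exact h2
  | cons a L ih => exact ⟨h1.1, ih h1.2⟩

theorem PT_split {V : Type} {G : SimpleGraph V} {x z : V} {L M : List V}
    (h : PT G x (L ++ M) z) : ∃ y, PT G x L y ∧ PT G y M z := by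
  induction L generalizing x with
  | nil => exact ⟨x, rfl, h⟩
  | cons a L ih => obtain ⟨y, h1, h2⟩ := ih h.2; exact ⟨y, ⟨h.1, h1⟩, h2⟩

theorem PT_last {V : Type} {G : SimpleGraph V} {x y z : V} {L : List V}
    (h : PT G x (L ++ [z]) y) : y = z := by
  obtain ⟨w, _, h2⟩ := PT_split h
  exact h2.2.symm

theorem PT_mem {V : Type} {G : SimpleGraph V} {x y : V} {L : List V}
    (h : PT G x L y) : y ∈ x :: L := by
  induction L generalizing x with
  | nil => cases h; simp
  | cons a L ih => exact List.mem_cons_of_mem _ (ih h.2)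

theorem PT_reverse {V : Type} {G : SimpleGraph V} {x y : V} {L : List V}
    (h : PT G x L y) : ∃ M, (x :: L).reverse = y :: M ∧ PT G y M x := by
  induction L generalizing x with
  | nil => cases h; exact ⟨[], rfl, rfl⟩
  | cons a L ih =>
    obtain ⟨M, h1, h2⟩ := ih h.2
    refine ⟨M ++ [x], ?_, PT_append h2 ⟨h.1.symm, rfl⟩⟩
    rw [List.reverse_cons, h1]; rfl

theorem PT_walk {V : Type} {G : SimpleGraph V} {x y : V} {L : List V}
    (h : PT G x L y) : ∃ w : G.Walk x y, w.support = x :: L := by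
  induction L generalizing x with
  | nil => cases h; exact ⟨Walk.nil, rfl⟩
  | cons a L ih =>
    obtain ⟨w, hw⟩ := ih h.2
    exact ⟨Walk.cons h.1 w, by simp [hw]⟩

theorem walk_PT {V : Type} {G : SimpleGraph V} {x y : V} (w : G.Walk x y) :
    ∃ L, w.support = x :: L ∧ PT G x L y := by
  induction w with
  | nil => exact ⟨[], rfl, rfl⟩
  | cons h w ih =>
    obtain ⟨L, h1, h2⟩ := ih
    exact ⟨_ :: L, by simp [h1], h, h2⟩

theorem PT_cycle {V : Type} {G : SimpleGraph V} {x : V} {L : List V}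
    (h : PT G x L x) (hn : L.Nodup) (h3 : 3 ≤ L.length) :
    ∃ w : G.Walk x x, w.IsCycle ∧ w.length = L.length := by
  cases L with
  | nil => simp at h3
  | cons a L =>
    obtain ⟨w, hw⟩ := PT_walk h.2
    have hp : w.IsPath := by rw [Walk.isPath_def, hw]; exact hn
    have hl : w.length = L.length := by
      have := w.length_support; rw [hw] at this; simpa using this.symm
    refine ⟨Walk.cons h.1 w, ?_, by simp [hl]⟩
    rw [Walk.cons_isCycle_iff]
    refine ⟨hp, fun he => ?_⟩
    have := hp.length_eq_one_of_mem_edges (by rwa [Sym2.eq_swap] at he)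
    simp at h3; omega

def itl (nx : Nat → Nat) : Nat → Nat → List Nat
  | 0, _ => []
  | m + 1, e => e :: itl nx m (nx e)

theorem itl_map (nx : Nat → Nat) (m e : Nat) : (itl nx m e).map nx = itl nx m (nx e) := by
  induction m generalizing e with
  | zero => rfl
  | succ m ih => simp [itl, ih]

theorem itl_snoc (nx : Nat → Nat) (m e : Nat) : e :: itl nx m (nx e) = itl nx m e ++ [nx^[m] e] := by
  induction m generalizing e with
  | zero => rfl
  | succ m ih =>
    have := ih (nx e)
    simp only [itl, List.cons_append, Function.iterate_succ, Function.comp]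
    rw [← this]

theorem itl_len (nx : Nat → Nat) (m e : Nat) : (itl nx m e).length = m := by
  induction m generalizing e with
  | zero => rfl
  | succ m ih => simp [itl, ih]

theorem itl_perm (nx : Nat → Nat) (m e : Nat) (h : nx^[m] e = e) :
    ((itl nx m e).map nx).Perm (itl nx m e) := by
  have := itl_snoc nx m e
  rw [h] at this
  rw [itl_map]
  have h2 : (itl nx m e ++ [e]).Perm (e :: itl nx m e) := List.perm_append_singleton _ _
  rw [← this] at h2
  exact (List.perm_cons e).1 h2

theorem itl_PT {V : Type} {G : SimpleGraph V} (nx : Nat → Nat) (m e : Nat) (w : Nat → V)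
    (B : Nat → List V) (h : ∀ f ∈ itl nx m e, PT G (w f) (B f) (w (nx f))) :
    PT G (w e) ((itl nx m e).flatMap B) (w (nx^[m] e)) := by
  induction m generalizing e with
  | zero => rfl
  | succ m ih =>
    simp only [itl, List.flatMap_cons, Function.iterate_succ, Function.comp]
    exact PT_append (h e (by simp [itl])) (ih (nx e) fun f hf => h f (by simp [itl, hf]))

theorem trL_eq (al ga) (m e : Nat) : trL al ga m e = e ::
    (itl (fun e => pt ga (pt al e)) m e).flatMap fun e => [pt al e, pt ga (pt al e)] := by
  induction m generalizing e with
  | zero => rfl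
  | succ m ih => simp [trL, forceN_eq, itl, ih]

theorem lastB_trL (al ga) (m e h : Nat) (hl : lastB h (trL al ga m e) = true) :
    (fun e => pt ga (pt al e))^[m] e = h := by
  induction m generalizing e with
  | zero => simpa [trL, lastB, beq_iff] using hl
  | succ m ih =>
    rw [Function.iterate_succ, Function.comp]
    apply ih
    have : trL al ga m (pt ga (pt al e)) ≠ [] := by rw [trL_eq]; simp
    simp only [trL, forceN_eq] at hl
    revert hl this
    cases trL al ga m (pt ga (pt al e)) with
    | nil => simp
    | cons a t => intro hl _; exact hl

theorem trB_spec (h : Nat) (t : List Nat) (ga) (H : trB (h :: t) ga = true) :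
    ∃ m, t.length + 1 = 2 * m ∧ (fun e => pt ga (pt (pairsOf (t ++ [h])) e))^[m] h = h ∧
    ((itl (fun e => pt ga (pt (pairsOf (t ++ [h])) e)) m h).flatMap
      fun e => [pt (pairsOf (t ++ [h])) e, pt ga (pt (pairsOf (t ++ [h])) e)]).Nodup := by
  simp only [trB, forceP_eq, forceL_eq] at H
  rw [Bool.cond_eq_ite, Bool.cond_eq_ite] at H
  split_ifs at H with h1 h2
  refine ⟨(h :: t).length / 2, ?_, lastB_trL _ _ _ _ _ h2, ?_⟩
  · rw [beq_iff] at h1; simp at h1 ⊢; omega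
  · rw [nodupB_iff, trL_eq] at H; exact H

theorem altS_not (p : Nat → ℤ) (s : Bool) (l : List Nat) : altS p (!s) l = - altS p s l := by
  induction l generalizing s with
  | nil => simp [altS]
  | cons a t ih => simp only [altS]; rw [ih (!s)]; cases s <;> simp <;> ring

theorem altS_snoc (p : Nat → ℤ) (h : Nat) : ∀ (t : List Nat) (m : Nat), t.length + 1 = 2 * m →
    altS p false (t ++ [h]) = altS p false t + p h
  | [], m, hm => by simp at hm; omega
  | [a], _, _ => by simp [altS]
  | a :: b :: t, m, hm => by
    have := altS_snoc p h t (m - 1) (by simp at hm; omega)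
    simp only [List.cons_append, altS, Bool.not_false, Bool.not_true, this, cond_false, cond_true]
    ring

theorem altS_congr (p q : Nat → ℤ) (s : Bool) (l : List Nat) (h : ∀ e ∈ l, p e = q e) :
    altS p s l = altS q s l := by
  induction l generalizing s with
  | nil => rfl
  | cons a t ih =>
    simp only [altS]
    rw [h a (by simp), ih _ fun e he => h e (by simp [he])]

theorem pt_pairs : ∀ (l : List Nat), l.Nodup → ∀ q ∈ pairsOf l,
    pt (pairsOf l) q.1 = q.2 ∧ pt (pairsOf l) q.2 = q.1
  | [], _, _, hq => by simp [pairsOf] at hq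
  | [a], _, _, hq => by simp [pairsOf] at hq
  | a :: b :: t, hn, q, hq => by
    have hmem : ∀ t : List Nat, ∀ q ∈ pairsOf t, q.1 ∈ t ∧ q.2 ∈ t := by
      intro t
      induction t using pairsOf.induct with
      | case1 a b t ih =>
        intro q hq
        simp only [pairsOf, List.mem_cons] at hq
        rcases hq with rfl | hq
        · simp
        · have := ih q hq; simp [this]
      | case2 t h => intro q hq; rw [pairsOf] at hq <;> simp_all
    simp only [List.nodup_cons, List.mem_cons, not_or] at hn
    simp only [pairsOf, List.mem_cons] at hq ⊢
    rw [pt_cons, pt_cons]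
    rcases hq with rfl | hq
    · have := hn.1.1
      simp
    · have h1 := hmem t q hq
      have h2 := pt_pairs t hn.2.2 q hq
      have a1 : q.1 ≠ a := by rintro rfl; exact hn.1.2 h1.1
      have a2 : q.2 ≠ a := by rintro rfl; exact hn.1.2 h1.2
      have a3 : q.1 ≠ b := by rintro rfl; exact hn.2.1 h1.1
      have a4 : q.2 ≠ b := by rintro rfl; exact hn.2.1 h1.2
      simp [a1, a2, a3, a4, h2]

/-- basic facts about a matching of consecutive points -/
structure Side (p : Nat → ℤ) (g : Nat → Nat) (l : List Nat) : Prop where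
  mem : ∀ e ∈ l, g e ∈ l
  inv : ∀ e ∈ l, g (g e) = e
  ne : ∀ e ∈ l, p (g e) ≠ p e
  inj : ∀ e ∈ l, ∀ f ∈ l, p e = p f → e = f
  b1 : ∀ e ∈ l, ∀ f ∈ l, ¬ (p e < p f ∧ p f < p (g e))
  b2 : ∀ e ∈ l, ∀ f ∈ l, ¬ (p (g e) < p f ∧ p f < p e)

theorem side : ∀ (l : List Nat) (p : Nat → ℤ) (g : Nat → Nat) (m : Nat), l.length = 2 * m →
    (l.Pairwise fun a b => p a < p b) → (∀ q ∈ pairsOf l, g q.1 = q.2 ∧ g q.2 = q.1) →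
    Side p g l ∧ (l.map fun e => |p e - p (g e)|).sum = 2 * alt p l
  | [], p, g, m, _, _, _ => ⟨by constructor <;> simp, by simp [alt, altS]⟩
  | [a], p, g, m, h, _, _ => by simp at h; omega
  | a :: b :: t, p, g, m, hm, hs, hg => by
    simp only [List.pairwise_cons, List.mem_cons, forall_eq_or_imp] at hs
    obtain ⟨S, hsum⟩ := side t p g (m - 1) (by simp at hm; omega) hs.2.2
      fun q hq => hg q (by simp [pairsOf, hq])
    have hab := hg (a, b) (by simp [pairsOf])
    simp only at hab
    obtain ⟨⟨h1, h2⟩, h3, h4⟩ := hs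
    constructor
    · constructor
      · intro e he; simp only [List.mem_cons] at he ⊢
        rcases he with rfl | rfl | he
        · simp [hab]
        · simp [hab]
        · simp [S.mem e he]
      · intro e he; simp only [List.mem_cons] at he
        rcases he with rfl | rfl | he
        · simp [hab]
        · simp [hab]
        · simp [S.inv e he]
      · intro e he; simp only [List.mem_cons] at he
        rcases he with rfl | rfl | he
        · rw [hab.1]; omega
        · rw [hab.2]; omega
        · exact S.ne e he
      · intro e he f hf hef; simp only [List.mem_cons] at he hf
        rcases he with rfl | rfl | he <;> rcases hf with rfl | rfl | hf
        · rfl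
        · omega
        · have := h2 f hf; omega
        · omega
        · rfl
        · have := h3 f hf; omega
        · have := h2 e he; omega
        · have := h3 e he; omega
        · exact S.inj e he f hf hef
      · intro e he f hf; simp only [List.mem_cons] at he hf
        rcases he with rfl | rfl | he <;> rcases hf with rfl | rfl | hf
        · omega
        · rw [hab.1]; omega
        · have := h3 f hf; rw [hab.1]; omega
        · rw [hab.2]; omega
        · omega
        · have := h3 f hf; rw [hab.2]; omega
        · have := h2 e he; omega
        · have := h3 e he; omega
        · exact S.b1 e he f hf
      · intro e he f hf; simp only [List.mem_cons] at he hf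
        rcases he with rfl | rfl | he <;> rcases hf with rfl | rfl | hf
        · omega
        · rw [hab.1]; omega
        · have := h2 f hf; rw [hab.1]; omega
        · rw [hab.2]; omega
        · omega
        · have := h3 f hf; rw [hab.2]; omega
        · have := h2 _ (S.mem e he); omega
        · have := h3 _ (S.mem e he); omega
        · exact S.b2 e he f hf
    · simp only [List.map_cons, List.sum_cons, hsum, hab]
      rw [abs_of_neg (by omega), abs_of_pos (by omega)]
      simp only [alt, altS, Bool.not_false, Bool.not_true, cond_true, cond_false]
      ring

end SepT

namespace SepT

structure Cyc {V : Type} (G : SimpleGraph V) (n : ℕ) (c : ℤ → V) : Prop where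
  per : ∀ i, c (i + n) = c i
  inj : ∀ i j, c i = c j → (n : ℤ) ∣ j - i
  adj : ∀ i, G.Adj (c i) (c (i + 1))

theorem Cyc.eq_of_lt {V : Type} {G : SimpleGraph V} {n : ℕ} {c : ℤ → V} (h : Cyc G n c)
    {i j : ℤ} (hij : c i = c j) (h1 : |j - i| < n) : i = j := by
  have := Int.eq_zero_of_abs_lt_dvd (h.inj i j hij) h1
  omega

def arcO {V : Type} (c : ℤ → V) (a b : ℤ) : List V :=
  if a < b then (List.range (b - a - 1).toNat).map fun i : ℕ => c (a + 1 + i)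
  else (List.range (a - b - 1).toNat).map fun i : ℕ => c (a - 1 - i)

theorem arc_mem {V : Type} {c : ℤ → V} {a b : ℤ} {v : V} (h : v ∈ arcO c a b) :
    ∃ i, c i = v ∧ ((a < i ∧ i < b) ∨ (b < i ∧ i < a)) := by
  unfold arcO at h
  split_ifs at h with hab
  · simp only [List.mem_map, List.mem_range] at h
    obtain ⟨i, hi, rfl⟩ := h
    exact ⟨_, rfl, by omega⟩
  · simp only [List.mem_map, List.mem_range] at h
    obtain ⟨i, hi, rfl⟩ := h
    exact ⟨_, rfl, by omega⟩

theorem arc_len {V : Type} (c : ℤ → V) {a b : ℤ} (h : a ≠ b) :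
    ((arcO c a b).length : ℤ) = |a - b| - 1 := by
  unfold arcO
  split_ifs with hab
  · rw [abs_of_neg (by omega)]; simp; omega
  · rw [abs_of_pos (by omega)]; simp; omega

theorem arc_nodup {V : Type} {G : SimpleGraph V} {n : ℕ} {c : ℤ → V} (hc : Cyc G n c) {a b : ℤ}
    (h : |a - b| ≤ n) : (arcO c a b).Nodup := by
  rw [abs_le] at h
  unfold arcO
  split_ifs with hab
  all_goals
    refine List.Nodup.map_on ?_ List.nodup_range
    intro i hi j hj hij
    have := hc.eq_of_lt hij (by simp only [List.mem_range] at hi hj; rw [abs_lt]; constructor <;> omega)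
    omega

theorem run_up {V : Type} {G : SimpleGraph V} {n : ℕ} {c : ℤ → V} (hc : Cyc G n c) (a : ℤ) (m : ℕ) :
    PT G (c a) ((List.range m).map fun i : ℕ => c (a + 1 + i)) (c (a + m)) := by
  induction m with
  | zero => simp [PT]
  | succ m ih =>
    rw [List.range_succ, List.map_append]
    refine PT_append ih ⟨?_, ?_⟩
    · have := hc.adj (a + m)
      convert this using 2; ring
    · show c _ = c _
      congr 1; push_cast; ring

theorem run_down {V : Type} {G : SimpleGraph V} {n : ℕ} {c : ℤ → V} (hc : Cyc G n c) (a : ℤ) (m : ℕ) :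
    PT G (c a) ((List.range m).map fun i : ℕ => c (a - 1 - i)) (c (a - m)) := by
  induction m with
  | zero => simp [PT]
  | succ m ih =>
    rw [List.range_succ, List.map_append]
    refine PT_append ih ⟨?_, ?_⟩
    · have := (hc.adj (a - 1 - m)).symm
      convert this using 2; ring
    · show c _ = c _
      congr 1; push_cast; ring

theorem arc_PT {V : Type} {G : SimpleGraph V} {n : ℕ} {c : ℤ → V} (hc : Cyc G n c) {a b : ℤ}
    (h : a ≠ b) : PT G (c a) (arcO c a b ++ [c b]) (c b) := by
  unfold arcO
  split_ifs with hab
  · refine PT_append (run_up hc a _) ⟨?_, rfl⟩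
    have := hc.adj (a + (b - a - 1).toNat)
    convert this using 2; omega
  · refine PT_append (run_down hc a _) ⟨?_, rfl⟩
    have := (hc.adj b).symm
    convert this using 2; omega

theorem arcs_disj {V : Type} {G : SimpleGraph V} {n : ℕ} {c : ℤ → V} (hc : Cyc G n c)
    {p : Nat → ℤ} {g : Nat → Nat} {l : List Nat} (S : Side p g l)
    (win : ∀ e ∈ l, ∀ f ∈ l, p e < p f + n) {e f : Nat} (he : e ∈ l) (hf : f ∈ l) (h1 : f ≠ e)
    (h2 : f ≠ g e) : List.Disjoint (arcO c (p e) (p (g e))) (arcO c (p f) (p (g f))) := by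
  intro v hv hv'
  obtain ⟨i, rfl, hi⟩ := arc_mem hv
  obtain ⟨j, hj, hj'⟩ := arc_mem hv'
  have e' := S.mem e he
  have f' := S.mem f hf
  have w1 := win e he f hf
  have w2 := win e he _ f'
  have w3 := win _ e' f hf
  have w4 := win _ e' _ f'
  have w5 := win f hf e he
  have w6 := win f hf _ e'
  have w7 := win _ f' e he
  have w8 := win _ f' _ e'
  have hij : j = i := hc.eq_of_lt hj (by rw [abs_lt]; constructor <;> omega)
  subst hij
  have a1 : p f ≠ p e := fun h => h1 (S.inj f hf e he h)
  have a2 : p f ≠ p (g e) := fun h => h2 (S.inj f hf _ e' h)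
  have a3 : p (g f) ≠ p e := fun h => h2 (by rw [← S.inj _ f' _ he h, S.inv f hf])
  have a4 : p (g f) ≠ p (g e) := fun h => h1 (by
    have := S.inj _ f' _ e' h
    rw [← S.inv f hf, this, S.inv e he])
  have b1 := S.b1 e he f hf
  have b2 := S.b2 e he f hf
  have b3 := S.b1 e he _ f'
  have b4 := S.b2 e he _ f'
  have b5 := S.b1 f hf e he
  have b6 := S.b2 f hf e he
  have b7 := S.b1 f hf _ e'
  have b8 := S.b2 f hf _ e'
  omega

theorem arc_notin {V : Type} {G : SimpleGraph V} {n : ℕ} {c : ℤ → V} (hc : Cyc G n c)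
    {p : Nat → ℤ} {g : Nat → Nat} {l : List Nat} (S : Side p g l)
    (win : ∀ e ∈ l, ∀ f ∈ l, p e < p f + n) {e f : Nat} (he : e ∈ l) (hf : f ∈ l) :
    c (p f) ∉ arcO c (p e) (p (g e)) := by
  intro hv
  obtain ⟨i, hi, hi'⟩ := arc_mem hv
  have e' := S.mem e he
  have w1 := win e he f hf
  have w3 := win _ e' f hf
  have w5 := win f hf e he
  have w6 := win f hf _ e'
  have hij : i = p f := hc.eq_of_lt hi (by rw [abs_lt]; constructor <;> omega)
  subst hij
  have b1 := S.b1 e he f hf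
  have b2 := S.b2 e he f hf
  omega

theorem sum_sub_one (l : List Nat) (f : Nat → ℤ) :
    (l.map fun e => f e - 1).sum = (l.map f).sum - l.length := by
  induction l with
  | nil => simp
  | cons a t ih => simp [ih]; ring

theorem len_flatMap {V : Type} (l : List Nat) (f : Nat → List V) :
    ((l.flatMap f).length : ℤ) = (l.map fun e => ((f e).length : ℤ)).sum := by
  induction l with
  | nil => simp
  | cons a t ih => rw [List.flatMap_cons, List.length_append, Nat.cast_add, ih]; simp

theorem core {V : Type} {G : SimpleGraph V} {n : ℕ} {c1 c2 : ℤ → V} (hc1 : Cyc G n c1)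
    (hc2 : Cyc G n c2) (l : List Nat) (p1 p2 : Nat → ℤ) (α β : Nat → Nat)
    (S1 : Side p1 α l) (S2 : Side p2 β l)
    (win1 : ∀ e ∈ l, ∀ f ∈ l, p1 e < p1 f + n) (win2 : ∀ e ∈ l, ∀ f ∈ l, p2 e < p2 f + n)
    (T : Nat → List V) (P : Nat → List V) (hP : ∀ e ∈ l, P e = c1 (p1 e) :: T e)
    (hT : ∀ e ∈ l, PT G (c1 (p1 e)) (T e) (c2 (p2 e)))
    (hnd : ∀ e ∈ l, (P e).Nodup) (on1 : ∀ e ∈ l, ∀ i, c1 i ∈ P e → c1 i = c1 (p1 e))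
    (on2 : ∀ e ∈ l, ∀ i, c2 i ∈ P e → c2 i = c2 (p2 e))
    (disj : ∀ e ∈ l, ∀ f ∈ l, e ≠ f → List.Disjoint (P e) (P f))
    (free : ∀ e ∈ l, ∀ i j, ((p2 e < i ∧ i < p2 (β e)) ∨ (p2 (β e) < i ∧ i < p2 e)) → c2 i ≠ c1 j)
    (m h : Nat) (hit : (fun e => β (α e))^[m] h = h)
    (hperm : ((itl (fun e => β (α e)) m h).map α ++ itl (fun e => β (α e)) m h).Perm l)
    (hl : l.Nodup) :
    ∃ x L, PT G x L x ∧ L.Nodup ∧ 2 * (L.length : ℤ) =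
      (l.map fun e => |p1 e - p1 (α e)|).sum + (l.map fun e => |p2 e - p2 (β e)|).sum
      + 2 * (l.map fun e => ((P e).length : ℤ) - 1).sum := by
  set nx : Nat → Nat := fun e => β (α e) with hnx
  set E := itl nx m h with hE
  have hEl : ∀ e ∈ E, e ∈ l := fun e he => hperm.subset (by simp [he])
  have hα : ∀ e ∈ E, α e ∈ l := fun e he => S1.mem e (hEl e he)
  have hnxl : ∀ e ∈ E, nx e ∈ l := fun e he => S2.mem _ (hα e he)
  have hEE : (E.map nx).Perm E := itl_perm nx m h hit
  have hN : (E.map α ++ E).Nodup := hperm.nodup_iff.2 hl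
  let O1 : Nat → List V := fun e => arcO c1 (p1 e) (p1 (α e))
  let O2 : Nat → List V := fun e => arcO c2 (p2 e) (p2 (β e))
  let B : Nat → List V := fun e => O1 e ++ (P (α e) ++ (O2 (α e) ++ (P (nx e)).reverse))
  have hB : ∀ e ∈ E, PT G (c1 (p1 e)) (B e) (c1 (p1 (nx e))) := by
    intro e he
    have q1 := arc_PT hc1 (S1.ne e (hEl e he)).symm
    have q2 := hT _ (hα e he)
    have q3 := arc_PT hc2 (S2.ne _ (hα e he)).symm
    obtain ⟨M, q4, q5⟩ := PT_reverse (hT _ (hnxl e he))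
    rw [← hP _ (hnxl e he)] at q4
    have := PT_append (PT_append (PT_append q1 q2) q3) q5
    have hBe : B e = arcO c1 (p1 e) (p1 (α e)) ++ [c1 (p1 (α e))] ++ T (α e) ++
        (arcO c2 (p2 (α e)) (p2 (β (α e))) ++ [c2 (p2 (β (α e)))]) ++ M := by
      simp only [B, O1, O2, q4, hP _ (hα e he)]
      simp [hnx]
    rw [hBe]; exact this
  have hclosed := itl_PT (G := G) nx m h (fun e => c1 (p1 e)) B hB
  rw [hit] at hclosed
  have hLp : (E.flatMap B).Perm
      (E.flatMap O1 ++ ((E.map α).flatMap O2 ++ (E.map α ++ E).flatMap P)) := by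
    have r1 := List.flatMap_append_perm E O1 (fun e => (P (α e) ++ (O2 (α e) ++ (P (nx e)).reverse)))
    have r2 := List.flatMap_append_perm E (fun e => P (α e)) (fun e => (O2 (α e) ++ (P (nx e)).reverse))
    have r3 := List.flatMap_append_perm E (fun e => O2 (α e)) (fun e => (P (nx e)).reverse)
    have r4 : (E.flatMap fun e => (P (nx e)).reverse).Perm (E.flatMap P) := by
      have : (E.flatMap fun e => (P (nx e)).reverse).Perm (E.flatMap fun e => P (nx e)) :=
        List.Perm.flatMap_left _ fun e _ => List.reverse_perm _
      refine this.trans ?_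
      have h2 := hEE.flatMap_right P
      rwa [List.flatMap_map] at h2
    refine r1.symm.trans (List.Perm.append_left _ ?_)
    refine r2.symm.trans ?_
    refine (List.Perm.append_left _ r3.symm).trans ?_
    rw [List.flatMap_append, List.flatMap_map, List.flatMap_map, ← List.append_assoc,
      ← List.append_assoc]
    exact List.Perm.append List.perm_append_comm r4
  have hNE : E.Nodup := hN.of_append_right
  have hNα : (E.map α).Nodup := hN.of_append_left
  have hNd : ∀ e ∈ E, ∀ f ∈ E, α e ≠ f := fun e he f hf hef => by
    rw [List.nodup_append] at hN
    exact hN.2.2 (α e) (List.mem_map_of_mem he) f hf hef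
  have habs : ∀ (p : Nat → ℤ), (∀ e ∈ l, ∀ f ∈ l, p e < p f + n) → ∀ e ∈ l, ∀ f ∈ l, |p e - p f| ≤ n := by
    intro p hp e he f hf
    have h1 := hp e he f hf
    have h2 := hp f hf e he
    rw [abs_le]; constructor <;> omega
  have n1 : (E.flatMap O1).Nodup := by
    rw [List.nodup_flatMap]
    refine ⟨fun e he => arc_nodup hc1 (habs p1 win1 _ (hEl e he) _ (hα e he)), ?_⟩
    refine List.Nodup.pairwise_of_forall_ne hNE fun e he f hf hef => ?_
    exact arcs_disj hc1 S1 win1 (hEl e he) (hEl f hf) hef.symm fun h => hNd e he f hf h.symm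
  have hNα' : ∀ e ∈ E.map α, ∀ f ∈ E.map α, β e ≠ f := by
    intro e he f hf hef
    rw [List.mem_map] at he hf
    obtain ⟨e, he, rfl⟩ := he
    obtain ⟨f, hf, rfl⟩ := hf
    have : nx e ∈ E := hEE.subset (List.mem_map_of_mem he)
    exact hNd f hf _ this hef.symm
  have hαl : ∀ e ∈ E.map α, e ∈ l := fun e he => hperm.subset (by simp only [List.mem_append]; left; exact he)
  have n2 : ((E.map α).flatMap O2).Nodup := by
    rw [List.nodup_flatMap]
    refine ⟨fun e he => arc_nodup hc2 (habs p2 win2 _ (hαl e he) _ (S2.mem _ (hαl e he))), ?_⟩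
    refine List.Nodup.pairwise_of_forall_ne hNα fun e he f hf hef => ?_
    exact arcs_disj hc2 S2 win2 (hαl e he) (hαl f hf) hef.symm fun h => hNα' e he f hf h.symm
  have n3 : ((E.map α ++ E).flatMap P).Nodup := by
    rw [List.nodup_flatMap]
    refine ⟨fun e he => hnd e (hperm.subset he), ?_⟩
    refine List.Nodup.pairwise_of_forall_ne hN fun e he f hf hef => ?_
    exact disj e (hperm.subset he) f (hperm.subset hf) hef
  refine ⟨_, _, hclosed, ?_, ?_⟩
  · rw [hLp.nodup_iff]
    refine List.Nodup.append n1 (List.Nodup.append n2 n3 ?_) ?_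
    · intro v hv hv'
      rw [List.mem_flatMap] at hv hv'
      obtain ⟨e, he, hv⟩ := hv
      obtain ⟨f, hf, hv'⟩ := hv'
      obtain ⟨i, rfl, hi⟩ := arc_mem hv
      have := on2 f (hperm.subset hf) i hv'
      rw [this] at hv
      exact arc_notin hc2 S2 win2 (hαl e he) (hperm.subset hf) hv
    · intro v hv hv'
      rw [List.mem_flatMap] at hv
      obtain ⟨e, he, hv⟩ := hv
      rw [List.mem_append, List.mem_flatMap, List.mem_flatMap] at hv'
      rcases hv' with ⟨f, hf, hv'⟩ | ⟨f, hf, hv'⟩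
      · obtain ⟨i, rfl, hi⟩ := arc_mem hv
        obtain ⟨j, hj, hj'⟩ := arc_mem hv'
        exact free f (hαl f hf) j i hj' hj
      · obtain ⟨i, rfl, hi⟩ := arc_mem hv
        have := on1 f (hperm.subset hf) i hv'
        rw [this] at hv
        exact arc_notin hc1 S1 win1 (hEl e he) (hperm.subset hf) hv
  · rw [hLp.length_eq]
    have hs : ∀ f : Nat → ℤ, (l.map f).sum = (E.map fun e => f (α e)).sum + (E.map f).sum := by
      intro f
      rw [← (hperm.map f).sum_eq]
      simp [List.map_map, Function.comp_def]
    have hs2 : ∀ f : Nat → ℤ, (E.map fun e => f (nx e)).sum = (E.map f).sum := by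
      intro f
      rw [← (hEE.map f).sum_eq]
      simp [List.map_map, Function.comp_def]
    have t1 : ((E.flatMap O1).length : ℤ) = (E.map fun e => |p1 e - p1 (α e)| - 1).sum := by
      rw [len_flatMap]
      congr 1
      exact List.map_congr_left fun e he => arc_len c1 (S1.ne e (hEl e he)).symm
    have t2 : (((E.map α).flatMap O2).length : ℤ) =
        (E.map fun e => |p2 (α e) - p2 (nx e)| - 1).sum := by
      rw [len_flatMap, List.map_map]
      congr 1
      exact List.map_congr_left fun e he => arc_len c2 (S2.ne _ (hα e he)).symm
    have t3 : (((E.map α ++ E).flatMap P).length : ℤ) = (l.map fun e => ((P e).length : ℤ)).sum := by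
      rw [len_flatMap]; exact (hperm.map _).sum_eq
    rw [sum_sub_one] at t1 t2
    have t4 : (l.length : ℤ) = 2 * E.length := by
      rw [← hperm.length_eq]; simp; ring
    have t5 := hs fun e => |p1 e - p1 (α e)|
    have t6 : (E.map fun e => |p1 (α e) - p1 (α (α e))|) = E.map fun e => |p1 e - p1 (α e)| :=
      List.map_congr_left fun e he => by rw [S1.inv e (hEl e he), abs_sub_comm]
    have t7 := hs fun e => |p2 e - p2 (β e)|
    have t8 := hs2 fun e => |p2 e - p2 (β e)|
    have t9 : (E.map fun e => |p2 (nx e) - p2 (β (nx e))|) = E.map fun e => |p2 (α e) - p2 (nx e)| :=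
      List.map_congr_left fun e he => by
        simp only [hnx]
        rw [S2.inv _ (hα e he), abs_sub_comm]
    simp only [t6] at t5
    simp only [t9] at t8
    rw [sum_sub_one]
    simp only [List.length_append, Nat.cast_add, t1, t2, t3]
    change (List.map _ l).sum = (E.map fun e => |p2 (α e) - p2 (nx e)|).sum + _ at t7
    linarith

end SepT

namespace SepT

structure Conf {V : Type} (G : SimpleGraph V) (n : ℕ) (c1 c2 : ℤ → V) (U : List Nat)
    (p1 p2 : Nat → ℤ) (s1 s2 : Nat → Nat) (P : Nat → List V) : Prop where
  mx : ∀ x L, PT G x L x → L.Nodup → 3 ≤ L.length → L.length ≤ n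
  cy1 : Cyc G n c1
  cy2 : Cyc G n c2
  pth : ∀ e ∈ U, ∃ T, P e = c1 (p1 e) :: T ∧ PT G (c1 (p1 e)) T (c2 (p2 e))
  nd : ∀ e ∈ U, (P e).Nodup
  on1 : ∀ e ∈ U, ∀ i, c1 i ∈ P e → c1 i = c1 (p1 e)
  on2 : ∀ e ∈ U, ∀ i, c2 i ∈ P e → c2 i = c2 (p2 e)
  disj : ∀ e ∈ U, ∀ f ∈ U, e ≠ f → List.Disjoint (P e) (P f)
  win1 : ∀ e ∈ U, ∀ f ∈ U, p1 e < p1 f + n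
  win2 : ∀ e ∈ U, ∀ f ∈ U, p2 e < p2 f + n
  seg1 : ∀ e ∈ U, ∀ f ∈ U, s1 e = s1 f → ∀ i j, p1 e < i → i < p1 f → c1 i ≠ c2 j
  seg2 : ∀ e ∈ U, ∀ f ∈ U, s2 e = s2 f → ∀ i j, p2 e < i → i < p2 f → c2 i ≠ c1 j
  triv1 : ∀ e ∈ U, ∀ f ∈ U, e ≠ f → s1 e = s1 f → 2 < (P e).length + (P f).length
  triv2 : ∀ e ∈ U, ∀ f ∈ U, e ≠ f → s2 e = s2 f → 2 < (P e).length + (P f).length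

theorem Conf.swap {V : Type} {G : SimpleGraph V} {n : ℕ} {c1 c2 : ℤ → V} {U : List Nat}
    {p1 p2 : Nat → ℤ} {s1 s2 : Nat → Nat} {P : Nat → List V}
    (h : Conf G n c1 c2 U p1 p2 s1 s2 P) :
    Conf G n c2 c1 U p2 p1 s2 s1 (fun e => (P e).reverse) where
  mx := h.mx
  cy1 := h.cy2
  cy2 := h.cy1
  pth := fun e he => by
    obtain ⟨T, h1, h2⟩ := h.pth e he
    rw [h1]; exact PT_reverse h2
  nd := fun e he => by rw [List.nodup_reverse]; exact h.nd e he
  on1 := fun e he i => by rw [List.mem_reverse]; exact h.on2 e he i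
  on2 := fun e he i => by rw [List.mem_reverse]; exact h.on1 e he i
  disj := fun e he f hf hef => by
    rw [List.disjoint_reverse_left, List.disjoint_reverse_right]; exact h.disj e he f hf hef
  win1 := h.win2
  win2 := h.win1
  seg1 := h.seg2
  seg2 := h.seg1
  triv1 := fun e he f hf => by simpa using h.triv2 e he f hf
  triv2 := fun e he f hf => by simpa using h.triv1 e he f hf

theorem Side.congr {p : Nat → ℤ} {g : Nat → Nat} {l l' : List Nat} (S : Side p g l)
    (h : ∀ e, e ∈ l' ↔ e ∈ l) : Side p g l' := by
  obtain ⟨a, b, c, d, e, f⟩ := S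
  constructor <;> simp only [h] <;> assumption

theorem itl_mem (nx : Nat → Nat) (l : List Nat) (hl : ∀ e ∈ l, nx e ∈ l) (m e : Nat) (he : e ∈ l) :
    ∀ f ∈ itl nx m e, f ∈ l := by
  induction m generalizing e with
  | zero => simp [itl]
  | succ m ih =>
    intro f hf
    simp only [itl, List.mem_cons] at hf
    rcases hf with rfl | hf
    · exact he
    · exact ih (nx e) (hl e he) f hf

theorem flat2_perm (E : List Nat) (f g : Nat → Nat) :
    (E.flatMap fun e => [f e, g e]).Perm (E.map f ++ E.map g) := by
  have := List.flatMap_append_perm E (fun e => [f e]) (fun e => [g e])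
  rw [List.map_eq_flatMap, List.map_eq_flatMap]
  exact this.symm

theorem len_le_sum (l : List Nat) (f : Nat → ℤ) (h : ∀ e ∈ l, 1 ≤ f e) :
    (l.length : ℤ) ≤ (l.map f).sum := by
  induction l with
  | nil => simp
  | cons a t ih =>
    have h1 := h a (by simp)
    have h2 := ih fun e he => h e (by simp [he])
    simp; omega

theorem pairs_seg : ∀ (l : List Nat) (m : Nat), l.length = 2 * m → ∀ e ∈ l, ∃ q ∈ pairsOf l, (q.1 = e ∨ q.2 = e)
  | [], _, _ => by simp
  | [a], m, h => by simp at h; omega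
  | a :: b :: t, m, h => by
    intro e he
    simp only [List.mem_cons] at he
    rcases he with rfl | rfl | he
    · exact ⟨(e, b), by simp [pairsOf]⟩
    · exact ⟨(a, e), by simp [pairsOf]⟩
    · obtain ⟨q, hq, h2⟩ := pairs_seg t (m - 1) (by simp at h; omega) e he
      exact ⟨q, by simp [pairsOf, hq], h2⟩

theorem Conf.ineq {V : Type} {G : SimpleGraph V} {n : ℕ} {c1 c2 : ℤ → V} {U : List Nat}
    {p1 p2 : Nat → ℤ} {s1 s2 : Nat → Nat} {P : Nat → List V}
    (H : Conf G n c1 c2 U p1 p2 s1 s2 P) : Ineq U p1 p2 s1 s2 := by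
  intro l1 l2 ga hp hU hs1 hs2 hsg1 hsg2 hga htr
  cases l1 with
  | nil => simp [trB] at htr
  | cons h t =>
  obtain ⟨m, hm, hit, hnd⟩ := trB_spec h t ga htr
  set l := t ++ [h] with hldef
  set α := pt (pairsOf l) with hα
  set β := pt ga with hβ
  set p1' := Function.update p1 h (p1 h + n) with hp1'
  have hpl : l.Perm (h :: t) := List.perm_append_singleton _ _
  have hnd1 : (h :: t).Nodup := hs1.imp fun hab => by rintro rfl; omega
  have hl : l.Nodup := hpl.nodup_iff.2 hnd1
  have hlU : ∀ e ∈ l, e ∈ U := fun e he => hU e (hpl.subset he)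
  have hht : h ∉ t := (List.nodup_cons.1 hnd1).1
  have hh : p1' h = p1 h + n := by simp [hp1']
  have ht : ∀ e ∈ t, p1' e = p1 e := fun e he => by
    rw [hp1', Function.update_of_ne]; rintro rfl; exact hht he
  have hc : ∀ e, c1 (p1' e) = c1 (p1 e) := by
    intro e
    by_cases heh : e = h
    · rw [heh, hh, H.cy1.per]
    · rw [hp1', Function.update_of_ne heh]
  rw [List.pairwise_cons] at hs1
  have hs : l.Pairwise fun a b => p1' a < p1' b := by
    rw [hldef, List.pairwise_append]
    refine ⟨?_, List.pairwise_singleton _ _, ?_⟩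
    · refine hs1.2.imp_of_mem ?_
      intro a b ha hb hab
      rw [ht a ha, ht b hb]; exact hab
    · intro a ha b hb
      simp only [List.mem_singleton] at hb
      rw [hb, hh, ht a ha]
      exact H.win1 a (hU a (by simp [ha])) h (hU h (by simp))
  have hlen : l.length = 2 * m := by simp [hldef]; exact hm
  obtain ⟨S1, sum1⟩ := side l p1' α m hlen hs (pt_pairs l hl)
  have hp2 : l2.Perm l := hp.symm.trans hpl.symm
  obtain ⟨S2, sum2⟩ := side l2 p2 β m (by rw [hp2.length_eq, hlen]) hs2 ((prB_iff ga _).1 hga)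
  have S2 := S2.congr (l' := l) fun e => hp2.symm.mem_iff
  rw [(hp2.map _).sum_eq] at sum2
  have hEl : ∀ e ∈ itl (fun e => β (α e)) m h, e ∈ l :=
    itl_mem _ l (fun e he => S2.mem _ (S1.mem e he)) m h (by simp [hldef])
  have hperm : ((itl (fun e => β (α e)) m h).map α ++ itl (fun e => β (α e)) m h).Perm l := by
    have q1 := (flat2_perm (itl (fun e => β (α e)) m h) α (fun e => β (α e))).trans
      (List.Perm.append_left _ (itl_perm (fun e => β (α e)) m h hit))
    have q2 := q1.nodup_iff.1 hnd
    refine (List.Nodup.subperm q2 ?_).perm_of_length_le ?_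
    · intro e he
      rw [List.mem_append, List.mem_map] at he
      rcases he with ⟨f, hf, rfl⟩ | he
      · exact S1.mem f (hEl f hf)
      · exact hEl e he
    · simp [itl_len, hlen]; omega
  have hseg2 : ∀ e ∈ l, s2 e = s2 (β e) := by
    intro e he
    obtain ⟨q, hq, hqe⟩ := pairs_seg l2 m (by rw [hp2.length_eq, hlen]) e (hp2.symm.subset he)
    have h1 := hsg2 q hq
    have h2 := (prB_iff ga _).1 hga q hq
    rcases hqe with rfl | rfl
    · rw [hβ, h2.1, h1]
    · rw [hβ, h2.2, h1]
  have hwin : ∀ e ∈ l, ∀ f ∈ l, p1' e < p1' f + n := by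
    intro e he f hf
    have w1 := H.win1 e (hlU e he) f (hlU f hf)
    have n0 := H.win1 e (hlU e he) e (hlU e he)
    rw [hldef, List.mem_append, List.mem_singleton] at he hf
    rcases he with he | rfl <;> rcases hf with hf | rfl
    · rw [ht e he, ht f hf]; exact w1
    · rw [hh, ht e he]; omega
    · rw [hh, ht f hf]; have := hs1.1 f hf; omega
    · omega
  obtain ⟨x, L, hL, hLn, hLl⟩ := core H.cy1 H.cy2 l p1' p2 α β S1 S2 hwin
    (fun e he f hf => H.win2 e (hlU e he) f (hlU f hf)) (fun e => (P e).tail) P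
    (fun e he => by
      obtain ⟨T, h1, h2⟩ := H.pth e (hlU e he)
      rw [hc, h1]; rfl)
    (fun e he => by
      obtain ⟨T, h1, h2⟩ := H.pth e (hlU e he)
      rw [hc, h1]; exact h2)
    (fun e he => H.nd e (hlU e he)) (fun e he i hi => by rw [hc]; exact H.on1 e (hlU e he) i hi)
    (fun e he => H.on2 e (hlU e he))
    (fun e he f hf => H.disj e (hlU e he) f (hlU f hf))
    (fun e he i j hij => by
      have he' := S2.mem e he
      rcases hij with hij | hij
      · exact H.seg2 e (hlU e he) _ (hlU _ he') (hseg2 e he) i j hij.1 hij.2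
      · exact H.seg2 _ (hlU _ he') e (hlU e he) (hseg2 e he).symm i j hij.1 hij.2)
    m h hit hperm hl
  have hPlen : ∀ e ∈ l, 0 ≤ ((P e).length : ℤ) - 1 := by
    intro e he
    obtain ⟨T, h1, h2⟩ := H.pth e (hlU e he)
    rw [h1]; simp
  have hsum : 1 ≤ (l.map fun e => ((P e).length : ℤ) - 1).sum := by
    cases t with
    | nil => simp at hm; omega
    | cons a t' =>
      have q := H.triv1 h (hU _ (by simp)) a (hU _ (by simp)) (by rintro rfl; simp at hht)
        (hsg1 (h, a) (by simp [pairsOf]))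
      have h2 : 0 ≤ (t'.map fun e => ((P e).length : ℤ) - 1).sum := by
        apply List.sum_nonneg
        intro z hz
        rw [List.mem_map] at hz
        obtain ⟨e, he, rfl⟩ := hz
        exact hPlen e (by simp [hldef, he])
      rw [(hpl.map _).sum_eq]
      simp only [List.map_cons, List.sum_cons]
      omega
  have k1 := len_le_sum l (fun e => |p1' e - p1' (α e)|) fun e he => by
    have := S1.ne e he
    have h3 : p1' e - p1' (α e) ≠ 0 := by omega
    have := abs_pos.2 h3; omega
  have k2 := len_le_sum l (fun e => |p2 e - p2 (β e)|) fun e he => by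
    have := S2.ne e he
    have h3 : p2 e - p2 (β e) ≠ 0 := by omega
    have := abs_pos.2 h3; omega
  have hL3 : 3 ≤ L.length := by omega
  have hmx := H.mx x L hL hLn hL3
  have ha : alt p1' l = n - alt p1 (h :: t) := by
    rw [alt, hldef, altS_snoc p1' h t m hm, alt, altS, altS_not, altS_congr p1' p1 false t ht, hh]
    simp; ring
  have e2 : alt p2 l2 = alt p2 l2 := rfl
  omega

end SepT

namespace SepT

structure Fam {V : Type} (G : SimpleGraph V) (n : ℕ) (c1 c2 : ℤ → V) (ι : Type)
    (q1 q2 J1 J2 : ι → ℤ) (r1 r2 : ℤ) (Q : ι → List V) : Prop where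
  mx : ∀ x L, PT G x L x → L.Nodup → 3 ≤ L.length → L.length ≤ n
  cy1 : Cyc G n c1
  cy2 : Cyc G n c2
  pth : ∀ e, ∃ T, Q e = c1 (q1 e) :: T ∧ PT G (c1 (q1 e)) T (c2 (q2 e))
  nd : ∀ e, (Q e).Nodup
  on1 : ∀ e, ∀ i, c1 i ∈ Q e → c1 i = c1 (q1 e)
  on2 : ∀ e, ∀ i, c2 i ∈ Q e → c2 i = c2 (q2 e)
  disj : ∀ e f, e ≠ f → List.Disjoint (Q e) (Q f)
  w1 : ∀ e, r1 ≤ J1 e ∧ J1 e ≤ q1 e ∧ q1 e < r1 + n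
  w2 : ∀ e, r2 ≤ J2 e ∧ J2 e ≤ q2 e ∧ q2 e < r2 + n
  g1 : ∀ e i j, J1 e < i → i ≤ q1 e → c1 i ≠ c2 j
  g2 : ∀ e i j, J2 e < i → i ≤ q2 e → c2 i ≠ c1 j
  i1 : ∀ e, ∃ j, c1 (J1 e) = c2 j
  i2 : ∀ e, ∃ j, c2 (J2 e) = c1 j

variable {V : Type} {G : SimpleGraph V} {n : ℕ} {c1 c2 : ℤ → V} {ι : Type}
    {q1 q2 J1 J2 : ι → ℤ} {r1 r2 : ℤ} {Q : ι → List V}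

theorem Fam.swap (h : Fam G n c1 c2 ι q1 q2 J1 J2 r1 r2 Q) :
    Fam G n c2 c1 ι q2 q1 J2 J1 r2 r1 (fun e => (Q e).reverse) where
  mx := h.mx
  cy1 := h.cy2
  cy2 := h.cy1
  pth := fun e => by
    obtain ⟨T, h1, h2⟩ := h.pth e
    rw [h1]; exact PT_reverse h2
  nd := fun e => by rw [List.nodup_reverse]; exact h.nd e
  on1 := fun e i => by rw [List.mem_reverse]; exact h.on2 e i
  on2 := fun e i => by rw [List.mem_reverse]; exact h.on1 e i
  disj := fun e f hef => by
    rw [List.disjoint_reverse_left, List.disjoint_reverse_right]; exact h.disj e f hef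
  w1 := h.w2
  w2 := h.w1
  g1 := h.g2
  g2 := h.g1
  i1 := h.i2
  i2 := h.i1

theorem Fam.lt1 (h : Fam G n c1 c2 ι q1 q2 J1 J2 r1 r2 Q) (e f : ι) (hef : J1 e < J1 f) :
    q1 e < J1 f := by
  by_contra hc
  obtain ⟨j, hj⟩ := h.i1 f
  exact h.g1 e (J1 f) j hef (by omega) hj

theorem Fam.lt2 (h : Fam G n c1 c2 ι q1 q2 J1 J2 r1 r2 Q) (e f : ι) (hef : J2 e < J2 f) :
    q2 e < J2 f := h.swap.lt1 e f hef

def rt (n : ℕ) (θ : ℤ) (J : ι → ℤ) (q : ι → ℤ) (e : ι) : ℤ := if θ ≤ J e then q e else q e + n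

theorem Fam.rot1 (h : Fam G n c1 c2 ι q1 q2 J1 J2 r1 r2 Q) (e0 : ι) :
    Fam G n c1 c2 ι (rt n (J1 e0) J1 q1) q2 (rt n (J1 e0) J1 J1) J2 (J1 e0) r2 Q := by
  have hc : ∀ e, c1 (rt n (J1 e0) J1 q1 e) = c1 (q1 e) := by
    intro e; unfold rt; split_ifs
    · rfl
    · exact h.cy1.per _
  have hc' : ∀ e, c1 (rt n (J1 e0) J1 J1 e) = c1 (J1 e) := by
    intro e; unfold rt; split_ifs
    · rfl
    · exact h.cy1.per _
  refine ⟨h.mx, h.cy1, h.cy2, ?_, h.nd, ?_, h.on2, h.disj, ?_, h.w2, ?_, h.g2, ?_, h.i2⟩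
  · intro e; rw [hc]; exact h.pth e
  · intro e i; rw [hc]; exact h.on1 e i
  · intro e
    have a1 := h.w1 e0
    have a2 := h.w1 e
    unfold rt
    split_ifs with hh
    · omega
    · have := h.lt1 e e0 (by omega); omega
  · intro e i j
    unfold rt
    split_ifs with hh
    · exact h.g1 e i j
    · intro h1 h2
      have := h.g1 e (i - n) j (by omega) (by omega)
      rw [← h.cy1.per] at this
      simpa using this
  · intro e; rw [hc']; exact h.i1 e

theorem Fam.rot2 (h : Fam G n c1 c2 ι q1 q2 J1 J2 r1 r2 Q) (e0 : ι) :
    Fam G n c1 c2 ι q1 (rt n (J2 e0) J2 q2) J1 (rt n (J2 e0) J2 J2) r1 (J2 e0) Q := by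
  have := (h.swap.rot1 e0).swap
  simpa using this

theorem Fam.triv (h : Fam G n c1 c2 ι q1 q2 J1 J2 r1 r2 Q) (e f : ι) (hef : e ≠ f)
    (hJ : J1 e = J1 f) : 2 < (Q e).length + (Q f).length := by
  obtain ⟨T, a1, a2⟩ := h.pth e
  obtain ⟨T', b1, b2⟩ := h.pth f
  by_contra hc
  rw [a1, b1] at hc
  simp only [List.length_cons] at hc
  have hT : T = [] := List.length_eq_zero_iff.1 (by omega)
  have hT' : T' = [] := List.length_eq_zero_iff.1 (by omega)
  subst hT hT'
  have e1 : q1 e = J1 e := by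
    by_contra hne
    exact h.g1 e (q1 e) _ (by have := h.w1 e; omega) le_rfl a2
  have e2 : q1 f = J1 f := by
    by_contra hne
    exact h.g1 f (q1 f) _ (by have := h.w1 f; omega) le_rfl b2
  apply h.disj e f hef (a := c1 (q1 e))
  · rw [a1]; simp
  · rw [b1, e1, e2, hJ]; simp

theorem Fam.conf (h : Fam G n c1 c2 ι q1 q2 J1 J2 r1 r2 Q) (U : List Nat) (φ : Nat → ι)
    (s1 s2 : Nat → Nat) (hφ : ∀ e ∈ U, ∀ f ∈ U, φ e = φ f → e = f)
    (hs1 : ∀ e ∈ U, ∀ f ∈ U, s1 e = s1 f → J1 (φ e) = J1 (φ f))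
    (hs2 : ∀ e ∈ U, ∀ f ∈ U, s2 e = s2 f → J2 (φ e) = J2 (φ f)) :
    Conf G n c1 c2 U (fun e => q1 (φ e)) (fun e => q2 (φ e)) s1 s2 (fun e => Q (φ e)) where
  mx := h.mx
  cy1 := h.cy1
  cy2 := h.cy2
  pth := fun e _ => h.pth _
  nd := fun e _ => h.nd _
  on1 := fun e _ => h.on1 _
  on2 := fun e _ => h.on2 _
  disj := fun e he f hf hef => h.disj _ _ fun hh => hef (hφ e he f hf hh)
  win1 := fun e _ f _ => by
    have := h.w1 (φ e)
    have := h.w1 (φ f)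
    omega
  win2 := fun e _ f _ => by
    have := h.w2 (φ e)
    have := h.w2 (φ f)
    omega
  seg1 := fun e he f hf hef i j h1 h2 => by
    have := hs1 e he f hf hef
    have h3 := h.w1 (φ e)
    exact h.g1 (φ f) i j (by omega) (by omega)
  seg2 := fun e he f hf hef i j h1 h2 => by
    have := hs2 e he f hf hef
    have h3 := h.w2 (φ e)
    exact h.g2 (φ f) i j (by omega) (by omega)
  triv1 := fun e he f hf hef hs => h.triv _ _ (fun hh => hef (hφ e he f hf hh)) (hs1 e he f hf hs)
  triv2 := fun e he f hf hef hs => by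
    have := h.swap.triv _ _ (fun hh => hef (hφ e he f hf hh)) (hs2 e he f hf hs)
    simpa using this

theorem Cyc.neg (h : Cyc G n c1) : Cyc G n (fun i => c1 (-i)) where
  per := fun i => by
    have := h.per (-(i + n))
    rw [← this]; congr 1; omega
  inj := fun i j hij => by
    have h2 := dvd_neg.2 (h.inj _ _ hij)
    rwa [show -(-j - -i) = j - i by ring] at h2
  adj := fun i => by
    have := (h.adj (-(i + 1))).symm
    convert this using 2; ring

theorem Conf.rev2 {U : List Nat} {p1 p2 : Nat → ℤ} {s1 s2 : Nat → Nat} {P : Nat → List V}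
    (h : Conf G n c1 c2 U p1 p2 s1 s2 P) :
    Conf G n c1 (fun i => c2 (-i)) U p1 (fun e => - p2 e) s1 s2 P where
  mx := h.mx
  cy1 := h.cy1
  cy2 := h.cy2.neg
  pth := fun e he => by simpa using h.pth e he
  nd := h.nd
  on1 := h.on1
  on2 := fun e he i => by simpa using h.on2 e he (-i)
  disj := h.disj
  win1 := h.win1
  win2 := fun e he f hf => by have := h.win2 f hf e he; omega
  seg1 := fun e he f hf hef i j h1 h2 => h.seg1 e he f hf hef i (-j) h1 h2
  seg2 := fun e he f hf hef i j h1 h2 => h.seg2 f hf e he hef.symm (-i) j (by omega) (by omega)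
  triv1 := h.triv1
  triv2 := h.triv2

theorem Conf.pinj {U : List Nat} {p1 p2 : Nat → ℤ} {s1 s2 : Nat → Nat} {P : Nat → List V}
    (h : Conf G n c1 c2 U p1 p2 s1 s2 P) : ∀ x ∈ U, ∀ y ∈ U, x ≠ y → p1 x ≠ p1 y := by
  intro x hx y hy hxy hp
  obtain ⟨T, a1, _⟩ := h.pth x hx
  obtain ⟨T', b1, _⟩ := h.pth y hy
  apply h.disj x hx y hy hxy (a := c1 (p1 x))
  · rw [a1]; simp
  · rw [b1, hp]; simp

theorem Conf.final {p1 p2 : Nat → ℤ} {P : Nat → List V} {objs : List Obj} {U : List Nat}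
    {blk1 : Nat → Nat} {rs : List RD} (hchk : mainB objs U blk1 rs = true)
    (h : Conf G n c1 c2 U p1 p2 (· / 4) (· % 4) P) (r : RD) (hr : r ∈ rs) (h16 : ∀ e ∈ U, e < 16)
    (hblk1 : ∀ x ∈ U, ∀ y ∈ U, blk1 x < blk1 y → p1 x < p1 y)
    (hblk2 : ∀ x ∈ U, ∀ y ∈ U, blkR r.w x < blkR r.w y → p2 x < p2 y) : False :=
  sound objs U blk1 rs hchk r hr h16 p1 p2 h.pinj h.swap.pinj hblk1 hblk2 h.ineq h.swap.ineq

theorem Conf.double {p1 p2 : Nat → ℤ} {P : Nat → List V}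
    (hc : Conf G n c1 c2 [0, 1] p1 p2 (fun _ => 0) (fun _ => 0) P) : False := by
  have i1 := hc.ineq
  have i2 := hc.swap.ineq
  have j1 := hc.pinj 0 (by simp) 1 (by simp) (by simp)
  have j2 := hc.swap.pinj 0 (by simp) 1 (by simp) (by simp)
  have key : ∀ a b c d : Nat, (a = 0 ∧ b = 1 ∨ a = 1 ∧ b = 0) → (c = 0 ∧ d = 1 ∨ c = 1 ∧ d = 0) →
      p1 a < p1 b → p2 c < p2 d → False := by
    intro a b c d hab hcd hp1 hp2
    have k1 := i1 [a, b] [c, d] [(0, 1)] (by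
      rcases hab with ⟨rfl, rfl⟩ | ⟨rfl, rfl⟩ <;> rcases hcd with ⟨rfl, rfl⟩ | ⟨rfl, rfl⟩ <;> decide)
      (by rcases hab with ⟨rfl, rfl⟩ | ⟨rfl, rfl⟩ <;> simp)
      (by simpa using hp1) (by simpa using hp2) (by simp) (by simp)
      (by rcases hcd with ⟨rfl, rfl⟩ | ⟨rfl, rfl⟩ <;> decide)
      (by rcases hab with ⟨rfl, rfl⟩ | ⟨rfl, rfl⟩ <;> decide)
    have k2 := i2 [c, d] [a, b] [(0, 1)] (by
      rcases hab with ⟨rfl, rfl⟩ | ⟨rfl, rfl⟩ <;> rcases hcd with ⟨rfl, rfl⟩ | ⟨rfl, rfl⟩ <;> decide)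
      (by rcases hcd with ⟨rfl, rfl⟩ | ⟨rfl, rfl⟩ <;> simp)
      (by simpa using hp2) (by simpa using hp1) (by simp) (by simp)
      (by rcases hab with ⟨rfl, rfl⟩ | ⟨rfl, rfl⟩ <;> decide)
      (by rcases hcd with ⟨rfl, rfl⟩ | ⟨rfl, rfl⟩ <;> decide)
    omega
  rcases lt_or_gt_of_ne j1 with a | a <;> rcases lt_or_gt_of_ne j2 with b | b
  · exact key 0 1 0 1 (by simp) (by simp) a b
  · exact key 0 1 1 0 (by simp) (by simp) a b
  · exact key 1 0 0 1 (by simp) (by simp) a b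
  · exact key 1 0 1 0 (by simp) (by simp) a b

theorem Fam.noDouble (h : Fam G n c1 c2 ι q1 q2 J1 J2 r1 r2 Q) (e f : ι) (hef : e ≠ f)
    (h1 : J1 e = J1 f) (h2 : J2 e = J2 f) : False := by
  have hc := h.conf [0, 1] (fun i => if i = 0 then e else f) (fun _ => 0) (fun _ => 0)
    (by simp [hef, hef.symm]) (by simp [h1]) (by simp [h2])
  exact hc.double

/-- sorting three values -/
theorem sort3 (σ : Nat → ℤ) (h : ∀ i < 3, ∀ j < 3, i ≠ j → σ i ≠ σ j) :
    ∃ π : Nat → Nat, (∀ i < 3, π i < 3) ∧ (∀ i < 3, ∀ j < 3, i ≠ j → π i ≠ π j) ∧ π 3 = 3 ∧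
      σ (π 0) < σ (π 1) ∧ σ (π 1) < σ (π 2) := by
  have h01 := h 0 (by decide) 1 (by decide) (by decide)
  have h02 := h 0 (by decide) 2 (by decide) (by decide)
  have h12 := h 1 (by decide) 2 (by decide) (by decide)
  have key : ∀ a b c : Nat, (∀ i < 3, [a, b, c, 3].getD i 0 < 3) →
      (∀ i < 3, ∀ j < 3, i ≠ j → [a, b, c, 3].getD i 0 ≠ [a, b, c, 3].getD j 0) →
      σ a < σ b → σ b < σ c → ∃ π : Nat → Nat, (∀ i < 3, π i < 3) ∧
      (∀ i < 3, ∀ j < 3, i ≠ j → π i ≠ π j) ∧ π 3 = 3 ∧ σ (π 0) < σ (π 1) ∧ σ (π 1) < σ (π 2) :=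
    fun a b c k1 k2 k3 k4 => ⟨fun i => [a, b, c, 3].getD i 0, k1, k2, rfl, k3, k4⟩
  rcases lt_or_gt_of_ne h01 with a | a <;> rcases lt_or_gt_of_ne h02 with b | b <;>
    rcases lt_or_gt_of_ne h12 with c | c
  · exact key 0 1 2 (by decide) (by decide) a c
  · exact key 0 2 1 (by decide) (by decide) b c
  · omega
  · exact key 2 0 1 (by decide) (by decide) b a
  · exact key 1 0 2 (by decide) (by decide) a b
  · omega
  · exact key 1 2 0 (by decide) (by decide) c b
  · exact key 2 1 0 (by decide) (by decide) c a

end SepT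

namespace SepT
variable {V : Type} {G : SimpleGraph V} {n : ℕ} {c1 c2 : ℤ → V} {ι : Type}
    {q1 q2 J1 J2 : ι → ℤ} {r1 r2 : ℤ} {Q : ι → List V}

theorem Fam.mkConf (h : Fam G n c1 c2 ι q1 q2 J1 J2 r1 r2 Q) (U : List Nat) (τ1 τ2 : Nat → ℤ)
    (hU : U ≠ [])
    (hE : ∀ x ∈ U, ∃ e, J1 e = τ1 (x / 4) ∧ J2 e = τ2 (x % 4))
    (hinj : ∀ x ∈ U, ∀ y ∈ U, τ1 (x / 4) = τ1 (y / 4) → τ2 (x % 4) = τ2 (y % 4) → x = y) :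
    ∃ φ : Nat → ι, Conf G n c1 c2 U (fun e => q1 (φ e)) (fun e => q2 (φ e)) (· / 4) (· % 4)
      (fun e => Q (φ e)) ∧
      (∀ x ∈ U, ∀ y ∈ U, τ1 (x / 4) < τ1 (y / 4) → q1 (φ x) < q1 (φ y)) ∧
      (∀ x ∈ U, ∀ y ∈ U, τ2 (x % 4) < τ2 (y % 4) → q2 (φ x) < q2 (φ y)) := by
  have hne : Nonempty ι := by
    obtain ⟨x, hx⟩ := List.exists_mem_of_ne_nil U hU
    obtain ⟨e, _⟩ := hE x hx
    exact ⟨e⟩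
  have hE' : ∀ x, ∃ e, x ∈ U → J1 e = τ1 (x / 4) ∧ J2 e = τ2 (x % 4) := by
    intro x
    by_cases hx : x ∈ U
    · obtain ⟨e, he⟩ := hE x hx
      exact ⟨e, fun _ => he⟩
    · exact ⟨Classical.choice hne, fun h => absurd h hx⟩
  choose φ hφ using hE'
  refine ⟨φ, h.conf U φ _ _ ?_ ?_ ?_, ?_, ?_⟩
  · intro e he f hf hef
    apply hinj e he f hf
    · rw [← (hφ e he).1, ← (hφ f hf).1, hef]
    · rw [← (hφ e he).2, ← (hφ f hf).2, hef]
  · intro e he f hf hef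
    rw [(hφ e he).1, (hφ f hf).1]; rw [hef]
  · intro e he f hf hef
    rw [(hφ e he).2, (hφ f hf).2]; rw [hef]
  · intro x hx y hy hxy
    rw [← (hφ x hx).1, ← (hφ y hy).1] at hxy
    have := h.lt1 _ _ hxy
    have := h.w1 (φ y)
    omega
  · intro x hx y hy hxy
    rw [← (hφ x hx).2, ← (hφ y hy).2] at hxy
    have := h.lt2 _ _ hxy
    have := h.w2 (φ y)
    omega

theorem Fam.noK (h : Fam G n c1 c2 ι q1 q2 J1 J2 r1 r2 Q) (σ1 σ2 : Nat → ℤ)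
    (h1 : ∀ i < 3, ∀ j < 3, i ≠ j → σ1 i ≠ σ1 j) (h2 : ∀ i < 3, ∀ j < 3, i ≠ j → σ2 i ≠ σ2 j)
    (hE : ∀ i < 3, ∀ j < 3, ∃ e, J1 e = σ1 i ∧ J2 e = σ2 j) : False := by
  obtain ⟨π1, a1, a2, -, a3, a4⟩ := sort3 σ1 h1
  obtain ⟨π2, b1, b2, -, b3, b4⟩ := sort3 σ2 h2
  have hU : ∀ x ∈ UK1, x / 4 < 3 ∧ x % 4 < 3 := by decide
  obtain ⟨φ, hC, hm1, hm2⟩ := h.mkConf UK1 (fun i => σ1 (π1 i)) (fun i => σ2 (π2 i)) (by decide)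
    (fun x hx => hE _ (a1 _ (hU x hx).1) _ (b1 _ (hU x hx).2))
    (by
      intro x hx y hy e1 e2
      have q1 : x / 4 = y / 4 := by
        by_contra hne
        exact h1 _ (a1 _ (hU x hx).1) _ (a1 _ (hU y hy).1) (a2 _ (hU x hx).1 _ (hU y hy).1 hne) e1
      have q2 : x % 4 = y % 4 := by
        by_contra hne
        exact h2 _ (b1 _ (hU x hx).2) _ (b1 _ (hU y hy).2) (b2 _ (hU x hx).2 _ (hU y hy).2 hne) e2
      omega)
  refine hC.final chkK rK (by simp) (by decide) ?_ ?_
  · intro x hx y hy hxy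
    apply hm1 x hx y hy
    have := (hU x hx).1
    have := (hU y hy).1
    unfold blkL at hxy
    generalize x / 4 = i at *
    generalize y / 4 = j at *
    have : (i = 0 ∧ j = 1) ∨ (i = 0 ∧ j = 2) ∨ (i = 1 ∧ j = 2) := by omega
    rcases this with ⟨rfl, rfl⟩ | ⟨rfl, rfl⟩ | ⟨rfl, rfl⟩
    · exact a3
    · exact a3.trans a4
    · exact a4
  · intro x hx y hy hxy
    apply hm2 x hx y hy
    have i1 := (hU x hx).2
    have i2 := (hU y hy).2
    unfold blkR at hxy
    generalize x % 4 = i at *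
    generalize y % 4 = j at *
    have : (i = 0 ∧ j = 1) ∨ (i = 0 ∧ j = 2) ∨ (i = 1 ∧ j = 2) := by
      clear hm1 hm2 hC
      interval_cases i <;> interval_cases j <;> simp [rK] at hxy ⊢
    rcases this with ⟨rfl, rfl⟩ | ⟨rfl, rfl⟩ | ⟨rfl, rfl⟩
    · exact b3
    · exact b3.trans b4
    · exact b4

theorem UQ_mem : ∀ x ∈ UQ1, x / 4 < 4 ∧ x % 4 < 4 ∧ (x / 4 ≠ x % 4 ∨ x / 4 = 3) := by decide

theorem blk_Q (τ1 : Nat → ℤ) (t0 : τ1 3 < τ1 0) (t1 : τ1 0 < τ1 1) (t2 : τ1 1 < τ1 2) (x y : Nat)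
    (hx : x / 4 < 4) (hy : y / 4 < 4) (hxy : blkL x < blkL y) : τ1 (x / 4) < τ1 (y / 4) := by
  unfold blkL at hxy
  generalize x / 4 = i at *
  generalize y / 4 = j at *
  interval_cases i <;> interval_cases j <;> simp at hxy <;> omega

theorem Fam.noQdir (h : Fam G n c1 c2 ι q1 q2 J1 J2 r1 r2 Q) (τ1 τ2 : Nat → ℤ)
    (h1 : ∀ i < 4, ∀ j < 4, i ≠ j → τ1 i ≠ τ1 j) (h2 : ∀ i < 4, ∀ j < 4, i ≠ j → τ2 i ≠ τ2 j)
    (hE : ∀ i < 4, ∀ j < 4, i ≠ j ∨ i = 3 → ∃ e, J1 e = τ1 i ∧ J2 e = τ2 j)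
    (t0 : τ1 3 < τ1 0) (t1 : τ1 0 < τ1 1) (t2 : τ1 1 < τ1 2)
    (r : RD) (hr : r ∈ [rQ0, rQ1, rQ2])
    (hw : (∀ i < 4, ∀ j < 4, r.w.getD i 0 < r.w.getD j 0 → τ2 i < τ2 j) ∨
      (∀ i < 4, ∀ j < 4, r.w.getD i 0 < r.w.getD j 0 → τ2 j < τ2 i)) : False := by
  obtain ⟨φ, hC, hm1, hm2⟩ := h.mkConf UQ1 τ1 τ2 (by decide)
    (fun x hx => hE _ (UQ_mem x hx).1 _ (UQ_mem x hx).2.1 (UQ_mem x hx).2.2)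
    (by
      intro x hx y hy e1 e2
      have q1 : x / 4 = y / 4 := by
        by_contra hne
        exact h1 _ (UQ_mem x hx).1 _ (UQ_mem y hy).1 hne e1
      have q2 : x % 4 = y % 4 := by
        by_contra hne
        exact h2 _ (UQ_mem x hx).2.1 _ (UQ_mem y hy).2.1 hne e2
      omega)
  have hb1 : ∀ x ∈ UQ1, ∀ y ∈ UQ1, blkL x < blkL y → q1 (φ x) < q1 (φ y) :=
    fun x hx y hy hxy => hm1 x hx y hy (blk_Q τ1 t0 t1 t2 x y (UQ_mem x hx).1 (UQ_mem y hy).1 hxy)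
  rcases hw with hw | hw
  · exact hC.final chkQ r hr (by decide) hb1 fun x hx y hy hxy =>
      hm2 x hx y hy (hw _ (UQ_mem x hx).2.1 _ (UQ_mem y hy).2.1 hxy)
  · exact hC.rev2.final chkQ r hr (by decide) hb1 fun x hx y hy hxy => by
      have := hm2 y hy x hx (hw _ (UQ_mem x hx).2.1 _ (UQ_mem y hy).2.1 hxy)
      omega

theorem Fam.noQrev (h : Fam G n c1 c2 ι q1 q2 J1 J2 r1 r2 Q) (τ1 τ2 : Nat → ℤ)
    (h1 : ∀ i < 4, ∀ j < 4, i ≠ j → τ1 i ≠ τ1 j) 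
    (hE : ∀ i < 4, ∀ j < 4, i ≠ j ∨ i = 3 → ∃ e, J1 e = τ1 i ∧ J2 e = τ2 j)
    (t0 : τ1 3 < τ1 0) (t1 : τ1 0 < τ1 1) (t2 : τ1 1 < τ1 2)
    (r : RD) (hr : r ∈ [rQ0, rQ1, rQ2]) (a b c : Nat) (ha : τ2 3 < τ2 a) (hab : τ2 a < τ2 b)
    (hbc : τ2 b < τ2 c)
    (hp : (a = 2 ∧ b = 1 ∧ c = 0 ∧ r.w = [1,2,3,0]) ∨ (a = 1 ∧ b = 2 ∧ c = 0 ∧ r.w = [1,3,2,0]) ∨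
      (a = 2 ∧ b = 0 ∧ c = 1 ∧ r.w = [2,1,3,0])) : False := by
  obtain ⟨e3, x1, x2⟩ := hE 3 (by decide) 3 (by decide) (by simp)
  obtain ⟨ea, y1, y2⟩ := hE 3 (by decide) a (by omega) (by simp)
  obtain ⟨ec, z1, z2⟩ := hE 3 (by decide) c (by omega) (by simp)
  have wc := h.w2 ec
  have w3 := h.w2 e3
  have hlt : τ2 c < τ2 3 + n := by omega
  have n0 : 0 < n := by omega
  have v3 : ¬ τ2 a ≤ τ2 3 := by omega
  have va : τ2 a ≤ τ2 a := le_rfl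
  have vb : τ2 a ≤ τ2 b := by omega
  have vc : τ2 a ≤ τ2 c := by omega
  refine (h.rot2 ea).noQdir τ1 (fun i => if τ2 a ≤ τ2 i then τ2 i else τ2 i + n) h1 ?_ ?_ t0 t1 t2 r hr
    (Or.inr ?_)
  · intro i hi j hj hij
    rcases hp with ⟨rfl, rfl, rfl, -⟩ | ⟨rfl, rfl, rfl, -⟩ | ⟨rfl, rfl, rfl, -⟩ <;>
    interval_cases i <;> interval_cases j <;> simp only [v3, va, vb, vc, if_true, if_false] <;>
      omega
  · intro i hi j hj hij
    obtain ⟨e, he1, he2⟩ := hE i hi j hj hij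
    exact ⟨e, he1, by simp only [rt, y2, he2]⟩
  · intro i hi j hj hij
    rcases hp with ⟨rfl, rfl, rfl, hr⟩ | ⟨rfl, rfl, rfl, hr⟩ | ⟨rfl, rfl, rfl, hr⟩ <;> rw [hr] at hij <;>
    interval_cases i <;> interval_cases j <;> simp at hij <;>
      simp only [v3, va, vb, vc, if_true, if_false] <;> omega

theorem Fam.noQmid (h : Fam G n c1 c2 ι q1 q2 J1 J2 r1 r2 Q) (τ1 τ2 : Nat → ℤ)
    (h1 : ∀ i < 4, ∀ j < 4, i ≠ j → τ1 i ≠ τ1 j) (h2 : ∀ i < 4, ∀ j < 4, i ≠ j → τ2 i ≠ τ2 j)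
    (hE : ∀ i < 4, ∀ j < 4, i ≠ j ∨ i = 3 → ∃ e, J1 e = τ1 i ∧ J2 e = τ2 j)
    (t0 : τ1 3 < τ1 0) (t1 : τ1 0 < τ1 1) (t2 : τ1 1 < τ1 2)
    (t3 : ∀ i < 3, τ2 3 < τ2 i) : False := by
  have h01 := h2 0 (by decide) 1 (by decide) (by decide)
  have h02 := h2 0 (by decide) 2 (by decide) (by decide)
  have h12 := h2 1 (by decide) 2 (by decide) (by decide)
  have s0 := t3 0 (by decide)
  have s1 := t3 1 (by decide)
  have s2 := t3 2 (by decide)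
  rcases lt_or_gt_of_ne h01 with a | a <;> rcases lt_or_gt_of_ne h02 with b | b <;>
    rcases lt_or_gt_of_ne h12 with c | c
  · refine h.noQdir τ1 τ2 h1 h2 hE t0 t1 t2 rQ0 (by simp) (Or.inl ?_)
    intro i hi j hj hij
    interval_cases i <;> interval_cases j <;> simp [rQ0] at hij <;> omega
  · refine h.noQdir τ1 τ2 h1 h2 hE t0 t1 t2 rQ1 (by simp) (Or.inl ?_)
    intro i hi j hj hij
    interval_cases i <;> interval_cases j <;> simp [rQ1] at hij <;> omega
  · omega
  · exact h.noQrev τ1 τ2 h1 hE t0 t1 t2 rQ2 (by simp) 2 0 1 s2 b a (by simp [rQ2])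
  · refine h.noQdir τ1 τ2 h1 h2 hE t0 t1 t2 rQ2 (by simp) (Or.inl ?_)
    intro i hi j hj hij
    interval_cases i <;> interval_cases j <;> simp [rQ2] at hij <;> omega
  · omega
  · exact h.noQrev τ1 τ2 h1 hE t0 t1 t2 rQ1 (by simp) 1 2 0 s1 c b (by simp [rQ1])
  · exact h.noQrev τ1 τ2 h1 hE t0 t1 t2 rQ0 (by simp) 2 1 0 s2 c a (by simp [rQ0])

theorem rot_lab (σ : Nat → ℤ) (n : ℕ) (r : ℤ) (hσ : ∀ i < 4, r ≤ σ i ∧ σ i < r + n)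
    (hi : ∀ i < 4, ∀ j < 4, i ≠ j → σ i ≠ σ j) :
    (∀ i < 4, ∀ j < 4, i ≠ j → (if σ 3 ≤ σ i then σ i else σ i + n) ≠
      (if σ 3 ≤ σ j then σ j else σ j + n)) ∧
    ∀ i < 3, (if σ 3 ≤ σ 3 then σ 3 else σ 3 + n) < (if σ 3 ≤ σ i then σ i else σ i + n) := by
  constructor
  · intro i h1 j h2 hij
    have := hi i h1 j h2 hij
    have := hσ i h1
    have := hσ j h2
    split_ifs <;> omega
  · intro i h1
    have := hi i (by omega) 3 (by omega) (by omega)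
    have := hσ i (by omega)
    have := hσ 3 (by omega)
    split_ifs <;> omega

theorem Fam.noQ (h : Fam G n c1 c2 ι q1 q2 J1 J2 r1 r2 Q) (σ1 σ2 : Nat → ℤ)
    (h1 : ∀ i < 4, ∀ j < 4, i ≠ j → σ1 i ≠ σ1 j) (h2 : ∀ i < 4, ∀ j < 4, i ≠ j → σ2 i ≠ σ2 j)
    (hE : ∀ i < 4, ∀ j < 4, i ≠ j ∨ i = 3 → ∃ e, J1 e = σ1 i ∧ J2 e = σ2 j) : False := by
  have hσ1 : ∀ i < 4, r1 ≤ σ1 i ∧ σ1 i < r1 + n := by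
    intro i hi
    obtain ⟨e, he, _⟩ := hE i hi (if i = 3 then 3 else 3) (by simp) (by simp; omega)
    have := h.w1 e; omega
  have hσ2 : ∀ i < 4, r2 ≤ σ2 i ∧ σ2 i < r2 + n := by
    intro i hi
    obtain ⟨e, _, he⟩ := hE 3 (by decide) i hi (by simp)
    have := h.w2 e; omega
  obtain ⟨e0, x1, x2⟩ := hE 3 (by decide) 3 (by decide) (by simp)
  obtain ⟨i1, m1⟩ := rot_lab σ1 n r1 hσ1 h1
  obtain ⟨i2, m2⟩ := rot_lab σ2 n r2 hσ2 h2
  have h' := (h.rot1 e0).rot2 e0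
  have hE' : ∀ i < 4, ∀ j < 4, i ≠ j ∨ i = 3 → ∃ e,
      rt n (J1 e0) J1 J1 e = (fun i => if σ1 3 ≤ σ1 i then σ1 i else σ1 i + n) i ∧
      rt n (J2 e0) J2 J2 e = (fun i => if σ2 3 ≤ σ2 i then σ2 i else σ2 i + n) j := by
    intro i hi j hj hij
    obtain ⟨e, a, b⟩ := hE i hi j hj hij
    exact ⟨e, by simp only [rt, a, x1], by simp only [rt, b, x2]⟩
  obtain ⟨π, a1, a2, a3, a4, a5⟩ := sort3 (fun i => if σ1 3 ≤ σ1 i then σ1 i else σ1 i + n)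
    fun i hi j hj => i1 i (by omega) j (by omega)
  have b1 : ∀ i < 4, π i < 4 := by
    intro i hi
    by_cases hh : i = 3
    · subst hh; omega
    · have := a1 i (by omega); omega
  have b2 : ∀ i < 4, ∀ j < 4, i ≠ j → π i ≠ π j := by
    intro i hi j hj hij
    by_cases hh : i = 3
    · subst hh
      have := a1 j (by omega); omega
    · by_cases hh' : j = 3
      · subst hh'
        have := a1 i (by omega); omega
      · exact a2 i (by omega) j (by omega) hij
  refine h'.noQmid (fun i => (fun i => if σ1 3 ≤ σ1 i then σ1 i else σ1 i + n) (π i))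
    (fun i => (fun i => if σ2 3 ≤ σ2 i then σ2 i else σ2 i + n) (π i)) ?_ ?_ ?_ ?_ a4 a5 ?_
  · exact fun i hi j hj hij => i1 _ (b1 i hi) _ (b1 j hj) (b2 i hi j hj hij)
  · exact fun i hi j hj hij => i2 _ (b1 i hi) _ (b1 j hj) (b2 i hi j hj hij)
  · intro i hi j hj hij
    refine hE' _ (b1 i hi) _ (b1 j hj) ?_
    rcases hij with hij | rfl
    · exact Or.inl (b2 i hi j hj hij)
    · exact Or.inr a3
  · have := m1 (π 0) (a1 0 (by decide)); simp only [a3]; exact this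
  · intro i hi
    have := m2 (π i) (a1 i hi); simp only [a3]; exact this

end SepT

namespace SepT

section Menger
variable {V : Type} [DecidableEq V]

/-- reachable from `A` avoiding `S` -/
inductive Rch (G : SimpleGraph V) (A S : Finset V) : V → Prop
  | base (v : V) : v ∈ A → v ∉ S → Rch G A S v
  | step (u v : V) : Rch G A S u → G.Adj u v → v ∉ S → Rch G A S v

theorem Rch.notin {G : SimpleGraph V} {A S : Finset V} {v : V} (h : Rch G A S v) : v ∉ S := by
  cases h <;> assumption

def Sep (G : SimpleGraph V) (A B S : Finset V) : Prop := ∀ v, Rch G A S v → v ∉ B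

theorem Sep.both {G : SimpleGraph V} {A B S : Finset V} (h : Sep G A B S) (v : V)
    (hb : Rch G B S v) : ¬ Rch G A S v := by
  induction hb with
  | base v hv _ => exact fun ha => h v ha hv
  | step u v hu huv hv ih => exact fun ha => ih (Rch.step v u ha huv.symm hu.notin)

theorem Sep.symm {G : SimpleGraph V} {A B S : Finset V} (h : Sep G A B S) : Sep G B A S :=
  fun v hb ha => h.both v hb (Rch.base v ha hb.notin)

theorem PT_Rch {G : SimpleGraph V} {A S : Finset V} {x y : V} {L : List V} (h : PT G x L y)
    (hx : Rch G A S x) (hL : ∀ v ∈ L, v ∉ S) : Rch G A S y := by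
  induction L generalizing x with
  | nil => cases h; exact hx
  | cons a L ih =>
    exact ih h.2 (Rch.step x a hx h.1 (hL a (by simp))) fun v hv => hL v (by simp [hv])

theorem Rch_PT {G : SimpleGraph V} {A S : Finset V} {y : V} (h : Rch G A S y) :
    ∃ x ∈ A, ∃ L, PT G x L y ∧ ∀ v ∈ x :: L, v ∉ S := by
  induction h with
  | base v hv hs => exact ⟨v, hv, [], rfl, by simpa using hs⟩
  | step u v hu huv hv ih =>
    obtain ⟨x, hx, L, h1, h2⟩ := ih
    refine ⟨x, hx, L ++ [v], PT_append h1 ⟨huv, rfl⟩, ?_⟩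
    intro w hw
    rw [← List.cons_append, List.mem_append, List.mem_singleton] at hw
    rcases hw with hw | rfl
    · exact h2 w hw
    · exact hv

def WP (G : SimpleGraph V) (A B : Finset V) (R : List V) : Prop :=
  ∃ x L y, R = x :: L ∧ PT G x L y ∧ x ∈ A ∧ y ∈ B ∧ R.Nodup

def SP (G : SimpleGraph V) (A B : Finset V) (R : List V) (x y : V) : Prop :=
  ∃ L, R = x :: L ∧ PT G x L y ∧ x ∈ A ∧ y ∈ B ∧ R.Nodup ∧ (∀ v ∈ R, v ∈ A → v = x) ∧
    (∀ v ∈ R, v ∈ B → v = y)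

theorem SP.rev {G : SimpleGraph V} {A B : Finset V} {R : List V} {x y : V} (h : SP G A B R x y) :
    SP G B A R.reverse y x := by
  obtain ⟨L, rfl, h1, h2, h3, h4, h5, h6⟩ := h
  obtain ⟨M, m1, m2⟩ := PT_reverse h1
  exact ⟨M, m1, m2, h3, h2, by rwa [List.nodup_reverse],
    fun v hv => h6 v (by rwa [List.mem_reverse] at hv), fun v hv => h5 v (by rwa [List.mem_reverse] at hv)⟩

theorem SP.mem_end {G : SimpleGraph V} {A B : Finset V} {R : List V} {x y : V} (h : SP G A B R x y) :
    y ∈ R := by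
  obtain ⟨L, rfl, h1, _⟩ := h
  exact PT_mem h1

theorem SP.mem_start {G : SimpleGraph V} {A B : Finset V} {R : List V} {x y : V}
    (h : SP G A B R x y) : x ∈ R := by
  obtain ⟨L, rfl, h1, _⟩ := h
  simp

theorem PT_pre {G : SimpleGraph V} {x y v : V} {L M N : List V} (h : PT G x L y)
    (hs : x :: L = M ++ v :: N) : ∃ L', M ++ [v] = x :: L' ∧ PT G x L' v := by
  cases M with
  | nil =>
    simp only [List.nil_append, List.cons.injEq] at hs
    obtain ⟨rfl, rfl⟩ := hs
    exact ⟨[], rfl, rfl⟩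
  | cons a M =>
    simp only [List.cons_append, List.cons.injEq] at hs
    obtain ⟨rfl, rfl⟩ := hs
    refine ⟨M ++ [v], rfl, ?_⟩
    rw [show M ++ v :: N = (M ++ [v]) ++ N by simp] at h
    obtain ⟨w, h1, h2⟩ := PT_split h
    rw [PT_last h1] at h1; exact h1

theorem PT_suf {G : SimpleGraph V} {x y v : V} {L M N : List V} (h : PT G x L y)
    (hs : x :: L = M ++ v :: N) : PT G v N y := by
  cases M with
  | nil =>
    simp only [List.nil_append, List.cons.injEq] at hs
    obtain ⟨rfl, rfl⟩ := hs
    exact h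
  | cons a M =>
    simp only [List.cons_append, List.cons.injEq] at hs
    obtain ⟨rfl, rfl⟩ := hs
    rw [show M ++ v :: N = (M ++ [v]) ++ N by simp] at h
    obtain ⟨w, h1, h2⟩ := PT_split h
    rw [PT_last h1] at h2; exact h2

theorem shrink (G : SimpleGraph V) (A B : Finset V) (k : ℕ) : ∀ R : List V, R.length = k → WP G A B R →
    ∃ R' x y, SP G A B R' x y ∧ ∀ v ∈ R', v ∈ R := by
  induction k using Nat.strong_induction_on with
  | _ k ih =>
  intro R hk hR
  have hR' := hR
  obtain ⟨x, L, y, rfl, h1, h2, h3, h4⟩ := hR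
  by_cases ha : ∃ v ∈ x :: L, v ∈ A ∧ v ≠ x
  · obtain ⟨v, hv, hvA, hvx⟩ := ha
    obtain ⟨M, N, hs⟩ := List.append_of_mem hv
    have hp := PT_suf h1 hs
    have hM : M ≠ [] := by rintro rfl; simp at hs; exact hvx hs.1.symm
    have hMl := List.length_pos_iff.2 hM
    obtain ⟨R', a, b, q1, q2⟩ := ih (v :: N).length (by
      rw [← hk, hs]; simp; omega) (v :: N) rfl ⟨v, N, y, rfl, hp, hvA, h3, by
        rw [hs] at h4; exact h4.of_append_right⟩
    exact ⟨R', a, b, q1, fun w hw => by rw [hs]; simp only [List.mem_append]; right; exact q2 w hw⟩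
  by_cases hb : ∃ v ∈ x :: L, v ∈ B ∧ v ≠ y
  · obtain ⟨v, hv, hvB, hvy⟩ := hb
    obtain ⟨M, N, hs⟩ := List.append_of_mem hv
    obtain ⟨L', l1, l2⟩ := PT_pre h1 hs
    have hsuf := PT_suf h1 hs
    have hN : N ≠ [] := by rintro rfl; exact hvy hsuf
    have hNl := List.length_pos_iff.2 hN
    have hs' : x :: L = (x :: L') ++ N := by rw [hs, ← l1]; simp
    obtain ⟨R', a, b, q1, q2⟩ := ih (x :: L').length (by
      rw [← hk, hs', List.length_append]; omega) (x :: L') rfl ⟨x, L', v, rfl, l2, h2, hvB, by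
        rw [hs'] at h4; exact h4.of_append_left⟩
    exact ⟨R', a, b, q1, fun w hw => by rw [hs', List.mem_append]; left; exact q2 w hw⟩
  push Not at ha hb
  exact ⟨x :: L, x, y, ⟨L, rfl, h1, h2, h3, h4, ha, hb⟩, fun v hv => hv⟩

def Lnk (G : SimpleGraph V) (A B : Finset V) (k : ℕ) : Prop :=
  ∃ (Z : Finset V) (R : V → List V), Z.card = k ∧ (∀ s ∈ Z, WP G A B (R s)) ∧
    ∀ s ∈ Z, ∀ t ∈ Z, s ≠ t → List.Disjoint (R s) (R t)

theorem Lnk.strong {G : SimpleGraph V} {A B : Finset V} {k : ℕ} (h : Lnk G A B k) :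
    ∃ (Z : Finset V) (R : V → List V) (x y : V → V), Z.card = k ∧
    (∀ s ∈ Z, SP G A B (R s) (x s) (y s)) ∧
    ∀ s ∈ Z, ∀ t ∈ Z, s ≠ t → List.Disjoint (R s) (R t) := by
  obtain ⟨Z, R, h1, h2, h3⟩ := h
  have : ∀ s, ∃ R' x y, s ∈ Z → SP G A B R' x y ∧ ∀ v ∈ R', v ∈ R s := by
    intro s
    by_cases hs : s ∈ Z
    · obtain ⟨R', x, y, h⟩ := shrink G A B _ (R s) rfl (h2 s hs)
      exact ⟨R', x, y, fun _ => h⟩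
    · exact ⟨[], s, s, fun h => absurd h hs⟩
  choose R' x y h4 using this
  exact ⟨Z, R', x, y, h1, fun s hs => (h4 s hs).1, fun s hs t ht hst v hv hv' =>
    h3 s hs t ht hst ((h4 s hs).2 v hv) ((h4 t ht).2 v hv')⟩

theorem Lnk.byEnd {G : SimpleGraph V} {A X : Finset V} (h : Lnk G A X X.card) :
    ∃ (R : V → List V) (x : V → V), (∀ s ∈ X, SP G A X (R s) (x s) s) ∧
    ∀ s ∈ X, ∀ t ∈ X, s ≠ t → List.Disjoint (R s) (R t) := by
  obtain ⟨Z, R, x, y, h1, h2, h3⟩ := h.strong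
  have hinj : Set.InjOn y (Z : Set V) := by
    intro s hs t ht hst
    by_contra hne
    exact h3 s hs t ht hne (h2 s hs).mem_end (hst ▸ (h2 t ht).mem_end)
  have hsub : Z.image y ⊆ X := by
    intro v hv
    rw [Finset.mem_image] at hv
    obtain ⟨s, hs, rfl⟩ := hv
    obtain ⟨L, _, _, _, h, _⟩ := h2 s hs
    exact h
  have heq : Z.image y = X :=
    Finset.eq_of_subset_of_card_le hsub (by rw [Finset.card_image_of_injOn hinj, h1])
  have : ∀ b, ∃ s, b ∈ X → s ∈ Z ∧ y s = b := by
    intro b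
    by_cases hb : b ∈ X
    · rw [← heq, Finset.mem_image] at hb
      obtain ⟨s, hs, h⟩ := hb
      exact ⟨s, fun _ => ⟨hs, h⟩⟩
    · exact ⟨b, fun h => absurd h hb⟩
  choose f hf using this
  refine ⟨fun b => R (f b), fun b => x (f b), fun b hb => ?_, fun b hb c hc hbc => ?_⟩
  · have := h2 _ (hf b hb).1
    rwa [(hf b hb).2] at this
  · refine h3 _ (hf b hb).1 _ (hf c hc).1 fun h => hbc ?_
    rw [← (hf b hb).2, h, (hf c hc).2]

theorem adj_del {G : SimpleGraph V} {x y u v : V} (h : G.Adj u v) (h1 : u ≠ x ∨ v ≠ y)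
    (h2 : u ≠ y ∨ v ≠ x) : (G.deleteEdges {s(x, y)}).Adj u v := by
  rw [deleteEdges_adj]
  refine ⟨h, ?_⟩
  rw [Set.mem_singleton_iff, Sym2.eq_iff]
  tauto

theorem sepX {G : SimpleGraph V} {A B S : Finset V} {x y : V}
    (hS : Sep (G.deleteEdges {s(x, y)}) A B S) : Sep G A B (insert x S) := by
  intro v hv
  refine hS v ?_
  induction hv with
  | base v h1 h2 => exact Rch.base v h1 fun h => h2 (by simp [h])
  | step u v hu huv hv ih =>
    have h1 := hu.notin
    simp only [Finset.mem_insert, not_or] at h1 hv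
    exact Rch.step u v ih (adj_del huv (Or.inl h1.1) (Or.inr hv.1)) hv.2

theorem half {G : SimpleGraph V} {A B S T : Finset V} {x y : V}
    (hS : Sep (G.deleteEdges {s(x, y)}) A B S) (hy : ¬ Rch (G.deleteEdges {s(x, y)}) A S y)
    (hT : Sep (G.deleteEdges {s(x, y)}) A (insert x S) T) : Sep G A B T := by
  have hsub : ∀ v, Rch (G.deleteEdges {s(x, y)}) A T v → Rch (G.deleteEdges {s(x, y)}) A S v := by
    intro v hv
    induction hv with
    | base v h1 h2 =>
      have := hT v (Rch.base v h1 h2)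
      exact Rch.base v h1 fun h => this (by simp [h])
    | step u v hu huv hv ih =>
      have := hT v (Rch.step u v hu huv hv)
      exact Rch.step u v ih huv fun h => this (by simp [h])
  intro v hv
  refine hS v (hsub v ?_)
  induction hv with
  | base v h1 h2 => exact Rch.base v h1 h2
  | step u v hu huv hv ih =>
    have h1 : u ≠ x := by
      rintro rfl; exact hT u ih (by simp)
    have h2 : u ≠ y := by
      rintro rfl; exact hy (hsub u ih)
    exact Rch.step u v ih (adj_del huv (Or.inl h1) (Or.inl h2)) hv

theorem some_end {G : SimpleGraph V} {A B S : Finset V} {x y : V}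
    (hS : Sep (G.deleteEdges {s(x, y)}) A B S) (hn : ¬ Sep G A B S) :
    Rch (G.deleteEdges {s(x, y)}) A S x ∨ Rch (G.deleteEdges {s(x, y)}) A S y := by
  by_contra hc
  rw [not_or] at hc
  apply hn
  intro v hv
  refine hS v ?_
  induction hv with
  | base v h1 h2 => exact Rch.base v h1 h2
  | step u v hu huv hv ih =>
    have h1 : u ≠ x := by
      rintro rfl; exact hc.1 ih
    have h2 : u ≠ y := by
      rintro rfl; exact hc.2 ih
    exact Rch.step u v ih (adj_del huv (Or.inl h1) (Or.inl h2)) hv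

theorem SP.rch {G : SimpleGraph V} {A X S : Finset V} {R : List V} {x y v : V} (h : SP G A X R x y)
    (hS : S ⊆ X) (hv : v ∈ R) (hvy : v ≠ y) : Rch G A S v := by
  obtain ⟨L, rfl, h1, h2, h3, h4, h5, h6⟩ := h
  obtain ⟨M, N, hs⟩ := List.append_of_mem hv
  obtain ⟨L', l1, l2⟩ := PT_pre h1 hs
  have hsuf := PT_mem (PT_suf h1 hs)
  have hav : ∀ w ∈ x :: L', w ∉ S := by
    intro w hw hwS
    have hwL : w ∈ x :: L := by
      rw [← l1] at hw
      rw [hs]; simp only [List.mem_append, List.mem_singleton, List.mem_cons] at hw ⊢; tauto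
    have hwy := h6 w hwL (hS hwS)
    subst hwy
    rw [← l1, List.mem_append, List.mem_singleton] at hw
    rcases hw with hw | hw
    · rw [hs, List.nodup_append] at h4
      exact h4.2.2 w hw w hsuf rfl
    · exact hvy hw.symm
  exact PT_Rch l2 (Rch.base x h2 (hav x (by simp))) fun w hw => hav w (by simp [hw])

theorem PT_mono {G H : SimpleGraph V} (hle : G ≤ H) {x y : V} {L : List V} (h : PT G x L y) :
    PT H x L y := by
  induction L generalizing x with
  | nil => exact h
  | cons a L ih => exact ⟨hle h.1, ih h.2⟩

theorem combine {G : SimpleGraph V} {A B S : Finset V} {x y : V} (hxy : G.Adj x y)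
    (hS : Sep (G.deleteEdges {s(x, y)}) A B S) (hxS : x ∉ S) (hyS : y ∉ S)
    (hyA : ¬ Rch (G.deleteEdges {s(x, y)}) A S y) (hxB : ¬ Rch (G.deleteEdges {s(x, y)}) B S x)
    (hP : Lnk (G.deleteEdges {s(x, y)}) A (insert x S) (insert x S).card)
    (hQ : Lnk (G.deleteEdges {s(x, y)}) B (insert y S) (insert y S).card) :
    Lnk G A B (insert x S).card := by
  obtain ⟨P, a, p1, p2⟩ := hP.byEnd
  obtain ⟨Q, b, u1, u2⟩ := hQ.byEnd
  have hle : G.deleteEdges {s(x, y)} ≤ G := deleteEdges_le _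
  have hne : x ≠ y := hxy.ne
  have key : ∀ s ∈ insert x S, ∀ t ∈ insert y S, ∀ v, v ∈ P s → v ∈ Q t → s = t ∧ v = s := by
    intro s hs t ht v hv hv'
    have a1 : v ≠ s → Rch _ A S v := fun h => (p1 s hs).rch (Finset.subset_insert _ _) hv h
    have a2 : v ≠ t → Rch _ B S v := fun h => (u1 t ht).rch (Finset.subset_insert _ _) hv' h
    by_cases e1 : v = s
    · by_cases e2 : v = t
      · exact ⟨e1.symm.trans e2, e1⟩
      · exfalso
        have := a2 e2
        subst e1
        rw [Finset.mem_insert] at hs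
        rcases hs with rfl | hs
        · exact hxB this
        · exact this.notin hs
    · exfalso
      by_cases e2 : v = t
      · have := a1 e1
        subst e2
        rw [Finset.mem_insert] at ht
        rcases ht with rfl | ht
        · exact hyA this
        · exact this.notin ht
      · exact hS.both v (a2 e2) (a1 e1)
  let τ : V → V := fun s => if s = x then y else s
  have hτ : ∀ s ∈ insert x S, τ s ∈ insert y S := by
    intro s hs
    simp only [τ]
    split_ifs with h
    · simp
    · simp only [Finset.mem_insert] at hs ⊢; tauto
  have hτi : ∀ s ∈ insert x S, ∀ t ∈ insert x S, s ≠ t → τ s ≠ τ t := by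
    intro s hs t ht hst
    simp only [τ]
    simp only [Finset.mem_insert] at hs ht
    split_ifs with h1 h2 h2
    · exact absurd (h1.trans h2.symm) hst
    · rintro rfl; tauto
    · rintro rfl; tauto
    · exact hst
  -- the second half of the combined path
  let W : V → List V := fun s => if s = x then (Q y).reverse else (Q s).reverse.tail
  have hW : ∀ s ∈ insert x S, ∀ v ∈ W s, v ∈ Q (τ s) := by
    intro s hs v hv
    simp only [W, τ] at hv ⊢
    split_ifs at hv ⊢ with h
    · simpa using hv
    · have := List.mem_of_mem_tail hv; simpa using this
  refine ⟨insert x S, fun s => P s ++ W s, rfl, ?_, ?_⟩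
  · intro s hs
    obtain ⟨L, e1, e2, e3, e4, e5, e6, e7⟩ := p1 s hs
    obtain ⟨M, f1, f2, f3, f4, f5, f6, f7⟩ := (u1 _ (hτ s hs)).rev
    by_cases h : s = x
    · have hWs : W s = y :: M := by
        simp only [W, τ, if_pos h] at f1 ⊢; exact f1
      have hτs : τ s = y := by simp [τ, h]
      rw [hτs] at f2 f5 f1
      refine ⟨a s, L ++ W s, b (τ s), ?_, ?_, e3, by simpa [hτs] using f4, ?_⟩
      · simp only [e1, List.cons_append]
      · rw [hWs, hτs]
        refine PT_append (PT_mono hle e2) ⟨?_, PT_mono hle f2⟩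
        rw [h]; exact hxy
      · refine List.Nodup.append e5 (by rw [hWs, ← f1]; exact f5) ?_
        intro v hv hv'
        have := key s hs _ (hτ s hs) v hv (hW s hs v hv')
        rw [hτs, h] at this
        exact hne this.1
    · have hτs : τ s = s := by simp [τ, h]
      rw [hτs] at f1 f2 f4 f5
      have hWs : W s = M := by
        simp only [W, if_neg h, f1, List.tail_cons]
      refine ⟨a s, L ++ W s, b s, ?_, ?_, e3, f4, ?_⟩
      · simp only [e1, List.cons_append]
      · rw [hWs]
        exact PT_append (PT_mono hle e2) (PT_mono hle f2)
      · rw [f1, List.nodup_cons] at f5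
        refine List.Nodup.append e5 (by rw [hWs]; exact f5.2) ?_
        intro v hv hv'
        have := key s hs _ (hτ s hs) v hv (hW s hs v hv')
        rw [this.2, hWs] at hv'
        exact f5.1 hv'
  · intro s hs t ht hst v hv hv'
    simp only [List.mem_append] at hv hv'
    rcases hv with hv | hv <;> rcases hv' with hv' | hv'
    · exact p2 s hs t ht hst hv hv'
    · have q := key s hs _ (hτ t ht) v hv (hW t ht v hv')
      by_cases htx : t = x
      · have h1 : τ t = y := by simp [τ, htx]
        rw [h1] at q
        rw [Finset.mem_insert] at hs
        rcases hs with h2 | h2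
        · exact hst (h2.trans htx.symm)
        · exact hyS (q.1 ▸ h2)
      · have h1 : τ t = t := by simp [τ, htx]
        rw [h1] at q; exact hst q.1
    · have q := key t ht _ (hτ s hs) v hv' (hW s hs v hv)
      by_cases htx : s = x
      · have h1 : τ s = y := by simp [τ, htx]
        rw [h1] at q
        rw [Finset.mem_insert] at ht
        rcases ht with h2 | h2
        · exact hst (htx.trans h2.symm)
        · exact hyS (q.1 ▸ h2)
      · have h1 : τ s = s := by simp [τ, htx]
        rw [h1] at q; exact hst q.1.symm
    · exact u2 _ (hτ s hs) _ (hτ t ht) (hτi s hs t ht hst) (hW s hs v hv) (hW t ht v hv')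

theorem Lnk.mono {G H : SimpleGraph V} (hle : G ≤ H) {A B : Finset V} {k : ℕ} (h : Lnk G A B k) :
    Lnk H A B k := by
  obtain ⟨Z, R, h1, h2, h3⟩ := h
  refine ⟨Z, R, h1, fun s hs => ?_, h3⟩
  obtain ⟨x, L, y, a, b, c⟩ := h2 s hs
  exact ⟨x, L, y, a, PT_mono hle b, c⟩

theorem menger [Finite V] (m : ℕ) : ∀ (G : SimpleGraph V), G.edgeSet.ncard = m → ∀ (A B : Finset V)
    (k : ℕ), (∀ S, Sep G A B S → k ≤ S.card) → Lnk G A B k := by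
  induction m with
  | zero =>
    intro G hm A B k hk
    have he : G.edgeSet = ∅ := (Set.ncard_eq_zero (Set.toFinite _)).1 hm
    have hna : ∀ u v, ¬ G.Adj u v := by
      intro u v huv
      have : s(u, v) ∈ G.edgeSet := huv
      rw [he] at this; exact this
    have hc : k ≤ (A ∩ B).card := by
      apply hk
      intro v hv hB
      cases hv with
      | base _ h1 h2 => exact h2 (Finset.mem_inter.2 ⟨h1, hB⟩)
      | step u _ _ h _ => exact hna _ _ h
    obtain ⟨Z, hZ, hZc⟩ := Finset.exists_subset_card_eq hc
    refine ⟨Z, fun s => [s], hZc, fun s hs => ?_, fun s hs t ht hst => by simpa using hst.symm⟩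
    have := Finset.mem_inter.1 (hZ hs)
    exact ⟨s, [], s, rfl, rfl, this.1, this.2, by simp⟩
  | succ m ih =>
    intro G hm A B k hk
    have hne : G.edgeSet.Nonempty := by
      rw [Set.nonempty_iff_ne_empty]; intro h; rw [h] at hm; simp at hm
    obtain ⟨e, he⟩ := hne
    induction e using Sym2.ind with
    | _ x y =>
    have hxy : G.Adj x y := he
    have hdel : (G.deleteEdges {s(x, y)}).edgeSet.ncard = m := by
      rw [edgeSet_deleteEdges, Set.ncard_diff_singleton_of_mem he, hm]; rfl
    have hsw : G.deleteEdges {s(y, x)} = G.deleteEdges {s(x, y)} := by rw [Sym2.eq_swap]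
    by_cases hall : ∀ S, Sep (G.deleteEdges {s(x, y)}) A B S → k ≤ S.card
    · exact (ih _ hdel A B k hall).mono (deleteEdges_le _)
    push Not at hall
    obtain ⟨S, hS, hSk⟩ := hall
    have hnS : ¬ Sep G A B S := fun h => by have := hk S h; omega
    have hnS' : ¬ Sep G B A S := fun h => hnS h.symm
    have main : ∀ x y : V, G.Adj x y → (G.deleteEdges {s(x, y)}).edgeSet.ncard = m →
        Sep (G.deleteEdges {s(x, y)}) A B S →
        ¬ Rch (G.deleteEdges {s(x, y)}) A S y → ¬ Rch (G.deleteEdges {s(x, y)}) B S x →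
        Lnk G A B k := by
      intro x y hxy hdel hS hyA hxB
      have hsw : G.deleteEdges {s(y, x)} = G.deleteEdges {s(x, y)} := by rw [Sym2.eq_swap]
      have k1 := hk _ (sepX hS)
      have k2 := hk _ (sepX (x := y) (y := x) (by rw [hsw]; exact hS))
      have hxS : x ∉ S := fun h => by rw [Finset.insert_eq_of_mem h] at k1; omega
      have hyS : y ∉ S := fun h => by rw [Finset.insert_eq_of_mem h] at k2; omega
      have cx := Finset.card_insert_of_notMem hxS
      have cy := Finset.card_insert_of_notMem hyS
      have hkx : k = (insert x S).card := by omega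
      have hky : k = (insert y S).card := by omega
      rw [hkx]
      refine combine hxy hS hxS hyS hyA hxB (ih _ hdel _ _ _ ?_) (ih _ hdel _ _ _ ?_)
      · intro T hT
        rw [← hkx]; exact hk T (half hS hyA hT)
      · intro T hT
        rw [← hky]
        refine hk T (Sep.symm (half (x := y) (y := x) (S := S) ?_ ?_ ?_))
        · rw [hsw]; exact hS.symm
        · rw [hsw]; exact hxB
        · rw [hsw]; exact hT
    have r1 := some_end hS hnS
    have r2 := some_end hS.symm hnS'
    have b1 := hS.both x
    have b2 := hS.both y
    by_cases hx : Rch (G.deleteEdges {s(x, y)}) A S x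
    · exact main x y hxy hdel hS (by tauto) (by tauto)
    · refine main y x hxy.symm (by rw [hsw]; exact hdel) (by rw [hsw]; exact hS) (by rw [hsw]; exact hx)
        (by rw [hsw]; tauto)

end Menger
end SepT

namespace SepT

theorem bip {X ι : Type} (a b : ι → X) (J1 J2 : ι → ℤ) (hab : ∀ e f, a e ≠ b f)
    (hJ1 : ∀ e f, J1 e = J1 f ↔ a e = a f) (hJ2 : ∀ e f, J2 e = J2 f ↔ b e = b f)
    (F : SimpleGraph X)
    (hF : ∀ x y, F.Adj x y → ∃ e, (x = a e ∧ y = b e) ∨ (x = b e ∧ y = a e))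
    (N : ℕ) (R : ℕ → ℕ → Prop) (p q : ℕ → X)
    (hp : ∀ i < N + 1, ∀ j < N + 1, i ≠ j → p i ≠ p j)
    (hq : ∀ i < N + 1, ∀ j < N + 1, i ≠ j → q i ≠ q j)
    (hR : ∀ i < N + 1, ∀ j < N + 1, R i j → F.Adj (p i) (q j))
    (hN1 : ∀ i < N + 1, R i N) (hN2 : ∀ j < N + 1, R N j) (hA : ∃ e, p N = a e) :
    ∃ σ1 σ2 : ℕ → ℤ, (∀ i < N + 1, ∀ j < N + 1, i ≠ j → σ1 i ≠ σ1 j) ∧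
      (∀ i < N + 1, ∀ j < N + 1, i ≠ j → σ2 i ≠ σ2 j) ∧
      ∀ i < N + 1, ∀ j < N + 1, R i j → ∃ e, J1 e = σ1 i ∧ J2 e = σ2 j := by
  obtain ⟨e0, he0⟩ := hA
  have hB : ∀ j, ∃ e, j < N + 1 → q j = b e := by
    intro j
    by_cases hj : j < N + 1
    · obtain ⟨e, h | h⟩ := hF _ _ (hR N (by omega) j hj (hN2 j hj))
      · exact ⟨e, fun _ => h.2⟩
      · exact absurd (he0.symm.trans h.1) (hab _ _)
    · exact ⟨e0, fun h => absurd h hj⟩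
  choose eb heb using hB
  have hA : ∀ j, ∃ e, j < N + 1 → p j = a e := by
    intro j
    by_cases hj : j < N + 1
    · obtain ⟨e, h | h⟩ := hF _ _ (hR j hj N (by omega) (hN1 j hj))
      · exact ⟨e, fun _ => h.1⟩
      · exact absurd (h.2.symm.trans (heb N (by omega))) (hab _ _)
    · exact ⟨e0, fun h => absurd h hj⟩
  choose ea hea using hA
  refine ⟨fun i => J1 (ea i), fun i => J2 (eb i), ?_, ?_, ?_⟩
  · intro i hi j hj hij h
    exact hp i hi j hj hij (by rw [hea i hi, hea j hj]; exact (hJ1 _ _).1 h)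
  · intro i hi j hj hij h
    exact hq i hi j hj hij (by rw [heb i hi, heb j hj]; exact (hJ2 _ _).1 h)
  · intro i hi j hj hij
    obtain ⟨e, h | h⟩ := hF _ _ (hR i hi j hj hij)
    · refine ⟨e, (hJ1 _ _).2 ?_, (hJ2 _ _).2 ?_⟩
      · rw [← h.1, hea i hi]
      · rw [← h.2, heb j hj]
    · exact absurd ((hea i hi).symm.trans h.1) (hab _ _)

theorem Fam.graph {V : Type} {G : SimpleGraph V} {n : ℕ} {c1 c2 : ℤ → V} {ι : Type}
    {q1 q2 J1 J2 : ι → ℤ} {r1 r2 : ℤ} {Q : ι → List V}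
    (h : Fam G n c1 c2 ι q1 q2 J1 J2 r1 r2 Q) [Finite ι] (I : Finset V)
    (hI1 : ∀ e, c1 (J1 e) ∈ I) (hI2 : ∀ e, c2 (J2 e) ∈ I) :
    ∃ (m : ℕ) (F : SimpleGraph (Fin m)), m ≤ 2 * I.card ∧
      ¬ ContainsCopy Q3plus F ∧ ¬ ContainsCopy K33 F ∧ Nat.card ι ≤ F.edgeSet.ncard := by
  let eqv := Fintype.equivFin (I ⊕ I)
  let a : ι → Fin (Fintype.card (I ⊕ I)) := fun e => eqv (Sum.inl ⟨_, hI1 e⟩)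
  let b : ι → Fin (Fintype.card (I ⊕ I)) := fun e => eqv (Sum.inr ⟨_, hI2 e⟩)
  have hab : ∀ e f, a e ≠ b f := by
    intro e f hef
    have := eqv.injective hef
    simp at this
  have hJ1 : ∀ e f, J1 e = J1 f ↔ a e = a f := by
    intro e f
    constructor
    · intro hh; simp only [a, hh]
    · intro hh
      have := eqv.injective hh
      simp only [Sum.inl.injEq, Subtype.mk.injEq] at this
      refine h.cy1.eq_of_lt this ?_
      have := h.w1 e; have := h.w1 f
      rw [abs_lt]; constructor <;> omega
  have hJ2 : ∀ e f, J2 e = J2 f ↔ b e = b f := by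
    intro e f
    constructor
    · intro hh; simp only [b, hh]
    · intro hh
      have := eqv.injective hh
      simp only [Sum.inr.injEq, Subtype.mk.injEq] at this
      refine h.cy2.eq_of_lt this ?_
      have := h.w2 e; have := h.w2 f
      rw [abs_lt]; constructor <;> omega
  let F : SimpleGraph (Fin (Fintype.card (I ⊕ I))) :=
    { Adj := fun x y => ∃ e, (x = a e ∧ y = b e) ∨ (x = b e ∧ y = a e)
      symm := ⟨by
        rintro x y ⟨e, h | h⟩
        · exact ⟨e, Or.inr ⟨h.2, h.1⟩⟩
        · exact ⟨e, Or.inl ⟨h.2, h.1⟩⟩⟩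
      loopless := ⟨by
        rintro x ⟨e, h | h⟩
        · exact hab _ _ (h.1.symm.trans h.2)
        · exact hab _ _ (h.2.symm.trans h.1)⟩ }
  have hF : ∀ x y, F.Adj x y → ∃ e, (x = a e ∧ y = b e) ∨ (x = b e ∧ y = a e) :=
    fun x y hxy => hxy
  have hF' : ∀ x y, F.Adj x y → ∃ e, (x = b e ∧ y = a e) ∨ (x = a e ∧ y = b e) :=
    fun x y hxy => by obtain ⟨e, he⟩ := hxy; exact ⟨e, he.symm⟩
  refine ⟨_, F, ?_, ?_, ?_, ?_⟩
  · simp; omega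
  · rintro ⟨f, hf, hadj⟩
    have key : ∀ i < 4, ∀ j < 4, (i ≠ j ∨ i = 3) →
        F.Adj (f (Sum.inl (Fin.ofNat 4 i))) (f (Sum.inr (Fin.ofNat 4 j))) := by
      intro i hi j hj hij
      apply hadj
      simp only [Q3plus, SimpleGraph.deleteEdges_adj]
      refine ⟨by simp, ?_⟩
      rintro ⟨t, ht, ht2⟩
      simp [Fin.ext_iff] at ht2
      omega
    have hp : ∀ i < 3 + 1, ∀ j < 3 + 1, i ≠ j →
        f (Sum.inl (Fin.ofNat 4 i)) ≠ f (Sum.inl (Fin.ofNat 4 j)) := by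
      intro i hi j hj hij hh
      have := hf hh
      simp [Fin.ext_iff] at this
      omega
    have hq : ∀ i < 3 + 1, ∀ j < 3 + 1, i ≠ j →
        f (Sum.inr (Fin.ofNat 4 i)) ≠ f (Sum.inr (Fin.ofNat 4 j)) := by
      intro i hi j hj hij hh
      have := hf hh
      simp [Fin.ext_iff] at this
      omega
    obtain ⟨e, he | he⟩ := hF _ _ (key 3 (by omega) 3 (by omega) (by simp))
    · obtain ⟨σ1, σ2, x1, x2, x3⟩ := bip a b J1 J2 hab hJ1 hJ2 F hF 3
        (fun i j => i ≠ j ∨ i = 3) _ _ hp hq key (by omega) (by simp) ⟨e, he.1⟩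
      exact h.noQ σ1 σ2 x1 x2 x3
    · obtain ⟨σ1, σ2, x1, x2, x3⟩ := bip b a J2 J1 (fun e f => (hab f e).symm) hJ2 hJ1 F hF' 3
        (fun i j => i ≠ j ∨ i = 3) _ _ hp hq key (by omega) (by simp) ⟨e, he.1⟩
      exact h.swap.noQ σ1 σ2 x1 x2 x3
  · rintro ⟨f, hf, hadj⟩
    have key : ∀ i < 3, ∀ j < 3, True →
        F.Adj (f (Sum.inl (Fin.ofNat 3 i))) (f (Sum.inr (Fin.ofNat 3 j))) := by
      intro i hi j hj hij
      apply hadj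
      simp [K33]
    have hp : ∀ i < 2 + 1, ∀ j < 2 + 1, i ≠ j →
        f (Sum.inl (Fin.ofNat 3 i)) ≠ f (Sum.inl (Fin.ofNat 3 j)) := by
      intro i hi j hj hij hh
      have := hf hh
      simp [Fin.ext_iff] at this
      omega
    have hq : ∀ i < 2 + 1, ∀ j < 2 + 1, i ≠ j →
        f (Sum.inr (Fin.ofNat 3 i)) ≠ f (Sum.inr (Fin.ofNat 3 j)) := by
      intro i hi j hj hij hh
      have := hf hh
      simp [Fin.ext_iff] at this
      omega
    obtain ⟨e, he | he⟩ := hF _ _ (key 2 (by omega) 2 (by omega) (by simp))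
    · obtain ⟨σ1, σ2, x1, x2, x3⟩ := bip a b J1 J2 hab hJ1 hJ2 F hF 2
        (fun i j => True) _ _ hp hq key (by simp) (by simp) ⟨e, he.1⟩
      exact h.noK σ1 σ2 x1 x2 (fun i hi j hj => x3 i hi j hj trivial)
    · obtain ⟨σ1, σ2, x1, x2, x3⟩ := bip b a J2 J1 (fun e f => (hab f e).symm) hJ2 hJ1 F hF' 2
        (fun i j => True) _ _ hp hq key (by simp) (by simp) ⟨e, he.1⟩
      exact h.swap.noK σ1 σ2 x1 x2 (fun i hi j hj => x3 i hi j hj trivial)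
  · rw [← Nat.card_coe_set_eq]
    refine Nat.card_le_card_of_injective
      (fun e => (⟨s(a e, b e), ?_⟩ : F.edgeSet)) ?_
    · exact ⟨e, Or.inl ⟨rfl, rfl⟩⟩
    · intro e f hef
      replace hef : s(a e, b e) = s(a f, b f) := congrArg Subtype.val hef
      rw [Sym2.eq_iff] at hef
      by_contra hne
      rcases hef with hh | hh
      · exact h.noDouble e f hne ((hJ1 _ _).2 hh.1) ((hJ2 _ _).2 hh.2)
      · exact hab _ _ hh.1

theorem cyc_of_walk {V : Type} {G : SimpleGraph V} {u : V} (c : G.Walk u u) (hc : c.IsCycle) :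
    ∃ c' : ℤ → V, Cyc G c.length c' ∧ ∀ v, v ∈ c.support ↔ ∃ i, c' i = v := by
  have h3 := hc.three_le_length
  refine ⟨fun i => c.getVert (i % c.length).toNat, ⟨?_, ?_, ?_⟩, ?_⟩
  · intro i; simp
  · intro i j hij
    have hi1 := Int.emod_nonneg i (b := c.length) (by omega)
    have hi2 := Int.emod_lt_of_pos i (b := c.length) (by omega)
    have hj1 := Int.emod_nonneg j (b := c.length) (by omega)
    have hj2 := Int.emod_lt_of_pos j (b := c.length) (by omega)
    have := hc.getVert_injOn' (by simp; omega) (by simp; omega) hij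
    have h5 : i % c.length = j % c.length := by omega
    exact Int.ModEq.dvd h5
  · intro i
    have hi1 := Int.emod_nonneg i (b := c.length) (by omega)
    have hi2 := Int.emod_lt_of_pos i (b := c.length) (by omega)
    have := c.adj_getVert_succ (i := (i % c.length).toNat) (by omega)
    have e1 : (i + 1) % (c.length : ℤ) = (i % c.length + 1) % c.length := by simp
    rcases lt_or_eq_of_le (show (i % c.length) + 1 ≤ c.length by omega) with h | h
    · rw [Int.emod_eq_of_lt (a := i % c.length + 1) (by omega) h] at e1
      simp only [e1]
      convert this using 2
      omega
    · rw [h, Int.emod_self] at e1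
      simp only [e1]
      have e2 : (i % c.length).toNat + 1 = c.length := by omega
      rw [e2, Walk.getVert_length] at this
      simpa using this
  · intro v
    constructor
    · intro hv
      obtain ⟨t, ht, ht2⟩ := Walk.mem_support_iff_exists_getVert.1 hv
      rcases lt_or_eq_of_le ht2 with h | h
      · refine ⟨t, ?_⟩
        simp only
        rw [Int.emod_eq_of_lt (by omega) (by omega)]
        simpa using ht
      · refine ⟨0, ?_⟩
        rw [h, Walk.getVert_length] at ht
        simpa using ht
    · rintro ⟨i, rfl⟩
      exact Walk.getVert_mem_support _ _

/-- positions along a cycle -/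
theorem pos_exists {V : Type} {G : SimpleGraph V} {n : ℕ} {c : ℤ → V} (hn : 3 ≤ n)
    (h : Cyc G n c) (P : V → Prop) (r : ℤ) (hr : P (c r)) (x : V) (hx : ∃ i, c i = x) :
    ∃ q J : ℤ, c q = x ∧ r ≤ J ∧ J ≤ q ∧ q < r + n ∧ P (c J) ∧
      ∀ i, J < i → i ≤ q → ¬ P (c i) := by
  obtain ⟨i, rfl⟩ := hx
  have hper : ∀ (t : ℕ) (i : ℤ), c (i + t * n) = c i := by
    intro t
    induction t with
    | zero => intro i; simp
    | succ t ih =>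
      intro i
      have := h.per (i + t * n)
      rw [ih] at this
      rw [← this]; congr 1; push_cast; ring
  have hper2 : ∀ (t : ℤ) (i : ℤ), c (i + t * n) = c i := by
    intro t i
    obtain ⟨m, rfl | rfl⟩ := Int.eq_nat_or_neg t
    · exact hper m i
    · have := hper m (i + -(m : ℤ) * n)
      rw [← this]; congr 1; ring
  have hq1 := Int.emod_nonneg (i - r) (b := n) (by omega)
  have hq2 := Int.emod_lt_of_pos (i - r) (b := n) (by omega)
  have hq : c (r + (i - r) % n) = c i := by
    rw [← hper2 (-((i - r) / n)) i]
    congr 1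
    have := Int.emod_add_mul_ediv (i - r) n
    linarith
  obtain ⟨J, hJ1, hJ2⟩ := Int.exists_greatest_of_bdd
    (P := fun j => j ≤ r + (i - r) % n ∧ P (c j)) ⟨_, fun z hz => hz.1⟩ ⟨r, by omega, hr⟩
  refine ⟨r + (i - r) % n, J, hq, hJ2 r ⟨by omega, hr⟩, hJ1.1, by omega, hJ1.2, ?_⟩
  intro t ht ht2 hP
  have := hJ2 t ⟨ht2, hP⟩
  omega

end SepT

theorem separator_size_turan (V : Type) [Fintype V] [DecidableEq V] (G : SimpleGraph V)
    (u v : V) (c1 : G.Walk u u) (c2 : G.Walk v v)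
    (h1 : IsLongestCycle G c1) (h2 : IsLongestCycle G c2)
    (k : ℕ) (hk : k = (c1.support.toFinset ∩ c2.support.toFinset).card) (hkpos : 0 < k)
    (S : Finset V)
    (hS : IsMinSeparator G (c1.support.toFinset \ c2.support.toFinset)
      (c2.support.toFinset \ c1.support.toFinset) S) :
    ∃ (m : ℕ) (F : SimpleGraph (Fin m)), m ≤ 2 * k ∧
      ¬ ContainsCopy Q3plus F ∧ ¬ ContainsCopy K33 F ∧ S.card ≤ F.edgeSet.ncard := by
  have hlen : c2.length = c1.length := le_antisymm (h1.2 _ _ h2.1) (h2.2 _ _ h1.1)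
  have h3 := h1.1.three_le_length
  obtain ⟨d1, hd1, hs1⟩ := SepT.cyc_of_walk c1 h1.1
  obtain ⟨d2, hd2, hs2⟩ := SepT.cyc_of_walk c2 h2.1
  rw [hlen] at hd2
  set A := c1.support.toFinset with hA
  set B := c2.support.toFinset with hB
  have hmA : ∀ v, v ∈ A ↔ ∃ i, d1 i = v := by intro v; rw [← hs1, hA, List.mem_toFinset]
  have hmB : ∀ v, v ∈ B ↔ ∃ i, d2 i = v := by intro v; rw [← hs2, hB, List.mem_toFinset]
  have hmin : ∀ S', SepT.Sep G A B S' → S.card ≤ S'.card := by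
    intro S' hS'
    apply hS.2
    intro a b ha hb p hp
    by_contra hcon
    push Not at hcon
    obtain ⟨L, hL1, hL2⟩ := SepT.walk_PT p
    refine hS' b ?_ (Finset.mem_sdiff.1 hb).1
    refine SepT.PT_Rch hL2 (SepT.Rch.base a (Finset.mem_sdiff.1 ha).1 ?_) ?_
    · intro h; exact hcon a h (by simp)
    · intro w hw h; exact hcon w h (by rw [hL1]; simp [hw])
  obtain ⟨Z, R, x, y, hZ, hSP, hdis⟩ := (SepT.menger _ G rfl A B S.card hmin).strong
  obtain ⟨z, hz⟩ := Finset.card_pos.1 (hk ▸ hkpos)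
  rw [Finset.mem_inter] at hz
  obtain ⟨r1, hr1⟩ := (hmA z).1 hz.1
  obtain ⟨r2, hr2⟩ := (hmB z).1 hz.2
  have H1 : ∀ e : {s // s ∈ Z}, ∃ q J : ℤ, d1 q = x e ∧ r1 ≤ J ∧ J ≤ q ∧ q < r1 + c1.length ∧
      (d1 J ∈ B) ∧ ∀ i, J < i → i ≤ q → ¬ (d1 i ∈ B) := by
    intro e
    obtain ⟨L, -, -, hxA, -⟩ := hSP e e.2
    exact SepT.pos_exists h3 hd1 (fun v => v ∈ B) r1 (hr1 ▸ hz.2) _ ((hmA _).1 hxA)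
  have H2 : ∀ e : {s // s ∈ Z}, ∃ q J : ℤ, d2 q = y e ∧ r2 ≤ J ∧ J ≤ q ∧ q < r2 + c1.length ∧
      (d2 J ∈ A) ∧ ∀ i, J < i → i ≤ q → ¬ (d2 i ∈ A) := by
    intro e
    obtain ⟨L, -, -, -, hyB, -⟩ := hSP e e.2
    exact SepT.pos_exists h3 hd2 (fun v => v ∈ A) r2 (hr2 ▸ hz.1) _ ((hmB _).1 hyB)
  choose q1 J1 a1 a2 a3 a4 a5 a6 using H1
  choose q2 J2 b1 b2 b3 b4 b5 b6 using H2
  have hFam : SepT.Fam G c1.length d1 d2 {s // s ∈ Z} q1 q2 J1 J2 r1 r2 (fun e => R e) :=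
    { mx := by
        intro w L hL hnd hL3
        obtain ⟨p, hp, hpl⟩ := SepT.PT_cycle hL hnd hL3
        rw [← hpl]; exact h1.2 _ _ hp
      cy1 := hd1
      cy2 := hd2
      pth := by
        intro e
        obtain ⟨L, e1, e2, -⟩ := hSP e e.2
        refine ⟨L, ?_, ?_⟩
        · rw [a1, e1]
        · rw [a1, b1]; exact e2
      nd := by
        intro e
        obtain ⟨L, -, -, -, -, e5, -⟩ := hSP e e.2
        exact e5
      on1 := by
        intro e i hi
        obtain ⟨L, -, -, -, -, -, e6, -⟩ := hSP e e.2
        rw [a1]; exact e6 _ hi ((hmA _).2 ⟨i, rfl⟩)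
      on2 := by
        intro e i hi
        obtain ⟨L, -, -, -, -, -, -, e7⟩ := hSP e e.2
        rw [b1]; exact e7 _ hi ((hmB _).2 ⟨i, rfl⟩)
      disj := by
        intro e f hef
        exact hdis e e.2 f f.2 (fun h => hef (Subtype.ext h))
      w1 := fun e => ⟨a2 e, a3 e, a4 e⟩
      w2 := fun e => ⟨b2 e, b3 e, b4 e⟩
      g1 := fun e i j hi1 hi2 h => a6 e i hi1 hi2 ((hmB _).2 ⟨j, h.symm⟩)
      g2 := fun e i j hi1 hi2 h => b6 e i hi1 hi2 ((hmA _).2 ⟨j, h.symm⟩)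
      i1 := fun e => by obtain ⟨j, hj⟩ := (hmB _).1 (a5 e); exact ⟨j, hj.symm⟩
      i2 := fun e => by obtain ⟨j, hj⟩ := (hmA _).1 (b5 e); exact ⟨j, hj.symm⟩ }
  have := hFam.graph (A ∩ B)
    (fun e => Finset.mem_inter.2 ⟨(hmA _).2 ⟨_, rfl⟩, a5 e⟩)
    (fun e => Finset.mem_inter.2 ⟨b5 e, (hmB _).2 ⟨_, rfl⟩⟩)
  have hc : Nat.card {s // s ∈ Z} = S.card := by
    rw [← hZ]; simp
  rw [hc, ← hk] at this
  exact this
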